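/- arXiv:math/0401229 — 2 statements merged into one kernel-verified Lean document; each statement's English description precedes it below -/
import Mathlib

section
/- Schur polynomials as spherical integrals: for every positive integer N there exists a constant c_N > 0, depending only on N, such that for every Young diagram λ with at most N rows (with l_i = λ_i + N − i) and all pairwise distinct positive reals m_1,…,m_N, s_λ(m_1,…,m_N) = c_N · I_N(diag(log m_1,…,log m_N), diag(l_1/N,…,l_N/N)) · ∏_{1≤i<j≤N}((l_i − l_j)/N) · ∏_{1≤i<j≤N}(log m_i − log m_j) / ∏_{1≤i<j≤N}(m_i − m_j). -/
/-- A semistandard Young tableau of shape `lam` (a Young diagram with at most `N` rows,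
given as a nonincreasing function `Fin N → ℕ`), with entries in `Fin N` (representing
the integers `1, …, N`).  `entry i j` is the entry in row `i` and column `j` (0-indexed);
rows are weakly increasing, columns are strictly increasing, and entries outside of the
shape are normalized to `0`. -/
structure SSYT (N : ℕ) (lam : Fin N → ℕ) where
  entry : Fin N → ℕ → Fin N
  rowWeak : ∀ (i : Fin N) (j1 j2 : ℕ), j1 ≤ j2 → j2 < lam i → entry i j1 ≤ entry i j2
  colStrict : ∀ (i1 i2 : Fin N), i1 < i2 → ∀ j : ℕ, j < lam i2 → entry i1 j < entry i2 j
  zeroOutside : ∀ (i : Fin N) (j : ℕ), lam i ≤ j → (entry i j : ℕ) = 0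

/-- The content of a semistandard Young tableau: `content T k` is the number of cells of
`T` whose entry equals `k`. -/
noncomputable def SSYT.content {N : ℕ} {lam : Fin N → ℕ} (T : SSYT N lam) (k : Fin N) : ℕ :=
  ∑ i : Fin N, ((Finset.range (lam i)).filter (fun j => T.entry i j = k)).card

/-- The Schur polynomial `s_lam (x 0, …, x (N-1))`, defined as the sum over all semistandard
Young tableaux `T` of shape `lam` with entries in `{1, …, N}` of the monomial
`∏ k, (x k) ^ (number of entries of T equal to k)`. -/
noncomputable def schur {R : Type*} [CommRing R] [TopologicalSpace R] (N : ℕ)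
    (lam : Fin N → ℕ) (x : Fin N → R) : R :=
  ∑' T : SSYT N lam, ∏ k : Fin N, x k ^ T.content k

/-- Matrices are endowed with the Borel sigma-algebra of their (entrywise) topology. -/
noncomputable instance matrixMeasurableSpace {m n α : Type*} [TopologicalSpace α] :
    MeasurableSpace (Matrix m n α) := borel _

/-- The spherical integral `I_N(C, D) = ∫_{U(N)} exp (N • tr (U C U⋆ D)) dμ(U)`,
with respect to a measure `μ` on the unitary group (real part is taken; for the
matrices considered here the trace is real). -/
noncomputable def sphInt (N : ℕ) (μ : MeasureTheory.Measure (Matrix.unitaryGroup (Fin N) ℂ))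
    (C D : Matrix (Fin N) (Fin N) ℂ) : ℝ :=
  ∫ U, Real.exp ((N : ℝ) * (Matrix.trace ((U : Matrix (Fin N) (Fin N) ℂ) * C *
    star (U : Matrix (Fin N) (Fin N) ℂ) * D)).re) ∂μ

open MeasureTheory

section

open MvPolynomial

set_option linter.deprecated false
set_option linter.unusedSimpArgs false

noncomputable section

namespace HC

/-- pairs `i < j`. -/
def prs (N : ℕ) : Finset (Fin N × Fin N) := Finset.univ.filter (fun p => p.1 < p.2)

/-- partial derivative as an endomorphism -/
def dR {σ : Type} (i : σ) : Module.End ℂ (MvPolynomial σ ℂ) :=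
  (pderiv i : Derivation ℂ (MvPolynomial σ ℂ) (MvPolynomial σ ℂ)).toLinearMap

/-- multiplication as an endomorphism -/
def mR {σ : Type} (f : MvPolynomial σ ℂ) : Module.End ℂ (MvPolynomial σ ℂ) :=
  LinearMap.mulLeft ℂ f

@[simp] lemma dR_apply {σ : Type} (i : σ) (f : MvPolynomial σ ℂ) : dR i f = pderiv i f := rfl
@[simp] lemma mR_apply {σ : Type} (f g : MvPolynomial σ ℂ) : mR f g = f * g := rfl

lemma dR_comm {σ : Type} (i j : σ) : dR i * dR j = dR j * dR i := by
  classical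
  ext1 m
  ext1
  simp only [LinearMap.comp_apply, Module.End.mul_apply, dR_apply]
  change pderiv i (pderiv j (monomial m 1)) = pderiv j (pderiv i (monomial m 1))
  rw [pderiv_monomial, pderiv_monomial, pderiv_monomial, pderiv_monomial]
  have h1 : m - Finsupp.single j 1 - Finsupp.single i 1
      = m - Finsupp.single i 1 - Finsupp.single j 1 := by
    rw [tsub_tsub, tsub_tsub, add_comm]
  rw [h1]
  congr 1
  by_cases h : i = j
  · subst h; rfl
  · simp [Finsupp.single_apply, h, Ne.symm h]
    ring

lemma exists_theta (σ : Type) : ∃ θ : MvPolynomial σ ℂ →ₐ[ℂ] Module.End ℂ (MvPolynomial σ ℂ),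
    ∀ i, θ (X i) = dR i := by
  let s : Set (Module.End ℂ (MvPolynomial σ ℂ)) := Set.range dR
  have hs : ∀ a ∈ s, ∀ b ∈ s, a * b = b * a := by
    rintro _ ⟨i, rfl⟩ _ ⟨j, rfl⟩
    exact dR_comm i j
  let _ : CommRing (Algebra.adjoin ℂ s) := Algebra.adjoinCommRingOfComm ℂ hs
  let v : σ → Algebra.adjoin ℂ s := fun i => ⟨dR i, Algebra.subset_adjoin ⟨i, rfl⟩⟩
  let f : MvPolynomial σ ℂ →ₐ[ℂ] Algebra.adjoin ℂ s := aeval v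
  refine ⟨(Algebra.adjoin ℂ s).val.comp f, fun i => ?_⟩
  simp [f, v]

def theta (σ : Type) : MvPolynomial σ ℂ →ₐ[ℂ] Module.End ℂ (MvPolynomial σ ℂ) :=
  (exists_theta σ).choose

@[simp] lemma theta_X {σ : Type} (i : σ) : theta σ (X i) = dR i := (exists_theta σ).choose_spec i

/-- `[f(∂), x_i] = (∂_i f)(∂)` -/
lemma theta_comm {σ : Type} (i : σ) (f : MvPolynomial σ ℂ) :
    theta σ f * mR (X i) = mR (X i) * theta σ f + theta σ (pderiv i f) := by
  classical
  induction f using MvPolynomial.induction_on with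
  | C a =>
    have : theta σ (C a) = algebraMap ℂ _ a := by
      rw [← MvPolynomial.algebraMap_eq, AlgHom.commutes]
    rw [this, pderiv_C, map_zero, add_zero, Algebra.commutes]
  | add p q hp hq => simp only [map_add, add_mul, mul_add, hp, hq]; abel
  | mul_X p j hp =>
    have h1 : dR j * mR (X i) = mR (X i) * dR j + (if i = j then 1 else 0) := by
      ext1 m
      ext1
      simp only [LinearMap.comp_apply, Module.End.mul_apply, dR_apply, mR_apply, LinearMap.add_apply,
        Derivation.leibniz, pderiv_X, smul_eq_mul]
      by_cases h : i = j
      · subst h; simp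
      · simp [h, Pi.single_apply]
    rw [map_mul, theta_X, mul_assoc, h1, mul_add, ← mul_assoc, hp, add_mul, Derivation.leibniz,
      map_add, smul_eq_mul, smul_eq_mul, mul_comm (X j), map_mul, map_mul, theta_X, pderiv_X, mul_assoc]
    by_cases h : i = j
    · subst h; simp; abel
    · simp [h, Pi.single_apply]

/-- Vandermonde polynomial as a product over pairs. -/
def Dl (N : ℕ) : MvPolynomial (Fin N) ℂ := ∏ p ∈ prs N, (X p.2 - X p.1)

def Dlt (N : ℕ) (t : Fin N × Fin N) : MvPolynomial (Fin N) ℂ :=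
  ∏ p ∈ (prs N).erase t, (X p.2 - X p.1)

lemma prod_prs {N : ℕ} {A : Type*} [CommMonoid A] (f : Fin N → Fin N → A) :
    ∏ p ∈ prs N, f p.1 p.2 = ∏ i, ∏ j ∈ Finset.Ioi i, f i j := by
  rw [prs, Finset.prod_filter, Fintype.prod_prod_type]
  refine Finset.prod_congr rfl fun i _ => ?_
  rw [← Finset.prod_filter]
  refine Finset.prod_congr ?_ fun _ _ => rfl
  ext; simp

lemma Dl_eq_det (N : ℕ) : Dl N = (Matrix.vandermonde (fun i : Fin N => (X i : MvPolynomial (Fin N) ℂ))).det := by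
  rw [Matrix.det_vandermonde, Dl, ← prod_prs (fun i j => (X j - X i : MvPolynomial (Fin N) ℂ))]

lemma pderiv_prod {σ ι : Type} [DecidableEq ι] (k : σ) (s : Finset ι) (f : ι → MvPolynomial σ ℂ) :
    pderiv k (∏ t ∈ s, f t) = ∑ t ∈ s, (∏ u ∈ s.erase t, f u) * pderiv k (f t) := by
  induction s using Finset.induction_on with
  | empty => simp
  | insert a s ha ih =>
    rw [Finset.prod_insert ha, Derivation.leibniz, ih, Finset.sum_insert ha,
      Finset.erase_insert ha, add_comm, smul_eq_mul, smul_eq_mul, Finset.mul_sum]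
    congr 1
    refine Finset.sum_congr rfl fun t ht => ?_
    have : a ≠ t := fun h => ha (h ▸ ht)
    rw [Finset.erase_insert_of_ne this, Finset.prod_insert (by simp [ha]), mul_assoc]

lemma Dl_harmonic (N : ℕ) : ∑ i, pderiv i (pderiv i (Dl N)) = 0 := by
  classical
  let V := Matrix.vandermonde (fun i : Fin N => (X i : MvPolynomial (Fin N) ℂ))
  have key : ∑ i, pderiv i (pderiv i (Dl N)) =
      ∑ m : Fin N, (V.updateCol m (fun i => pderiv i (pderiv i (X i ^ (m : ℕ))))).det := by
    rw [Dl_eq_det]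
    simp only [Matrix.det_apply, map_sum]
    rw [Finset.sum_comm, Finset.sum_comm (s := Finset.univ (α := Fin N))]
    refine Finset.sum_congr rfl fun σ _ => ?_
    rw [← Equiv.sum_comp σ]
    refine Finset.sum_congr rfl fun m _ => ?_
    have hp : ∀ g : MvPolynomial (Fin N) ℂ, pderiv (σ m) ((∏ x ∈ Finset.univ.erase m, X (σ x) ^ (x : ℕ)) * g)
        = (∏ x ∈ Finset.univ.erase m, X (σ x) ^ (x : ℕ)) * pderiv (σ m) g := by
      intro g
      have : pderiv (σ m) (∏ x ∈ Finset.univ.erase m, (X (σ x) : MvPolynomial (Fin N) ℂ) ^ (x : ℕ)) = 0 := by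
        rw [pderiv_prod]
        refine Finset.sum_eq_zero fun t ht => ?_
        have : σ t ≠ σ m := fun h => (Finset.ne_of_mem_erase ht) (σ.injective h)
        rw [Derivation.leibniz_pow, pderiv_X_of_ne this]
        simp
      rw [Derivation.leibniz, this]; simp
    have e1 : ∏ i, (Matrix.vandermonde (fun i : Fin N => (X i : MvPolynomial (Fin N) ℂ))) (σ i) i
       = (∏ x ∈ Finset.univ.erase m, X (σ x) ^ (x : ℕ)) * X (σ m) ^ (m : ℕ) := by
      rw [Finset.prod_erase_mul _ _ (Finset.mem_univ m)]; rfl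
    have e2 : ∏ i, V.updateCol m (fun i => pderiv i (pderiv i (X i ^ (m : ℕ)))) (σ i) i
       = (∏ x ∈ Finset.univ.erase m, X (σ x) ^ (x : ℕ)) *
         pderiv (σ m) (pderiv (σ m) (X (σ m) ^ (m : ℕ))) := by
      rw [← Finset.prod_erase_mul _ _ (Finset.mem_univ m)]
      congr 1
      · refine Finset.prod_congr rfl fun x hx => ?_
        rw [Matrix.updateCol_ne (Finset.ne_of_mem_erase hx)]; rfl
      · simp
    rw [e1, e2]
    simp only [Units.smul_def, map_zsmul, hp]
  rw [key]
  refine Finset.sum_eq_zero fun m _ => ?_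
  by_cases hm : 2 ≤ (m : ℕ)
  · have : (fun i : Fin N => pderiv i (pderiv i ((X i : MvPolynomial (Fin N) ℂ) ^ (m : ℕ)))) =
      ((m : ℕ) * ((m : ℕ) - 1 : ℕ) : MvPolynomial (Fin N) ℂ) • (fun i => V i ⟨m - 2, by omega⟩) := by
      funext i
      simp only [Derivation.leibniz_pow, pderiv_X_self, V, Matrix.vandermonde_apply, Pi.smul_apply,
        smul_eq_mul, nsmul_eq_mul, mul_one, Derivation.leibniz, Derivation.map_natCast]
      rw [Nat.sub_sub]
      ring
    rw [this, Matrix.det_updateCol_smul]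
    rw [Matrix.det_zero_of_column_eq (i := m) (j := ⟨m - 2, by omega⟩), mul_zero]
    · intro h; have := congrArg Fin.val h; simp at this; omega
    · intro k
      have : (⟨m - 2, by omega⟩ : Fin N) ≠ m := by
        intro h; have := congrArg Fin.val h; simp at this; omega
      rw [Matrix.updateCol_self, Matrix.updateCol_ne this]
  · apply Matrix.det_eq_zero_of_column_eq_zero m
    intro i
    rw [Matrix.updateCol_self]
    have : (m : ℕ) = 0 ∨ (m : ℕ) = 1 := by omega
    rcases this with h | h <;> simp [h]

/-- `[Δ(∂), |x|²]` -/
lemma theta_Dl_comm (N : ℕ) :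
    theta _ (Dl N) * mR (∑ i, X i ^ 2) = mR (∑ i, X i ^ 2) * theta _ (Dl N) +
      2 • ∑ t ∈ prs N, mR (X t.2 - X t.1) * theta _ (Dlt N t) := by
  classical
  have hm : ∀ f g : MvPolynomial (Fin N) ℂ, mR (f * g) = mR f * mR g := by
    intro f g; ext1; ext1; simp [mul_assoc]
  have hsum : mR (∑ i : Fin N, (X i : MvPolynomial (Fin N) ℂ) ^ 2) = ∑ i, mR (X i) * mR (X i) := by
    simp only [← hm]
    ext1; ext1; simp [pow_two, Finset.sum_mul]
  have h1 : ∀ i : Fin N, theta _ (Dl N) * (mR (X i) * mR (X i)) =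
     mR (X i) * mR (X i) * theta _ (Dl N) + 2 • (mR (X i) * theta _ (pderiv i (Dl N)))
      + theta _ (pderiv i (pderiv i (Dl N))) := by
    intro i
    rw [← mul_assoc, theta_comm, add_mul, mul_assoc, theta_comm, theta_comm, mul_add, two_smul, mul_assoc]
    abel
  rw [hsum, Finset.mul_sum, Finset.sum_congr rfl (fun i _ => h1 i), Finset.sum_add_distrib,
    Finset.sum_add_distrib, ← map_sum, Dl_harmonic, map_zero, add_zero, Finset.sum_mul, ← Finset.smul_sum]
  congr 2
  have h2 : ∀ i, pderiv i (Dl N) = ∑ t ∈ prs N, Dlt N t * ((if i = t.2 then 1 else 0) - (if i = t.1 then 1 else 0)) := by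
    intro i
    rw [Dl, pderiv_prod]
    refine Finset.sum_congr rfl fun t _ => ?_
    simp only [map_sub, pderiv_X, Pi.single_apply, Dlt]
    simp only [eq_comm (a := i)]
  simp only [h2, map_sum, Finset.mul_sum]
  rw [Finset.sum_comm]
  refine Finset.sum_congr rfl fun t ht => ?_
  have h3 : mR (X t.2 - X t.1 : MvPolynomial (Fin N) ℂ) = mR (X t.2) - mR (X t.1) := by
    ext1; ext1; simp [sub_mul]
  simp only [mul_sub, map_sub, mul_ite, mul_one, mul_zero, Finset.sum_sub_distrib, h3, sub_mul, apply_ite (theta (Fin N)), map_zero,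
    Finset.sum_ite_eq', Finset.sum_ite_eq, Finset.mem_univ, if_true]

end HC

end

end

section

open MvPolynomial

set_option linter.unusedSimpArgs false

noncomputable section

namespace HC

abbrev SS (N : ℕ) := MvPolynomial (Fin N × Fin N) ℂ
abbrev RR (N : ℕ) := MvPolynomial (Fin N) ℂ

lemma mR_mul {σ : Type} (f g : MvPolynomial σ ℂ) : mR (f * g) = mR f * mR g := by
  ext1; ext1; simp [mul_assoc]

lemma mR_sum {σ ι : Type} (s : Finset ι) (f : ι → MvPolynomial σ ℂ) :
    mR (∑ i ∈ s, f i) = ∑ i ∈ s, mR (f i) := by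
  ext1; ext1; simp [Finset.sum_mul]

lemma mR_pow {σ : Type} (f : MvPolynomial σ ℂ) (k : ℕ) : mR (f ^ k) = mR f ^ k := by
  induction k with
  | zero => ext1; ext1; simp
  | succ k ih => rw [pow_succ, mR_mul, ih, pow_succ]

lemma mR_comm {σ : Type} (f g : MvPolynomial σ ℂ) : mR f * mR g = mR g * mR f := by
  rw [← mR_mul, ← mR_mul, mul_comm]

lemma der_mR {σ : Type} (D : Derivation ℂ (MvPolynomial σ ℂ) (MvPolynomial σ ℂ))
    (f : MvPolynomial σ ℂ) :
    D.toLinearMap * mR f = mR f * D.toLinearMap + mR (D f) := by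
  ext1; ext1
  simp [mul_comm]

section abs
variable {A : Type*} [Ring A]

def del (Q u : A) : A := u * Q - Q * u

lemma del_iter_mul (Q D X : A) (hD : del Q D = X) (hX : del Q X = 0) (M : A) (n : ℕ) :
    (del Q)^[n + 1] (D * M) = D * (del Q)^[n + 1] M + (n + 1) • (X * (del Q)^[n] M) := by
  have hL : ∀ u v : A, del Q (u * v) = del Q u * v + u * del Q v := by
    intro u v; simp only [del]; noncomm_ring
  have hadd : ∀ u v : A, del Q (u + v) = del Q u + del Q v := by
    intro u v; simp only [del]; noncomm_ring
  have hsm : ∀ (k : ℕ) (u : A), del Q (k • u) = k • del Q u := by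
    intro k u; simp only [del, smul_mul_assoc, mul_smul_comm, smul_sub]
  induction n with
  | zero => simp [hL, hD]; abel
  | succ n ih =>
    rw [Function.iterate_succ_apply', ih, hadd, hL, hsm, hL, hX, hD,
      Function.iterate_succ_apply' (del Q) (n + 1) M, Function.iterate_succ_apply' (del Q) n M]
    simp only [zero_mul, zero_add, add_smul, one_smul]
    abel

lemma del_iter_pow (Q D X : A) (hD : del Q D = X) (hX : del Q X = 0) (k : ℕ) :
    (del Q)^[k] (D ^ k) = (k.factorial) • X ^ k ∧ (del Q)^[k + 1] (D ^ k) = 0 := by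
  have h0 : ∀ n : ℕ, (del Q)^[n] 0 = 0 := by
    intro n; induction n with
    | zero => rfl
    | succ n ih => rw [Function.iterate_succ_apply', ih]; simp [del]
  induction k with
  | zero => simp [del]
  | succ k ih =>
    have e : (del Q)^[k + 1] (D ^ (k + 1)) = ((k + 1).factorial) • X ^ (k + 1) := by
      rw [pow_succ', del_iter_mul Q D X hD hX, ih.1, ih.2, mul_zero, zero_add, mul_smul_comm,
        smul_smul, Nat.factorial_succ, pow_succ']
    refine ⟨e, ?_⟩
    rw [Function.iterate_succ_apply', e]
    have hXQ : X * Q = Q * X := by rwa [del, sub_eq_zero] at hX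
    simp only [del, smul_mul_assoc, mul_smul_comm, ← smul_sub]
    have : Commute (X ^ (k + 1)) Q := Commute.pow_left hXQ _
    rw [this.eq, sub_self, smul_zero]

/-- if `[D,d] = [E,D]` then `[D^k, d] = [E, D^k]` -/
lemma comm_pow (D d E : A) (h : D * d - d * D = E * D - D * E) (k : ℕ) :
    D ^ k * d - d * D ^ k = E * D ^ k - D ^ k * E := by
  have h' : Commute D (d + E) := by
    change D * (d + E) = (d + E) * D
    rw [mul_add, add_mul]
    have := sub_eq_zero.2 h
    rw [← sub_eq_zero, ← this]; abel
  have h2 : D ^ k * (d + E) = (d + E) * D ^ k := (h'.pow_left k).eq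
  rw [mul_add, add_mul] at h2
  rw [← sub_eq_zero] at h2 ⊢
  rw [← h2]; abel

end abs

variable {N : ℕ}

/-- matrix of derivatives -/
def DD (N : ℕ) : Matrix (Fin N) (Fin N) (Module.End ℂ (SS N)) := Matrix.of fun i j => dR (j, i)
def XX (N : ℕ) : Matrix (Fin N) (Fin N) (Module.End ℂ (SS N)) := Matrix.of fun i j => mR (X (i, j))
def QS (N : ℕ) : SS N := ∑ i, ∑ j, X (i, j) * X (j, i)

/-- generator of conjugation: `X ↦ [E_ij, X]` -/
def dd (i j : Fin N) : Derivation ℂ (SS N) (SS N) :=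
  mkDerivation ℂ fun kl => (if kl.1 = i then X (j, kl.2) else 0) - (if kl.2 = j then X (kl.1, i) else 0)

lemma dd_X (i j k l : Fin N) : dd i j (X (k, l)) =
    (if k = i then X (j, l) else 0) - (if l = j then X (k, i) else 0) := by
  simp [dd, mkDerivation_X]

lemma dd_QS (i j : Fin N) : dd i j (QS N) = 0 := by
  simp only [QS, map_sum, Derivation.leibniz, dd_X, smul_eq_mul, mul_sub, mul_ite, mul_zero,
    Finset.sum_add_distrib, Finset.sum_sub_distrib, Finset.sum_ite_eq', Finset.sum_ite_eq,
    Finset.mem_univ, if_true]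
  have : ∀ (f : Fin N → Fin N → Prop) , True := fun _ => trivial
  rw [Finset.sum_comm]
  simp only [Finset.sum_ite_eq', Finset.sum_ite_irrel, Finset.sum_const_zero, Finset.sum_ite_eq,
    Finset.mem_univ, if_true]
  simp [mul_comm]

lemma dR_QS (i j : Fin N) : pderiv (j, i) (QS N) = 2 * X (i, j) := by
  simp only [QS, map_sum, Derivation.leibniz, pderiv_X, smul_eq_mul, Pi.single_apply, Prod.mk.injEq,
    mul_ite, mul_one, mul_zero, Finset.sum_add_distrib, ite_and]
  rw [Finset.sum_comm]
  simp [ two_mul]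

lemma dR_dd (i j a b : Fin N) : (dR (a, b)) * (dd i j).toLinearMap - (dd i j).toLinearMap * dR (a, b)
    = (if a = j then dR (i, b) else 0) - (if b = i then dR (a, j) else 0) := by
  have : ∀ D E : Derivation ℂ (SS N) (SS N), D.toLinearMap * E.toLinearMap
     - E.toLinearMap * D.toLinearMap = (⁅D, E⁆ : Derivation ℂ (SS N) (SS N)).toLinearMap := by
    intro D E; ext1; ext1; rfl
  rw [dR, this]
  have h2 : ⁅(pderiv (a, b) : Derivation ℂ (SS N) (SS N)), dd i j⁆
     = (if a = j then pderiv (i, b) else 0) - (if b = i then pderiv (a, j) else 0) := by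
    apply MvPolynomial.derivation_ext
    rintro ⟨k, l⟩
    simp only [Derivation.commutator_apply, dd_X, pderiv_X, map_sub, Pi.single_apply, Prod.mk.injEq,
      Derivation.sub_apply, apply_ite (dd i j), map_one_eq_zero, map_zero,
      apply_ite (pderiv (a, b) : Derivation ℂ (SS N) (SS N))]
    by_cases h1 : a = j <;> by_cases h2 : b = i <;> by_cases h3 : k = i <;> by_cases h4 : l = j <;>
     simp_all [Pi.single_apply, eq_comm]
  rw [h2]
  ext1; ext1
  by_cases h1 : a = j <;> by_cases h2 : b = i <;> simp [h1, h2, dR]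

lemma trace_smul_diag (M : Matrix (Fin N) (Fin N) (Module.End ℂ (SS N))) (Q : Module.End ℂ (SS N)) :
    (M * Matrix.diagonal (fun _ => Q)).trace = M.trace * Q ∧
    (Matrix.diagonal (fun _ => Q) * M).trace = Q * M.trace := by
  constructor
  · simp [Matrix.trace, Finset.sum_mul]
  · simp [Matrix.trace, Finset.mul_sum]

lemma neg_one_mulE (u : Module.End ℂ (SS N)) : (-1 : Module.End ℂ (SS N)) * u = -u := by
  refine LinearMap.ext fun x => ?_
  rfl

lemma mul_neg_oneE (u : Module.End ℂ (SS N)) : u * (-1 : Module.End ℂ (SS N)) = -u := by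
  refine LinearMap.ext fun x => ?_
  exact map_neg u x

lemma trace_DD_comm (i j : Fin N) (k : ℕ) :
    (DD N ^ k).trace * (dd i j).toLinearMap = (dd i j).toLinearMap * (DD N ^ k).trace := by
  have h := comm_pow (DD N) (Matrix.diagonal (fun _ => (dd i j).toLinearMap)) (Matrix.single i j (-1)) (by
    ext1 b a
    simp only [Matrix.sub_apply, Matrix.mul_diagonal, Matrix.diagonal_mul, DD, Matrix.of_apply,
       Matrix.neg_apply]
    rw [dR_dd]
    have e1 : (Matrix.single i j (-1) * (Matrix.of fun i j => dR (j, i)) :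
        Matrix (Fin N) (Fin N) (Module.End ℂ (SS N))) b a = if b = i then - dR (a, j) else 0 := by
      rw [Matrix.mul_apply, Finset.sum_eq_single j]
      · by_cases h : b = i
        · subst h; simp; exact neg_one_mulE _
        · simp [h, Matrix.single_apply, Ne.symm h]
      · intro c _ hc; simp [Matrix.single_apply, Ne.symm hc]
      · simp
    have e2 : ((Matrix.of fun i j => dR (j, i)) * Matrix.single i j (-1) :
        Matrix (Fin N) (Fin N) (Module.End ℂ (SS N))) b a = if a = j then - dR (i, b) else 0 := by
      rw [Matrix.mul_apply, Finset.sum_eq_single i]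
      · by_cases h : a = j
        · subst h; simp; exact mul_neg_oneE _
        · simp [h, Matrix.single_apply, Ne.symm h]
      · intro c _ hc; simp [Matrix.single_apply, Ne.symm hc]
      · simp
    rw [e1, e2]
    by_cases h1 : a = j <;> by_cases h2 : b = i <;> simp only [h1, h2, if_true, if_false] <;> abel
    ) k
  have h2 := congrArg Matrix.trace h
  rw [Matrix.trace_sub, Matrix.trace_sub, (trace_smul_diag _ _).1, (trace_smul_diag _ _).2] at h2
  rw [← sub_eq_zero, h2, sub_eq_zero]
  simp [Matrix.trace, Matrix.mul_apply, Matrix.single_apply, ite_and]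
  exact (neg_one_mulE _).trans (mul_neg_oneE _).symm

def Inv (Φ : SS N →ₗ[ℂ] ℂ) : Prop := ∀ i j : Fin N, i ≠ j → ∀ P, Φ (dd i j P) = 0

/-- inclusion of diagonal variables -/
def io (N : ℕ) : RR N →ₐ[ℂ] SS N := rename (fun i => (i, i))

lemma io_X (i : Fin N) : io N (X i) = X (i, i) := by simp [io]

lemma pderiv_io (i j : Fin N) (p : RR N) :
    pderiv (i, j) (io N p) = if i = j then io N (pderiv i p) else 0 := by
  induction p using MvPolynomial.induction_on with
  | C a => simp [io]
  | add p q hp hq => simp only [map_add, hp, hq]; split_ifs <;> simp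
  | mul_X p k hp =>
    simp only [map_mul, Derivation.leibniz, hp, io_X, pderiv_X, smul_eq_mul, Pi.single_apply, Prod.mk.injEq]
    by_cases h : i = j
    · subst h; by_cases h2 : k = i <;> simp [h2, io_X]
    · have : ¬ (k = i ∧ k = j) := by rintro ⟨rfl, rfl⟩; exact h rfl
      simp [h, this]

lemma dd_io (i j : Fin N) (hij : i ≠ j) (p : RR N) :
    dd i j (io N p) = X (j, i) * io N (pderiv i p - pderiv j p) := by
  induction p using MvPolynomial.induction_on with
  | C a =>
    have : io N (C a) = C a := by simp [io]
    rw [this, ← MvPolynomial.algebraMap_eq, Derivation.map_algebraMap, ← MvPolynomial.algebraMap_eq]; simp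
  | add p q hp hq => simp only [map_add, hp, hq, map_sub]; ring
  | mul_X p k hp =>
    simp only [map_mul, Derivation.leibniz, hp, io_X, pderiv_X, smul_eq_mul, Pi.single_apply, map_sub, dd_X, map_add]
    by_cases h1 : k = i
    · subst h1; simp [hij]; ring
    · by_cases h2 : k = j
      · subst h2; simp [Ne.symm hij]; ring
      · simp [h1, h2]; ring

lemma radial (Φ : SS N →ₗ[ℂ] ℂ) (hΦ : Inv Φ) (p : RR N) :
    Φ (QS N * io N (theta _ (Dl N) p)) = Φ (io N (theta _ (Dl N) ((∑ i, X i ^ 2) * p))) := by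
  have h := congrArg (fun u => Φ (io N (u p))) (theta_Dl_comm N)
  simp only [Module.End.mul_apply, mR_apply, LinearMap.add_apply, LinearMap.smul_apply,
    LinearMap.sum_apply, map_add, map_sum, map_nsmul] at h
  rw [h]
  have hQ : QS N = io N (∑ i, X i ^ 2) + 2 • ∑ t ∈ prs N, X (t.2, t.1) * X (t.1, t.2) := by
    have h1 : ∀ i : Fin N, ∑ j, (X (i, j) * X (j, i) : SS N) =
        X (i, i) ^ 2 + (∑ j, if i < j then X (j, i) * X (i, j) else 0) + ∑ j, if j < i then X (i, j) * X (j, i) else 0 := by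
      intro i
      have : (X (i, i) ^ 2 : SS N) = ∑ j, if i = j then X (j, i) * X (i, j) else 0 := by simp [pow_two]
      rw [this, ← Finset.sum_add_distrib, ← Finset.sum_add_distrib]
      refine Finset.sum_congr rfl fun j _ => ?_
      rcases lt_trichotomy i j with h | h | h
      · simp [h, h.ne, h.not_gt, mul_comm]
      · subst h; simp
      · simp [h, h.ne', h.not_gt]
    simp only [QS, h1, Finset.sum_add_distrib]
    rw [Finset.sum_comm (f := fun i j : Fin N => if j < i then (X (i, j) * X (j, i) : SS N) else 0), add_assoc, ← two_smul ℕ]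
    congr 1
    · simp [io]
    · congr 1
      rw [prs, Finset.sum_filter, Fintype.sum_prod_type]
  rw [hQ, add_mul, map_add, smul_mul_assoc, map_nsmul, Finset.sum_mul, ← map_mul]
  congr 1
  congr 1
  rw [map_sum]
  refine Finset.sum_congr rfl fun t ht => ?_
  have ht' : t.2 ≠ t.1 := by
    have := (Finset.mem_filter.1 ht).2
    exact this.ne'
  have hfac : Dl N = (X t.2 - X t.1) * Dlt N t := by
    rw [Dl, Dlt, Finset.mul_prod_erase _ (fun p : Fin N × Fin N => (X p.2 - X p.1 : RR N)) ht]
  have h0 := hΦ t.2 t.1 ht' (X (t.2, t.1) * io N (theta _ (Dlt N t) p))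
  rw [Derivation.leibniz, dd_X, if_pos rfl, if_pos rfl, dd_io _ _ ht', map_add] at h0
  have e1 : theta _ (Dl N) p = pderiv t.2 (theta _ (Dlt N t) p) - pderiv t.1 (theta _ (Dlt N t) p) := by
    rw [hfac, map_mul, map_sub, theta_X, theta_X]; rfl
  rw [e1, mul_assoc]
  simp only [smul_eq_mul] at h0
  rw [eq_neg_of_add_eq_zero_left h0, ← map_neg]
  congr 1
  have : io N (X t.2 - X t.1) = X (t.2, t.2) - X (t.1, t.1) := by simp [io]
  rw [map_mul, this]
  ring

def Rel (u : Module.End ℂ (SS N)) (v : Module.End ℂ (RR N)) : Prop :=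
  ∀ Φ : SS N →ₗ[ℂ] ℂ, Inv Φ → Inv (Φ.comp u) ∧
    ∀ p, Φ (u (io N (theta _ (Dl N) p))) = Φ (io N (theta _ (Dl N) (v p)))

lemma Rel.mul {u u' : Module.End ℂ (SS N)} {v v' : Module.End ℂ (RR N)} (h : Rel u v) (h' : Rel u' v') :
    Rel (u * u') (v * v') := by
  intro Φ hΦ
  refine ⟨?_, fun p => ?_⟩
  · exact ((h' _ (h _ hΦ).1).1)
  · have h1 := (h' _ (h _ hΦ).1).2 p
    have h2 := (h _ hΦ).2 (v' p)
    simp only [LinearMap.comp_apply] at h1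
    simp only [Module.End.mul_apply, h1, h2]

lemma Rel.sub {u u' : Module.End ℂ (SS N)} {v v' : Module.End ℂ (RR N)} (h : Rel u v) (h' : Rel u' v') :
    Rel (u - u') (v - v') := by
  intro Φ hΦ
  refine ⟨fun i j hij P => ?_, fun p => ?_⟩
  · have h1 := (h _ hΦ).1 i j hij P
    have h2 := (h' _ hΦ).1 i j hij P
    simp only [LinearMap.comp_apply] at h1 h2
    simp [h1, h2]
  · simp [(h _ hΦ).2 p, (h' _ hΦ).2 p]

lemma rel_Q : Rel (mR (QS N)) (mR (∑ i, X i ^ 2)) := by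
  intro Φ hΦ
  refine ⟨fun i j hij P => ?_, fun p => radial Φ hΦ p⟩
  have := hΦ i j hij (QS N * P)
  rw [Derivation.leibniz, dd_QS, smul_zero, add_zero] at this
  exact this

lemma DD_io (k : ℕ) (i j : Fin N) (p : RR N) :
    (DD N ^ k) i j (io N p) = if i = j then io N ((dR i ^ k) p) else 0 := by
  induction k generalizing p j with
  | zero => by_cases h : i = j <;> simp [h]
  | succ k ih =>
    rw [pow_succ, Matrix.mul_apply, LinearMap.sum_apply]
    simp only [Module.End.mul_apply, DD, Matrix.of_apply, dR_apply, pderiv_io]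
    rw [Finset.sum_eq_single j]
    · simp only [if_true]
      have := ih j (pderiv j p)
      rw [DD] at this
      rw [this]
      by_cases h : i = j
      · subst h; simp [pow_succ]
      · simp [h]
    · intro b _ hb; simp [Ne.symm hb]
    · simp

lemma dR_theta (i : Fin N) (f : RR N) (p : RR N) :
   theta _ f (dR i p) = dR i (theta _ f p) := by
  rw [← theta_X, ← Module.End.mul_apply, ← Module.End.mul_apply, ← map_mul, ← map_mul, mul_comm]

lemma rel_D (k : ℕ) : Rel (DD N ^ k).trace (∑ i, dR i ^ k) := by
  intro Φ hΦ
  refine ⟨fun i j hij P => ?_, fun p => ?_⟩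
  · have := congrArg (fun u => Φ (u P)) (trace_DD_comm i j k)
    simp only [Module.End.mul_apply] at this
    exact this.trans (hΦ i j hij _)
  · congr 1
    simp only [Matrix.trace, Matrix.diag, LinearMap.sum_apply, DD_io, if_true, map_sum]
    refine Finset.sum_congr rfl fun i _ => ?_
    congr 1
    clear hΦ
    induction k generalizing p with
    | zero => simp
    | succ k ih => simp only [pow_succ, Module.End.mul_apply, ← dR_theta, ih]

lemma rel_iter {u : Module.End ℂ (SS N)} {v : Module.End ℂ (RR N)} (h : Rel u v) (k : ℕ) :
    Rel ((del (mR (QS N)))^[k] u) ((del (mR (∑ i, X i ^ 2)))^[k] v) := by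
  induction k with
  | zero => exact h
  | succ k ih =>
    rw [Function.iterate_succ_apply', Function.iterate_succ_apply']
    exact (ih.mul rel_Q).sub (rel_Q.mul ih)

/-- The matrix trace polynomial -/
def trP (N k : ℕ) : SS N := ((Matrix.of fun i j => (X (i, j) : SS N)) ^ k).trace

lemma XX_pow (k : ℕ) (i j : Fin N) :
    (XX N ^ k) i j = mR (((Matrix.of fun i j => (X (i, j) : SS N)) ^ k) i j) := by
  induction k generalizing j with
  | zero =>
    by_cases h : i = j
    · subst h; ext1; ext1; simp
    · ext1; ext1; simp [h]
  | succ k ih =>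
    rw [pow_succ, pow_succ, Matrix.mul_apply, Matrix.mul_apply, mR_sum]
    simp only [mR_mul, ih]; rfl

lemma HCpow (Φ : SS N →ₗ[ℂ] ℂ) (hΦ : Inv Φ) (k : ℕ) (p : RR N) :
    Φ (trP N k * io N (theta _ (Dl N) p)) = Φ (io N (theta _ (Dl N) (psum (Fin N) ℂ k * p))) := by
  have hr := rel_iter (rel_D (N := N) k) k
  -- left side
  have hL : (del (mR (QS N)))^[k] (DD N ^ k).trace = (k.factorial * 2 ^ k) • mR (trP N k) := by
    have ht : ∀ (n : ℕ) (M : Matrix (Fin N) (Fin N) (Module.End ℂ (SS N))),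
        ((del (Matrix.diagonal (fun _ => mR (QS N))))^[n] M).trace = (del (mR (QS N)))^[n] M.trace := by
      intro n
      induction n with
      | zero => intro M; rfl
      | succ n ih =>
        intro M
        rw [Function.iterate_succ_apply, ih, Function.iterate_succ_apply]
        congr 1
        rw [del, Matrix.trace_sub, (trace_smul_diag _ _).1, (trace_smul_diag _ _).2, del]
    rw [← ht, (del_iter_pow _ (DD N) (2 • XX N) ?_ ?_ k).1]
    · rw [smul_pow, smul_smul, Matrix.trace_smul]
      congr 1
      rw [trP, Matrix.trace, Matrix.trace, mR_sum]
      exact Finset.sum_congr rfl fun i _ => XX_pow k i i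
    · ext1 i j
      simp only [del, Matrix.sub_apply, Matrix.mul_diagonal, Matrix.diagonal_mul, DD, XX, Matrix.of_apply,
        Matrix.smul_apply]
      rw [dR, der_mR, dR_QS]
      ext1; ext1; simp [mul_assoc, two_mul, add_mul]
    · ext1 i j
      simp only [del, Matrix.sub_apply, Matrix.mul_diagonal, Matrix.diagonal_mul, XX, Matrix.of_apply,
        Matrix.smul_apply, smul_mul_assoc, mul_smul_comm]
      rw [mR_comm, sub_self]; rfl
  have hR : (del (mR (∑ i, X i ^ 2)))^[k] (∑ i : Fin N, dR i ^ k) = (k.factorial * 2 ^ k) • mR (psum (Fin N) ℂ k) := by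
    have hs : ∀ (n : ℕ) (f : Fin N → Module.End ℂ (RR N)),
        (del (mR (∑ i, X i ^ 2)))^[n] (∑ i, f i) = ∑ i, (del (mR (∑ i, X i ^ 2)))^[n] (f i) := by
      intro n
      induction n with
      | zero => intro f; rfl
      | succ n ih =>
        intro f
        simp only [Function.iterate_succ_apply]
        rw [← ih]
        congr 1
        simp only [del, Finset.sum_mul, Finset.mul_sum, Finset.sum_sub_distrib]
    rw [hs, psum, mR_sum (f := fun i => X i ^ k), Finset.smul_sum]
    refine Finset.sum_congr rfl fun i _ => ?_
    rw [(del_iter_pow _ (dR i) (2 • mR (X i)) ?_ ?_ k).1]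
    · rw [smul_pow, smul_smul, mR_pow]
    · rw [del, dR, der_mR, add_sub_cancel_left]
      have : pderiv i (∑ i : Fin N, (X i : RR N) ^ 2) = 2 • X i := by
        simp only [map_sum, Derivation.leibniz_pow, pderiv_X]
        rw [Finset.sum_eq_single i]
        · simp
        · intro b _ hb; simp [Pi.single_apply, hb]
        · simp
      rw [this]; ext1; ext1; simp [mul_assoc]
    · rw [del, smul_mul_assoc, mul_smul_comm, mR_comm, sub_self]
  rw [hL, hR] at hr
  have h := (hr Φ hΦ).2 p
  rw [LinearMap.smul_apply, LinearMap.smul_apply, map_nsmul, map_nsmul, map_nsmul, map_nsmul, mR_apply, mR_apply, nsmul_eq_mul, nsmul_eq_mul] at h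
  refine mul_left_cancel₀ ?_ h
  have := Nat.factorial_pos k
  exact_mod_cast (by positivity : k.factorial * 2 ^ k ≠ 0)

end HC

end

end

section
open MvPolynomial

set_option linter.unusedSimpArgs false

noncomputable section
namespace HC
variable {N : ℕ}

def mono (s : Fin N → ℕ) : RR N := ∏ i, X i ^ s i

lemma lin_ext_mono (f : RR N →ₗ[ℂ] ℂ) (h : ∀ s, f (mono s) = 0) (q : RR N) : f q = 0 := by
  induction q using MvPolynomial.induction_on' with
  | monomial s a =>
    have : monomial s a = a • mono (fun i => s i) := by
      rw [mono, MvPolynomial.smul_eq_C_mul, MvPolynomial.monomial_eq, Finsupp.prod_fintype]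
      intro i; simp
    rw [this, map_smul, h, smul_zero]
  | add p q hp hq => rw [map_add, hp, hq, add_zero]

def Eig (b : Fin N → ℂ) (ψ : RR N →ₗ[ℂ] ℂ) : Prop :=
  ∀ k q, ψ (psum (Fin N) ℂ k * q) = (∑ i, b i ^ k) * ψ q
def Alt (ψ : RR N →ₗ[ℂ] ℂ) : Prop :=
  ∀ (σ : Equiv.Perm (Fin N)) q, ψ (rename σ q) = ((Equiv.Perm.sign σ : ℤ) : ℂ) * ψ q

lemma Eig.esymm {b : Fin N → ℂ} {ψ : RR N →ₗ[ℂ] ℂ} (h : Eig b ψ) (k : ℕ) :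
    ∃ e : ℂ, ∀ q, ψ (esymm (Fin N) ℂ k * q) = e * ψ q := by
  induction k using Nat.strong_induction_on with
  | _ k ih =>
    rcases Nat.eq_zero_or_pos k with rfl | hk
    · exact ⟨1, fun q => by simp⟩
    · choose e he using ih
      refine ⟨(k : ℂ)⁻¹ * ((-1) ^ (k+1) * ∑ a ∈ (Finset.HasAntidiagonal.antidiagonal k).filter (fun a => a.1 < k),
        (-1) ^ a.1 * (if ha : a.1 < k then e a.1 ha else 0) * ∑ i, b i ^ a.2), fun q => ?_⟩
      have hn := congrArg (fun p => ψ (p * q)) (mul_esymm_eq_sum (Fin N) ℂ k)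
      have h1 : ψ ((k : RR N) * MvPolynomial.esymm (Fin N) ℂ k * q) = (k : ℂ) * ψ (MvPolynomial.esymm (Fin N) ℂ k * q) := by
        rw [mul_assoc, ← nsmul_eq_mul, map_nsmul, nsmul_eq_mul]
      have hneg : ∀ (n : ℕ) p, ψ ((-1) ^ n * p) = (-1) ^ n * ψ p := by
        intro n p
        rcases neg_one_pow_eq_or (RR N) n with h | h <;> rcases Nat.even_or_odd n with h' | h' <;>
          simp [h'.neg_one_pow]
      rw [h1, mul_assoc, hneg, Finset.sum_mul, map_sum] at hn
      have hk' : (k : ℂ) ≠ 0 := by exact_mod_cast hk.ne'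
      rw [mul_assoc, eq_inv_mul_iff_mul_eq₀ hk', hn, mul_assoc]
      congr 1
      rw [Finset.sum_mul]
      refine Finset.sum_congr rfl fun a ha => ?_
      have ha' := (Finset.mem_filter.mp ha).2
      rw [mul_assoc, mul_assoc, hneg, he _ ha', h, dif_pos ha']
      ring

lemma vanish {b : Fin N → ℂ} {ψ : RR N →ₗ[ℂ] ℂ} (h : Eig b ψ) (ha : Alt ψ)
    (h0 : ψ (mono (fun i => (i : ℕ))) = 0) (q : RR N) : ψ q = 0 := by
  have hren : ∀ (σ : Equiv.Perm (Fin N)) s, rename σ (mono s) = mono (fun i => s (σ.symm i)) := by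
    intro σ s
    simp only [mono, map_prod, map_pow, rename_X]
    exact Fintype.prod_equiv σ _ _ (by simp)
  refine lin_ext_mono ψ (fun s => ?_) q
  generalize hn : ∑ i, s i = n
  induction n using Nat.strong_induction_on generalizing s with
  | _ n ih =>
    by_cases h1 : ∃ i, N ≤ s i
    · obtain ⟨i, hi⟩ := h1
      have hm : ∀ k ≤ s i, mono s = X i ^ k * mono (Function.update s i (s i - k)) := by
        intro k hk
        simp only [mono]
        rw [← Finset.mul_prod_erase _ _ (Finset.mem_univ i), ← Finset.mul_prod_erase (a := i) Finset.univ (fun j => X j ^ (Function.update s i (s i - k)) j) (Finset.mem_univ i), ← mul_assoc]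
        congr 1
        · simp only [Function.update_self]
          rw [← pow_add]; congr 1; omega
        · refine Finset.prod_congr rfl fun j hj => ?_
          rw [Function.update_of_ne (Finset.ne_of_mem_erase hj)]
      have hsum : ∀ m, ∑ j, (Function.update s i m) j + s i = n + m := by
        intro m
        rw [← hn, Finset.sum_update_of_mem (Finset.mem_univ i), ← Finset.add_sum_erase _ _ (Finset.mem_univ i), Finset.sdiff_singleton_eq_erase]
        ring
      have hup : ∀ m m', X i ^ m * mono (Function.update s i m') = mono (Function.update s i (m + m')) := by
        intro m k
        simp only [mono]
        rw [← Finset.mul_prod_erase _ _ (Finset.mem_univ i), ← Finset.mul_prod_erase (a := i) Finset.univ (fun j => X j ^ (Function.update s i (m + k)) j) (Finset.mem_univ i), ← mul_assoc]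
        congr 1
        · simp only [Function.update_self]
          rw [← pow_add]
        · refine Finset.prod_congr rfl fun j hj => ?_
          rw [Function.update_of_ne (Finset.ne_of_mem_erase hj), Function.update_of_ne (Finset.ne_of_mem_erase hj)]
      have hP := congrArg (Polynomial.eval (-X i : RR N)) (MvPolynomial.prod_C_add_X_eq_sum_esymm (R := ℂ) (σ := Fin N))
      rw [Polynomial.eval_prod, Finset.prod_eq_zero (Finset.mem_univ i) (by simp), Polynomial.eval_finsetSum,
        Finset.sum_range_succ', Fintype.card_fin] at hP
      have hP2 := congrArg (fun p => ψ ((-1) ^ N * p * mono (Function.update s i (s i - N)))) hP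
      simp only [mul_zero, zero_mul, map_zero, Nat.sub_zero, Polynomial.eval_mul, Polynomial.eval_C, Polynomial.eval_pow, Polynomial.eval_X,
        esymm_zero, one_mul] at hP2
      rw [mul_add, add_mul, map_add, ← mul_pow, neg_one_mul, neg_neg, ← hm N hi, mul_assoc, Finset.sum_mul, Finset.mul_sum, map_sum] at hP2
      rw [Finset.sum_eq_zero, zero_add] at hP2
      · exact hP2.symm
      · intro k hk
        have hk := Finset.mem_range.mp hk
        obtain ⟨e, he⟩ := h.esymm (k + 1)
        have : (-1) ^ N * (esymm (Fin N) ℂ (k+1) * (-X i) ^ (N - (k+1)) * mono (Function.update s i (s i - N)))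
            = esymm (Fin N) ℂ (k+1) * ((-1 : ℂ) ^ (N + (N - (k+1))) • mono (Function.update s i (N - (k+1) + (s i - N)))) := by
          rw [← hup, MvPolynomial.smul_eq_C_mul, neg_pow]
          simp only [map_pow, map_neg, map_one]
          ring
        rw [this, he, map_smul, ih _ _ _ rfl]
        · simp
        · have := hsum (N - (k+1) + (s i - N))
          omega
    · push Not at h1
      by_cases h2 : Function.Injective s
      · let f : Fin N → Fin N := fun i => ⟨s i, h1 i⟩
        have hf : Function.Injective f := fun i j hij => h2 (by simpa [f] using hij)
        let τ : Equiv.Perm (Fin N) := Equiv.ofBijective f (Finite.injective_iff_bijective.mp hf)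
        have := ha τ.symm (mono (fun i => (i : ℕ)))
        rw [hren, h0, mul_zero] at this
        exact this
      · rw [Function.Injective] at h2
        push Not at h2
        obtain ⟨i, j, hij, hne⟩ := h2
        have := ha (Equiv.swap i j) (mono s)
        rw [hren] at this
        have hs : (fun k => s ((Equiv.swap i j).symm k)) = s := by
          funext k
          rw [Equiv.symm_swap]
          by_cases hki : k = i
          · subst hki; simp [hij]
          · by_cases hkj : k = j
            · subst hkj; simp [hij]
            · rw [Equiv.swap_apply_of_ne_of_ne hki hkj]
        rw [hs, Equiv.Perm.sign_swap hne] at this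
        simp at this
        linear_combination (1/2 : ℂ) * this

def altE (b : Fin N → ℂ) : RR N →ₗ[ℂ] ℂ :=
  ∑ σ : Equiv.Perm (Fin N), ((Equiv.Perm.sign σ : ℤ) : ℂ) • (aeval (fun i => b (σ i)) : RR N →ₐ[ℂ] ℂ).toLinearMap

lemma altE_apply (b : Fin N → ℂ) (q : RR N) : altE b q =
    ∑ σ : Equiv.Perm (Fin N), ((Equiv.Perm.sign σ : ℤ) : ℂ) * aeval (fun i => b (σ i)) q := by
  simp [altE]

lemma altE_eig (b : Fin N → ℂ) : Eig b (altE b) := by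
  intro k q
  rw [altE_apply, altE_apply, Finset.mul_sum]
  refine Finset.sum_congr rfl fun σ _ => ?_
  rw [map_mul, psum, map_sum]
  simp only [map_pow, aeval_X]
  rw [Equiv.sum_comp σ (fun i => b i ^ k)]
  ring

lemma altE_alt (b : Fin N → ℂ) : Alt (altE b) := by
  intro τ q
  rw [altE_apply, altE_apply, Finset.mul_sum]
  refine Fintype.sum_equiv (Equiv.mulRight τ) _ _ fun σ => ?_
  rw [aeval_rename]
  simp only [Equiv.coe_mulRight, map_mul, Equiv.Perm.coe_mul]
  push_cast
  have : (((Equiv.Perm.sign τ : ℤ) : ℂ)) * ((Equiv.Perm.sign τ : ℤ) : ℂ) = 1 := by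
    rcases Int.units_eq_one_or (Equiv.Perm.sign τ) with h | h <;> simp [h]
  have e : ((fun i => b (σ i)) ∘ ⇑τ) = fun i => b ((⇑σ ∘ ⇑τ) i) := rfl
  rw [e]
  linear_combination (-((Equiv.Perm.sign σ : ℤ) : ℂ) * (aeval fun i => b ((⇑σ ∘ ⇑τ) i)) q) * this

lemma altE_delta (b : Fin N → ℂ) : altE b (mono (fun i => (i : ℕ))) = (Matrix.vandermonde b).det := by
  rw [altE_apply, Matrix.det_apply']
  simp [mono, Matrix.vandermonde]

theorem unique {b : Fin N → ℂ} {γ : RR N →ₗ[ℂ] ℂ} (h : Eig b γ) (ha : Alt γ) (q : RR N) :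
    γ q * (Matrix.vandermonde b).det = γ (mono (fun i => (i : ℕ))) * altE b q := by
  let ψ : RR N →ₗ[ℂ] ℂ := (Matrix.vandermonde b).det • γ - γ (mono (fun i => (i : ℕ))) • altE b
  have hψ : ∀ q, ψ q = (Matrix.vandermonde b).det * γ q - γ (mono (fun i => (i : ℕ))) * altE b q := by
    intro q; simp [ψ]
  have := vanish (b := b) (ψ := ψ) (fun k q => by rw [hψ, hψ, h, altE_eig]; ring)
    (fun σ q => by rw [hψ, hψ, ha, altE_alt]; ring) (by rw [hψ, altE_delta]; ring) q
  rw [hψ] at this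
  linear_combination this

end HC

end

end

section
open MvPolynomial

set_option linter.unusedSimpArgs false

noncomputable section
namespace HC
variable {N : ℕ}

def gam (Φ : SS N →ₗ[ℂ] ℂ) : RR N →ₗ[ℂ] ℂ := (Φ.comp (io N).toLinearMap).comp (theta _ (Dl N))

lemma gam_apply (Φ : SS N →ₗ[ℂ] ℂ) (q : RR N) : gam Φ q = Φ (io N (theta _ (Dl N) q)) := rfl

lemma gam_eig (Φ : SS N →ₗ[ℂ] ℂ) (hΦ : Inv Φ) (b : Fin N → ℂ)
    (htr : ∀ k P, Φ (trP N k * P) = (∑ i, b i ^ k) * Φ P) : Eig b (gam Φ) := by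
  intro k q
  rw [gam_apply, ← HCpow Φ hΦ, htr, gam_apply]

lemma theta_rename (σ : Equiv.Perm (Fin N)) (f q : RR N) :
    theta _ (rename σ f) (rename σ q) = rename σ (theta _ f q) := by
  induction f using MvPolynomial.induction_on generalizing q with
  | C a =>
    rw [rename_C]
    have : ∀ a : ℂ, theta (Fin N) (C a) = a • 1 := by
      intro a; rw [← MvPolynomial.algebraMap_eq, AlgHom.commutes, Algebra.algebraMap_eq_smul_one]
    rw [this]; simp
  | add p r hp hr => simp [hp, hr]
  | mul_X p i hp =>
    rw [map_mul, map_mul, map_mul, rename_X, theta_X, theta_X, Module.End.mul_apply, Module.End.mul_apply, dR_apply,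
      dR_apply, pderiv_rename σ.injective, hp]

lemma rename_Dl (σ : Equiv.Perm (Fin N)) : rename σ (Dl N) = ((Equiv.Perm.sign σ : ℤ) : ℂ) • Dl N := by
  rw [Dl_eq_det]
  have h1 := AlgHom.map_det (rename σ : RR N →ₐ[ℂ] RR N) (Matrix.vandermonde (fun i : Fin N => (X i : RR N)))
  rw [h1]
  have h2 : (rename σ : RR N →ₐ[ℂ] RR N).mapMatrix (Matrix.vandermonde (fun i : Fin N => (X i : RR N))) =
     (Matrix.vandermonde (fun i : Fin N => (X i : RR N))).submatrix σ id := by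
    ext1 i j
    simp [Matrix.vandermonde]
  rw [h2, Matrix.det_permute, MvPolynomial.smul_eq_C_mul]
  simp

lemma gam_alt (Φ : SS N →ₗ[ℂ] ℂ)
    (hp : ∀ (σ : Equiv.Perm (Fin N)) P, Φ (rename (Prod.map σ σ) P) = Φ P) : Alt (gam Φ) := by
  intro σ q
  have hio : ∀ q : RR N, io N (rename σ q) = rename (Prod.map σ σ) (io N q) := by
    intro q
    simp only [io, rename_rename]
    rfl
  have h1 : theta _ (Dl N) (rename σ q) = ((Equiv.Perm.sign σ : ℤ) : ℂ) • rename σ (theta _ (Dl N) q) := by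
    rw [← theta_rename, rename_Dl, map_smul, LinearMap.smul_apply, smul_smul]
    have : (((Equiv.Perm.sign σ : ℤ) : ℂ)) * ((Equiv.Perm.sign σ : ℤ) : ℂ) = 1 := by
      rcases Int.units_eq_one_or (Equiv.Perm.sign σ) with h | h <;> simp [h]
    rw [this, one_smul]
  rw [gam_apply, h1, map_smul, map_smul, hio, hp, gam_apply, smul_eq_mul]

lemma dR_mono (i : Fin N) (t : Fin N → ℕ) :
    dR i (mono t) = (t i : ℂ) • mono (Function.update t i (t i - 1)) := by
  classical
  rw [dR_apply, mono, pderiv_prod, Finset.sum_eq_single i]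
  · rw [mono, ← Finset.mul_prod_erase (a := i) Finset.univ (fun j => X j ^ (Function.update t i (t i - 1)) j) (Finset.mem_univ i)]
    have : ∏ j ∈ Finset.univ.erase i, (X j : RR N) ^ (Function.update t i (t i - 1)) j =
      ∏ j ∈ Finset.univ.erase i, (X j : RR N) ^ t j := by
      refine Finset.prod_congr rfl fun j hj => ?_
      rw [Function.update_of_ne (Finset.ne_of_mem_erase hj)]
    rw [this, Derivation.leibniz_pow, pderiv_X_self, MvPolynomial.smul_eq_C_mul]
    simp
    ring
  · intro j _ hj
    rw [Derivation.leibniz_pow, pderiv_X_of_ne hj]; simp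
  · simp

lemma dR_pow_mono (i : Fin N) (k : ℕ) (t : Fin N → ℕ) :
    (dR i ^ k) (mono t) = ((t i).descFactorial k : ℂ) • mono (Function.update t i (t i - k)) := by
  induction k with
  | zero => simp
  | succ k ih =>
    rw [pow_succ', Module.End.mul_apply, ih, map_smul, dR_mono, smul_smul, Function.update_self, Function.update_idem]
    congr 1
    rw [Nat.descFactorial_succ]; push_cast; ring

lemma theta_mono (s t : Fin N → ℕ) : theta _ (mono s) (mono t) =
    (∏ i, ((t i).descFactorial (s i) : ℂ)) • mono (fun i => t i - s i) := by
  classical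
  have key : ∀ S : Finset (Fin N), theta _ (∏ i ∈ S, X i ^ s i) (mono t) =
    (∏ i ∈ S, ((t i).descFactorial (s i) : ℂ)) • mono (fun i => if i ∈ S then t i - s i else t i) := by
    intro S
    induction S using Finset.induction_on with
    | empty => simp
    | insert a S ha ih =>
      rw [Finset.prod_insert ha, map_mul, Module.End.mul_apply, ih, map_smul, map_pow, theta_X, dR_pow_mono,
        smul_smul, if_neg ha, Finset.prod_insert ha, mul_comm]
      congr 2
      funext i
      by_cases h : i = a
      · subst h; simp
      · simp [h]
  have := key Finset.univ
  simpa [mono] using this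

lemma theta_Dl_delta : theta _ (Dl N) (mono (fun i => (i : ℕ))) = C (∏ i : Fin N, ((i : ℕ).factorial : ℂ)) := by
  classical
  have h : Dl N = ∑ σ : Equiv.Perm (Fin N), ((Equiv.Perm.sign σ : ℤ) : ℂ) • mono (fun i => (σ.symm i : ℕ)) := by
    rw [Dl_eq_det, Matrix.det_apply']
    refine Finset.sum_congr rfl fun σ _ => ?_
    rw [MvPolynomial.smul_eq_C_mul]
    simp
    rw [mono]
    exact Fintype.prod_equiv σ _ _ (by simp)
  have oneS : ∀ i : Fin N, Equiv.symm (1 : Equiv.Perm (Fin N)) i = i := fun i => rfl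
  rw [h, map_sum, LinearMap.sum_apply, Finset.sum_eq_single 1]
  · rw [map_smul, LinearMap.smul_apply, theta_mono]
    simp only [Equiv.Perm.sign_one, Units.val_one, Int.cast_one, one_smul, oneS, Nat.descFactorial_self, tsub_self, mono, pow_zero, Finset.prod_const_one]
    rw [MvPolynomial.smul_eq_C_mul, mul_one]
  · intro σ _ hσ
    rw [map_smul, LinearMap.smul_apply, theta_mono]
    have : ∃ i, i < σ.symm i := by
      by_contra hcon
      push Not at hcon
      apply hσ
      have hs : ∑ i, (σ.symm i : ℕ) = ∑ i : Fin N, (i : ℕ) := Equiv.sum_comp σ.symm (fun i => (i : ℕ))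
      rw [Finset.sum_eq_sum_iff_of_le (fun i _ => by exact_mod_cast hcon i)] at hs
      ext i
      have := hs (σ i) (Finset.mem_univ _)
      simp at this
      rw [Equiv.Perm.one_apply, ← this]
    obtain ⟨i, hi⟩ := this
    rw [Finset.prod_eq_zero (Finset.mem_univ i)]
    · simp
    · exact_mod_cast Nat.descFactorial_of_lt (by exact_mod_cast hi)
  · simp

lemma theta_lin (a : Fin N → ℂ) (n : ℕ) : theta _ (Dl N) ((∑ i, C (a i) * X i) ^ n) =
    ((n.descFactorial (prs N).card : ℂ) * (Matrix.vandermonde a).det) • (∑ i, C (a i) * X i) ^ (n - (prs N).card) := by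
  classical
  rw [Matrix.det_vandermonde, ← prod_prs (fun i j => a j - a i), Dl]
  have hd : ∀ (i : Fin N) (n : ℕ), dR i ((∑ i, C (a i) * X i) ^ n) = ((n : ℂ) * a i) • (∑ i, C (a i) * X i) ^ (n - 1) := by
    intro i n
    have h1 : pderiv i (∑ i, C (a i) * X i : RR N) = C (a i) := by
      rw [map_sum, Finset.sum_eq_single i]
      · simp
      · intro j _ hj; simp [pderiv_X_of_ne hj]
      · simp
    rw [dR_apply, Derivation.leibniz_pow, h1, MvPolynomial.smul_eq_C_mul]
    simp
    ring
  induction prs N using Finset.induction_on with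
  | empty => simp
  | insert p S hp ih =>
    rw [Finset.prod_insert hp, map_mul, Module.End.mul_apply, ih, map_smul, map_sub, theta_X, theta_X,
      LinearMap.sub_apply, hd, hd, Finset.card_insert_of_notMem hp, Finset.prod_insert hp, ← sub_smul, smul_smul,
      Nat.sub_sub, Nat.descFactorial_succ]
    congr 1
    push_cast
    ring

theorem HCsum (Φ : SS N →ₗ[ℂ] ℂ) (hΦ : Inv Φ) (h1 : Φ 1 = 1) (a b : Fin N → ℂ)
    (htr : ∀ k P, Φ (trP N k * P) = (∑ i, b i ^ k) * Φ P)
    (hp : ∀ (σ : Equiv.Perm (Fin N)) P, Φ (rename (Prod.map σ σ) P) = Φ P) (F : ℂ)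
    (hF : HasSum (fun n : ℕ => Φ ((∑ i, C (a i) * X (i, i)) ^ n) / (n.factorial : ℂ)) F) :
    F * (Matrix.vandermonde a).det * (Matrix.vandermonde b).det =
      (∏ i : Fin N, ((i : ℕ).factorial : ℂ)) * (Matrix.of fun i j => Complex.exp (a i * b j)).det := by
  set d := (prs N).card with hd
  have hu := unique (gam_eig Φ hΦ b htr) (gam_alt Φ hp)
  have hc : gam Φ (mono (fun i => (i : ℕ))) = ∏ i : Fin N, ((i : ℕ).factorial : ℂ) := by
    rw [gam_apply, theta_Dl_delta, ← mul_one (C _), ← MvPolynomial.smul_eq_C_mul, map_smul, map_smul, map_one, h1, smul_eq_mul, mul_one]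
  rw [hc] at hu
  have hg : ∀ n, gam Φ ((∑ i, C (a i) * X i) ^ n) = (n.descFactorial d : ℂ) * (Matrix.vandermonde a).det *
      Φ ((∑ i, C (a i) * X (i, i)) ^ (n - d)) := by
    intro n
    rw [gam_apply, theta_lin, map_smul, map_smul, smul_eq_mul]
    congr 2
    simp [io, hd]
  have s1 : HasSum (fun n : ℕ => gam Φ ((∑ i, C (a i) * X i) ^ n) / (n.factorial : ℂ))
      ((Matrix.vandermonde a).det * F) := by
    have hz : ∑ n ∈ Finset.range d, gam Φ ((∑ i, C (a i) * X i) ^ n) / (n.factorial : ℂ) = 0 := by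
      refine Finset.sum_eq_zero fun n hn => ?_
      rw [hg, Nat.descFactorial_of_lt (Finset.mem_range.mp hn)]
      simp
    rw [← hasSum_nat_add_iff' d, hz, sub_zero]
    have e : (fun n : ℕ => gam Φ ((∑ i, C (a i) * X i) ^ (n + d)) / ((n + d).factorial : ℂ)) =
        fun n => (Matrix.vandermonde a).det * (Φ ((∑ i, C (a i) * X (i, i)) ^ n) / (n.factorial : ℂ)) := by
      funext n
      rw [hg, Nat.add_sub_cancel]
      have : ((n + d).descFactorial d : ℂ) * (n.factorial : ℂ) = ((n+d).factorial : ℂ) := by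
        have := Nat.factorial_mul_descFactorial (n := n + d) (k := d) (by omega)
        rw [Nat.add_sub_cancel] at this
        rw [← this]; push_cast; ring
      have h2 : ((n+d).factorial : ℂ) ≠ 0 := by exact_mod_cast Nat.factorial_ne_zero _
      have h3 : ((n).factorial : ℂ) ≠ 0 := by exact_mod_cast Nat.factorial_ne_zero _
      field_simp
      rw [← this]; ring
    rw [e]
    exact hF.mul_left _
  have s2 : HasSum (fun n : ℕ => altE b ((∑ i, C (a i) * X i) ^ n) / (n.factorial : ℂ))
     (Matrix.of fun i j => Complex.exp (a i * b j)).det := by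
    rw [← Matrix.det_transpose, Matrix.det_apply']
    have : ∀ n : ℕ, altE b ((∑ i, C (a i) * X i) ^ n) / (n.factorial : ℂ) =
       ∑ σ : Equiv.Perm (Fin N), ((Equiv.Perm.sign σ : ℤ) : ℂ) * ((∑ i, a i * b (σ i)) ^ n / (n.factorial : ℂ)) := by
      intro n
      rw [altE_apply, Finset.sum_div]
      refine Finset.sum_congr rfl fun σ _ => ?_
      simp [mul_div_assoc]
    simp_rw [this]
    refine hasSum_sum fun σ _ => ?_
    refine HasSum.mul_left _ ?_
    have := NormedSpace.expSeries_div_hasSum_exp (𝔸 := ℂ) (∑ i, a i * b (σ i))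
    rw [← Complex.exp_eq_exp_ℂ, Complex.exp_sum] at this
    simpa using this
  have e := (s1.mul_right (Matrix.vandermonde b).det).unique
    (by
      have e : (fun n : ℕ => gam Φ ((∑ i, C (a i) * X i) ^ n) / (n.factorial : ℂ) * (Matrix.vandermonde b).det) =
        fun n => (∏ i : Fin N, ((i : ℕ).factorial : ℂ)) * (altE b ((∑ i, C (a i) * X i) ^ n) / (n.factorial : ℂ)) := by
        funext n
        rw [div_mul_eq_mul_div, hu, mul_div_assoc]
      rw [e]
      exact s2.mul_left (∏ i : Fin N, ((i : ℕ).factorial : ℂ)))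
  rw [← e]; ring

end HC

end

end

section
open MvPolynomial MeasureTheory

set_option linter.unusedSimpArgs false

noncomputable section
namespace HC
variable {N : ℕ}

abbrev UG (N : ℕ) := Matrix.unitaryGroup (Fin N) ℂ
abbrev MM (N : ℕ) := Matrix (Fin N) (Fin N) ℂ

instance bsM : BorelSpace (MM N) := ⟨rfl⟩

instance cpU : CompactSpace (UG N) := by
  refine (isCompact_iff_compactSpace (s := ((UG N : Submonoid (MM N)) : Set (MM N)))).mp ?_
  have hc : IsCompact (Set.univ.pi (fun _ : Fin N => Set.univ.pi (fun _ : Fin N => Metric.closedBall (0 : ℂ) 1))) :=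
    isCompact_univ_pi fun _ => isCompact_univ_pi fun _ => isCompact_closedBall _ _
  refine IsCompact.of_isClosed_subset hc (isClosed_unitary (R := MM N)) ?_
  intro U hU i _ j _
  simpa using entry_norm_bound_of_unitary (𝕜 := ℂ) hU i j

lemma cont_int {E : Type*} [NormedAddCommGroup E] (m : Measure (UG N)) [m.IsHaarMeasure] {f : UG N → E} (hf : Continuous f) :
    Integrable f m :=
  hf.integrable_of_hasCompactSupport (HasCompactSupport.of_compactSpace f)

def ev (M : MM N) : SS N →ₐ[ℂ] ℂ := aeval fun ij => M ij.1 ij.2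

lemma ev_cont (P : SS N) : Continuous (fun M : MM N => ev M P) := by
  induction P using MvPolynomial.induction_on with
  | C a => simp only [ev, aeval_C]; exact continuous_const
  | add p q hp hq => simp only [map_add]; exact hp.add hq
  | mul_X p i hp =>
    simp only [map_mul]
    refine hp.mul ?_
    simp only [ev, aeval_X]
    fun_prop

def orb (A : MM N) (U : UG N) : MM N := (U : MM N) * A * star (U : MM N)

lemma orb_cont (A : MM N) : Continuous (orb A) := by
  unfold orb
  fun_prop

lemma orb_mul (A : MM N) (V U : UG N) : orb A (V * U) = (V : MM N) * orb A U * star (V : MM N) := by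
  simp only [orb, Submonoid.coe_mul, star_mul, mul_assoc]

def Phi (m : Measure (UG N)) [m.IsHaarMeasure] (A : MM N) : SS N →ₗ[ℂ] ℂ where
  toFun P := ∫ U, ev (orb A U) P ∂m
  map_add' P Q := by
    simp only [map_add]
    exact integral_add (cont_int m ((ev_cont P).comp (orb_cont A))) (cont_int m ((ev_cont Q).comp (orb_cont A)))
  map_smul' c P := by
    simp only [map_smul]
    exact integral_smul c _

lemma Phi_apply (m : Measure (UG N)) [m.IsHaarMeasure] (A : MM N) (P : SS N) :
    Phi m A P = ∫ U, ev (orb A U) P ∂m := rfl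

lemma Phi_left (m : Measure (UG N)) [m.IsHaarMeasure] (A : MM N) (P : SS N) (V : UG N) :
    ∫ U, ev (orb A (V * U)) P ∂m = Phi m A P :=
  integral_mul_left_eq_self (fun U => ev (orb A U) P) V

def YY (i j : Fin N) (w : ℂ) : MM N := Matrix.single i j w - Matrix.single j i (star w)
def PP (i j : Fin N) : MM N := Matrix.single i i 1 + Matrix.single j j 1

def VV (i j : Fin N) (w : ℂ) (t : ℝ) : MM N :=
  1 + ((Complex.cos t) - 1) • PP i j + (Complex.sin t) • YY i j w

lemma PP_sq {i j : Fin N} (hij : i ≠ j) : PP i j * PP i j = PP i j := by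
  simp [PP, mul_add, add_mul, Matrix.single_mul_single_of_ne, hij, hij.symm]

lemma PY {i j : Fin N} (hij : i ≠ j) {w : ℂ} : PP i j * YY i j w = YY i j w := by
  simp [PP, YY, mul_sub, add_mul, Matrix.single_mul_single_of_ne, hij, hij.symm]

lemma YP {i j : Fin N} (hij : i ≠ j) {w : ℂ} : YY i j w * PP i j = YY i j w := by
  simp [PP, YY, mul_add, sub_mul, Matrix.single_mul_single_of_ne, hij, hij.symm]
  abel

lemma Y_sq {i j : Fin N} (hij : i ≠ j) {w : ℂ} (hw : w * star w = 1) : YY i j w * YY i j w = - PP i j := by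
  have hw' : star w * w = 1 := by rw [mul_comm]; exact hw
  have e1 : Matrix.single i j w * Matrix.single i j w = 0 := Matrix.single_mul_single_of_ne _ _ _ _ hij.symm _
  have e2 : Matrix.single j i (star w) * Matrix.single j i (star w) = 0 := Matrix.single_mul_single_of_ne _ _ _ _ hij _
  simp only [PP, YY, mul_sub, sub_mul, Matrix.single_mul_single_same, e1, e2, hw, hw']
  abel

lemma YY_star (i j : Fin N) (w : ℂ) : star (YY i j w) = - YY i j w := by
  rw [Matrix.star_eq_conjTranspose, YY]
  simp [Matrix.conjTranspose_sub, Matrix.conjTranspose_single]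
lemma PP_star (i j : Fin N) : star (PP i j) = PP i j := by
  rw [Matrix.star_eq_conjTranspose, PP]
  simp [Matrix.conjTranspose_add, Matrix.conjTranspose_single]

lemma VV_star (i j : Fin N) (w : ℂ) (t : ℝ) : star (VV i j w t) = 
  1 + ((Complex.cos t) - 1) • PP i j - (Complex.sin t) • YY i j w := by
  have hc : star (Complex.cos t) = Complex.cos t := by
    rw [← Complex.ofReal_cos]; exact Complex.conj_ofReal _
  have hs : star (Complex.sin t) = Complex.sin t := by
    rw [← Complex.ofReal_sin]; exact Complex.conj_ofReal _
  rw [VV, star_add, star_add, star_smul, star_smul, YY_star, PP_star, star_sub, hc, hs, star_one, star_one, smul_neg]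
  abel

lemma VV_mem {i j : Fin N} (hij : i ≠ j) {w : ℂ} (hw : w * star w = 1) (t : ℝ) :
    VV i j w t ∈ Matrix.unitaryGroup (Fin N) ℂ := by
  rw [Matrix.mem_unitaryGroup_iff, VV_star, VV]
  have h1 := PP_sq hij
  have h2 := PY (w := w) hij
  have h3 := YP (w := w) hij
  have h4 := Y_sq hij hw
  have hcs := Complex.sin_sq_add_cos_sq t
  have hcs' : (Complex.cos t - 1) * (Complex.cos t - 1) + 2 * (Complex.cos t - 1) + Complex.sin t * Complex.sin t = 0 := by
    linear_combination hcs
  generalize Complex.cos t - 1 = c at *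
  generalize Complex.sin t = s at *
  simp only [mul_add, add_mul, mul_sub, sub_mul, one_mul, mul_one, smul_mul_smul_comm, h1, h2, h3, h4, smul_neg]
  match_scalars <;> first | linear_combination 0 * hcs' | linear_combination hcs'

def UV {i j : Fin N} (hij : i ≠ j) {w : ℂ} (hw : w * star w = 1) (t : ℝ) : UG N :=
  ⟨VV i j w t, VV_mem hij hw t⟩

lemma VV_deriv {i j : Fin N} (hij : i ≠ j) {w : ℂ} (hw : w * star w = 1) (t : ℝ) (k l : Fin N) :
    HasDerivAt (fun t => VV i j w t k l) ((YY i j w * VV i j w t) k l) t := by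
  have e : YY i j w * VV i j w t = (Complex.cos t) • YY i j w - (Complex.sin t) • PP i j := by
    rw [VV]
    simp only [mul_add, mul_one, mul_smul_comm, YP hij, Y_sq hij hw, smul_neg]
    rw [sub_smul, one_smul]
    abel
  have hc : HasDerivAt (fun t : ℝ => Complex.cos t) (-Complex.sin t) t := (Complex.hasDerivAt_cos t).comp_ofReal
  have hs : HasDerivAt (fun t : ℝ => Complex.sin t) (Complex.cos t) t := (Complex.hasDerivAt_sin t).comp_ofReal
  rw [e]
  simp only [VV, Matrix.add_apply, Matrix.smul_apply, Matrix.sub_apply, smul_eq_mul]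
  refine ((((hc.sub_const 1).mul_const (PP i j k l)).const_add _).add (hs.mul_const (YY i j w k l))).congr_deriv ?_
  ring

lemma mat_deriv {A B : ℝ → MM N} {A' B' : MM N} {t : ℝ}
    (hA : ∀ k l, HasDerivAt (fun t => A t k l) (A' k l) t) (hB : ∀ k l, HasDerivAt (fun t => B t k l) (B' k l) t)
    (k l : Fin N) : HasDerivAt (fun t => (A t * B t) k l) ((A' * B t + A t * B') k l) t := by
  simp only [Matrix.mul_apply, Matrix.add_apply, ← Finset.sum_add_distrib]
  exact HasDerivAt.fun_sum fun a _ => (hA k a).mul (hB a l)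

lemma orb_deriv {i j : Fin N} (hij : i ≠ j) {w : ℂ} (hw : w * star w = 1) (C : MM N) (t : ℝ) (k l : Fin N) :
    HasDerivAt (fun t => (VV i j w t * C * star (VV i j w t)) k l)
      ((YY i j w * (VV i j w t * C * star (VV i j w t)) - (VV i j w t * C * star (VV i j w t)) * YY i j w) k l) t := by
  have h1 := VV_deriv hij hw t
  have h2 : ∀ k l, HasDerivAt (fun t => star (VV i j w t) k l) ((star (YY i j w * VV i j w t)) k l) t := by
    intro k l
    exact (h1 l k).star
  have h3 := mat_deriv (mat_deriv h1 (B := fun _ => C) (B' := 0) (fun k l => hasDerivAt_const _ _)) h2 k l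
  refine h3.congr_deriv ?_
  rw [star_mul, YY_star]
  noncomm_ring

def dY (i j : Fin N) (w : ℂ) : SS N →ₗ[ℂ] SS N := w • (dd i j).toLinearMap - star w • (dd j i).toLinearMap

lemma dY_apply (i j : Fin N) (w : ℂ) (P : SS N) : dY i j w P = w • dd i j P - star w • dd j i P := rfl

lemma ev_dY_X (i j : Fin N) (w : ℂ) (M : MM N) (k l : Fin N) :
    ev M (dY i j w (X (k, l))) = (YY i j w * M - M * YY i j w) k l := by
  rw [dY_apply, dd_X, dd_X]
  simp only [YY, sub_mul, mul_sub, Matrix.sub_apply, map_sub, map_smul, smul_eq_mul]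
  have e1 : ∀ (i j : Fin N) (w : ℂ), (Matrix.single i j w * M) k l = w * (if k = i then M j l else 0) := by
    intro i j w
    by_cases h : k = i
    · subst h; simp
    · rw [Matrix.single_mul_apply_of_ne _ _ _ _ _ h]; simp [h]
  have e2 : ∀ (i j : Fin N) (w : ℂ), (M * Matrix.single i j w) k l = w * (if l = j then M k i else 0) := by
    intro i j w
    by_cases h : l = j
    · subst h; simp [mul_comm]
    · rw [Matrix.mul_single_apply_of_ne _ _ _ _ _ h]; simp [h]
  have e3 : ∀ (p : Prop) [Decidable p] (a b : Fin N), ev M (if p then X (a, b) else 0) = if p then M a b else 0 := by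
    intro p _ a b; split_ifs <;> simp [ev]
  simp only [e1, e2, e3]
  ring

lemma ev_deriv (i j : Fin N) (w : ℂ) (M : ℝ → MM N) (t : ℝ)
    (hM : ∀ k l, HasDerivAt (fun t => M t k l) ((YY i j w * M t - M t * YY i j w) k l) t) (P : SS N) :
    HasDerivAt (fun t => ev (M t) P) (ev (M t) (dY i j w P)) t := by
  induction P using MvPolynomial.induction_on with
  | C a =>
    have h1 : ∀ M : MM N, ev M (C a) = a := by intro M; simp [ev]
    simp only [h1, dY_apply]
    have h2 : ∀ D : Derivation ℂ (SS N) (SS N), D (C a) = 0 := fun D => D.map_algebraMap a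
    rw [h2, h2]
    simpa using hasDerivAt_const t a
  | add p q hp hq =>
    simp only [map_add]; exact hp.add hq
  | mul_X p kl hp =>
    obtain ⟨k, l⟩ := kl
    have h1 : ∀ M : MM N, ev M (X (k, l)) = M k l := by intro M; simp [ev]
    simp only [map_mul]
    have h2 : dY i j w (p * X (k, l)) = dY i j w p * X (k, l) + p * dY i j w (X (k, l)) := by
      simp only [dY_apply, Derivation.leibniz, smul_eq_mul, MvPolynomial.smul_eq_C_mul]
      ring
    rw [h2, map_add, map_mul, map_mul, ev_dY_X, h1]
    simp only [h1]
    exact hp.mul (hM k l)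

lemma Phi_dY (m : Measure (UG N)) [m.IsHaarMeasure] (A : MM N) {i j : Fin N} (hij : i ≠ j) {w : ℂ} (hw : w * star w = 1)
    (P : SS N) : Phi m A (dY i j w P) = 0 := by
  have hcont : ∀ Q : SS N, Continuous (fun U : UG N => ev (orb A U) Q) := fun Q => (ev_cont Q).comp (orb_cont A)
  obtain ⟨M, hM⟩ : ∃ M : ℝ, ∀ U : UG N, ‖ev (orb A U) (dY i j w P)‖ ≤ M := by
    obtain ⟨M, hM⟩ := isCompact_univ.exists_bound_of_continuousOn (hcont (dY i j w P)).continuousOn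
    exact ⟨M, fun U => hM U (Set.mem_univ _)⟩
  have hct : ∀ (t : ℝ) (Q : SS N), Continuous (fun U : UG N => ev (orb A (UV hij hw t * U)) Q) :=
    fun t Q => (hcont Q).comp (continuous_const.mul continuous_id)
  have key := hasDerivAt_integral_of_dominated_loc_of_deriv_le (μ := m) (𝕜 := ℝ) (x₀ := 0) (s := Set.univ)
    (F := fun t U => ev (orb A (UV hij hw t * U)) P) (F' := fun t U => ev (orb A (UV hij hw t * U)) (dY i j w P))
    (bound := fun _ => M) Filter.univ_mem
    (Filter.Eventually.of_forall fun t => (cont_int m (hct t P)).aestronglyMeasurable)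
    (cont_int m (hct 0 P)) (cont_int m (hct 0 _)).aestronglyMeasurable
    (Filter.Eventually.of_forall fun U t _ => hM _) (cont_int m continuous_const)
    (Filter.Eventually.of_forall fun U t _ => by
      simp only [orb_mul]
      exact ev_deriv i j w (fun t => (UV hij hw t : MM N) * orb A U * star (UV hij hw t : MM N)) t
        (orb_deriv hij hw (orb A U) t) P)
  have k2 := key.2
  simp only [Phi_left] at k2
  exact k2.unique (hasDerivAt_const _ _)

lemma Phi_inv (m : Measure (UG N)) [m.IsHaarMeasure] (A : MM N) : Inv (Phi m A) := by
  intro i j hij P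
  have h1 := Phi_dY m A hij (w := 1) (by simp) P
  have h2 := Phi_dY m A hij (w := Complex.I) (by simp) P
  simp only [dY_apply, map_sub, map_smul, smul_eq_mul, star_one, one_mul] at h1 h2
  have h3 : star Complex.I = - Complex.I := Complex.conj_I
  rw [h3] at h2
  have hI := Complex.I_mul_I
  linear_combination (1/2 : ℂ) * h1 + (-Complex.I/2 : ℂ) * h2 + (1/2 : ℂ) * (Phi m A (dd i j P) + Phi m A (dd j i P)) * hI

lemma Phi_one (m : Measure (UG N)) [m.IsHaarMeasure] [IsProbabilityMeasure m] (A : MM N) : Phi m A 1 = 1 := by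
  rw [Phi_apply]; simp

lemma Phi_perm (m : Measure (UG N)) [m.IsHaarMeasure] (A : MM N) (σ : Equiv.Perm (Fin N)) (P : SS N) :
    Phi m A (rename (Prod.map σ σ) P) = Phi m A P := by
  let W : MM N := (1 : MM N).submatrix σ id
  have hW : ∀ M : MM N, W * M * star W = M.submatrix σ σ := by
    intro M
    ext k l
    simp [W, Matrix.mul_apply, Matrix.submatrix, Matrix.one_apply, Matrix.star_eq_conjTranspose]
  have hWm : W ∈ Matrix.unitaryGroup (Fin N) ℂ := by
    have := hW 1
    rw [mul_one] at this
    rw [Matrix.mem_unitaryGroup_iff, this, Matrix.submatrix_one_equiv]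
  rw [← Phi_left m A P ⟨W, hWm⟩, Phi_apply]
  refine integral_congr_ae (Filter.Eventually.of_forall fun U => ?_)
  simp only [orb_mul, hW]
  simp only [ev, aeval_rename]
  rfl

lemma Phi_tr (m : Measure (UG N)) [m.IsHaarMeasure] (b : Fin N → ℂ) (k : ℕ) (P : SS N) :
    Phi m (Matrix.diagonal b) (trP N k * P) = (∑ i, b i ^ k) * Phi m (Matrix.diagonal b) P := by
  rw [Phi_apply, Phi_apply, ← integral_const_mul]
  refine integral_congr_ae (Filter.Eventually.of_forall fun U => ?_)
  simp only [map_mul]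
  congr 1
  have h1 : ∀ M : MM N, ev M (trP N k) = (M ^ k).trace := by
    intro M
    rw [trP, Matrix.trace, map_sum, Matrix.trace]
    refine Finset.sum_congr rfl fun i _ => ?_
    simp only [Matrix.diag_apply]
    have := congrFun (congrFun (map_pow ((ev M).mapMatrix (m := Fin N)) (Matrix.of fun i j => (X (i, j) : SS N)) k) i) i
    simp only [AlgHom.mapMatrix_apply, Matrix.map_apply] at this
    rw [this]
    have e : (Matrix.of fun i j => (X (i, j) : SS N)).map (ev M) = M := by
      ext a b
      simp [ev]
    rw [e]
  have h2 : ∀ k, (orb (Matrix.diagonal b) U) ^ k = orb (Matrix.diagonal b ^ k) U := by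
    intro k
    have hs : star (U : MM N) * (U : MM N) = 1 := Matrix.mem_unitaryGroup_iff'.mp U.2
    induction k with
    | zero => simp [orb]
    | succ k ih =>
      rw [pow_succ, ih, orb, orb, orb, pow_succ]
      calc _ = (U : MM N) * Matrix.diagonal b ^ k * (star (U : MM N) * (U : MM N)) * Matrix.diagonal b * star (U : MM N) := by
            simp only [mul_assoc]
        _ = _ := by rw [hs]; simp only [mul_assoc, mul_one, one_mul]
  rw [h1, h2, orb, Matrix.trace_mul_comm, ← mul_assoc, Matrix.mem_unitaryGroup_iff'.mp U.2, one_mul, Matrix.diagonal_pow, Matrix.trace_diagonal]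
  rfl

lemma Phi_sum (m : Measure (UG N)) [m.IsHaarMeasure] (A : MM N) (a : Fin N → ℂ) :
    HasSum (fun n : ℕ => Phi m A ((∑ i, C (a i) * X (i, i)) ^ n) / (n.factorial : ℂ))
      (∫ U, Complex.exp (∑ i, a i * orb A U i i) ∂m) := by
  set Q : SS N := ∑ i, C (a i) * X (i, i) with hQ
  have hev : ∀ U, ev (orb A U) Q = ∑ i, a i * orb A U i i := by
    intro U; simp [hQ, ev]
  have hcont : ∀ Q : SS N, Continuous (fun U : UG N => ev (orb A U) Q) := fun Q => (ev_cont Q).comp (orb_cont A)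
  obtain ⟨M, hM⟩ : ∃ M : ℝ, ∀ U : UG N, ‖ev (orb A U) Q‖ ≤ M := by
    obtain ⟨M, hM⟩ := isCompact_univ.exists_bound_of_continuousOn (hcont Q).continuousOn
    exact ⟨M, fun U => hM U (Set.mem_univ _)⟩
  have key := hasSum_integral_of_dominated_convergence (μ := m) (ι := ℕ)
    (F := fun n U => ev (orb A U) (Q ^ n) / (n.factorial : ℂ)) (f := fun U => Complex.exp (∑ i, a i * orb A U i i))
    (fun n _ => M ^ n / (n.factorial : ℝ))
    (fun n => (cont_int m ((hcont (Q ^ n)).div_const _)).aestronglyMeasurable)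
    (fun n => Filter.Eventually.of_forall fun U => by
      rw [norm_div, map_pow, norm_pow, Complex.norm_natCast]
      gcongr
      exact hM U)
    (Filter.Eventually.of_forall fun U => Real.summable_pow_div_factorial M)
    (cont_int m continuous_const)
    (Filter.Eventually.of_forall fun U => by
      have := NormedSpace.expSeries_div_hasSum_exp (𝔸 := ℂ) (∑ i, a i * orb A U i i)
      rw [← Complex.exp_eq_exp_ℂ] at this
      simpa only [map_pow, hev] using this)
  have e : (fun n : ℕ => Phi m A (Q ^ n) / (n.factorial : ℂ)) = fun n : ℕ => ∫ U, ev (orb A U) (Q ^ n) / (n.factorial : ℂ) ∂m := by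
    funext n
    rw [Phi_apply, integral_div]
  rw [e]
  exact key

lemma sphInt_eq (hN : 0 < N) (m : Measure (UG N)) (a b : Fin N → ℝ) :
    (∫ U, Complex.exp (∑ i, (a i : ℂ) * orb (Matrix.diagonal (fun i => (b i : ℂ))) U i i) ∂m) =
      (sphInt N m (Matrix.diagonal (fun i => (b i : ℂ))) (Matrix.diagonal (fun i => ((a i / N : ℝ) : ℂ))) : ℂ) := by
  rw [sphInt, ← integral_complex_ofReal]
  refine integral_congr_ae (Filter.Eventually.of_forall fun U => ?_)
  simp only [Complex.ofReal_exp]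
  congr 1
  have hre : ∀ i, ((orb (Matrix.diagonal (fun i => (b i : ℂ))) U i i).re : ℂ) = orb (Matrix.diagonal (fun i => (b i : ℂ))) U i i := by
    intro i
    rw [← Complex.conj_eq_iff_re]
    have : star (orb (Matrix.diagonal (fun i => (b i : ℂ))) U) = orb (Matrix.diagonal (fun i => (b i : ℂ))) U := by
      rw [orb, star_mul, star_mul, star_star, Matrix.star_eq_conjTranspose (Matrix.diagonal _), Matrix.diagonal_conjTranspose, mul_assoc]
      congr 3
      funext i
      simp
    exact congrFun (congrFun this i) i
  have hN' : (N : ℂ) ≠ 0 := by exact_mod_cast hN.ne'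
  have htr : Matrix.trace (((U : MM N) * Matrix.diagonal (fun i => (b i : ℂ)) * star (U : MM N)) * Matrix.diagonal (fun i => ((a i / N : ℝ) : ℂ)))
     = ∑ i, orb (Matrix.diagonal (fun i => (b i : ℂ))) U i i * ((a i / N : ℝ) : ℂ) := by
    simp [Matrix.trace, Matrix.mul_diagonal, orb]
  rw [htr, Complex.re_sum]
  push_cast
  rw [Finset.mul_sum]
  refine Finset.sum_congr rfl fun i _ => ?_
  rw [Complex.mul_re]
  rw [← Complex.ofReal_natCast, ← Complex.ofReal_div, Complex.ofReal_re, Complex.ofReal_im, mul_zero, sub_zero]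
  push_cast
  rw [hre]
  field_simp

theorem HCIZ (hN : 0 < N) (m : Measure (UG N)) [m.IsHaarMeasure] [IsProbabilityMeasure m] (a b : Fin N → ℝ) :
    sphInt N m (Matrix.diagonal (fun i => (b i : ℂ))) (Matrix.diagonal (fun i => ((a i / N : ℝ) : ℂ)))
      * (Matrix.vandermonde a).det * (Matrix.vandermonde b).det =
      (∏ i : Fin N, ((i : ℕ).factorial : ℝ)) * (Matrix.of fun i j => Real.exp (a i * b j)).det := by
  have h := HCsum (Phi m (Matrix.diagonal (fun i => (b i : ℂ)))) (Phi_inv m _) (Phi_one m _) (fun i => (a i : ℂ)) (fun i => (b i : ℂ))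
    (Phi_tr m _) (Phi_perm m _) _ (Phi_sum m _ _)
  rw [sphInt_eq hN] at h
  apply Complex.ofReal_injective
  push_cast
  have e1 : ∀ a : Fin N → ℝ, (((Matrix.vandermonde a).det : ℝ) : ℂ) = (Matrix.vandermonde (fun i => (a i : ℂ))).det := by
    intro a
    have := RingHom.map_det Complex.ofRealHom (Matrix.vandermonde a)
    refine this.trans ?_
    congr 1
    ext i j
    simp [Matrix.vandermonde]
  have e2 : (((Matrix.of fun i j => Real.exp (a i * b j)).det : ℝ) : ℂ) = (Matrix.of fun i j => Complex.exp (a i * b j)).det := by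
    have := RingHom.map_det Complex.ofRealHom (Matrix.of fun i j => Real.exp (a i * b j))
    refine this.trans ?_
    congr 1
    ext i j
    simp
  rw [e1, e1, e2]
  exact_mod_cast h

end HC

end

end

section

set_option linter.unusedSimpArgs false

noncomputable section
namespace HC

def exL {k : ℕ} (lam : Fin k → ℕ) (n : ℕ) : ℕ := if h : n < k then lam ⟨n, h⟩ else 0

lemma exL_coe {k : ℕ} (lam : Fin k → ℕ) (i : Fin k) : exL lam i = lam i := by simp [exL]
lemma exL_ge {k : ℕ} (lam : Fin k → ℕ) {n : ℕ} (h : k ≤ n) : exL lam n = 0 := by simp [exL, Nat.not_lt.mpr h]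

lemma exL_anti {k : ℕ} {lam : Fin k → ℕ} (h : Antitone lam) : Antitone (exL lam) := by
  intro a b hab
  by_cases hb : b < k
  · have ha : a < k := by omega
    simp only [exL, ha, hb, dif_pos]
    exact h hab
  · simp [exL, hb]

structure IsT (k : ℕ) (L : ℕ → ℕ) (f : ℕ → ℕ → ℕ) : Prop where
  lt : ∀ i j, j < L i → f i j < k
  row : ∀ i j1 j2, j1 ≤ j2 → j2 < L i → f i j1 ≤ f i j2
  col : ∀ i1 i2, i1 < i2 → ∀ j, j < L i2 → f i1 j < f i2 j
  out : ∀ i j, L i ≤ j → f i j = 0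

def extT (k : ℕ) (L M : ℕ → ℕ) (g : ℕ → ℕ → ℕ) : ℕ → ℕ → ℕ := fun i j =>
  if j < M i then g i j else if j < L i then k else 0

lemma extT_isT {k : ℕ} {L M : ℕ → ℕ} {g : ℕ → ℕ → ℕ} (hL : Antitone L) (h1 : ∀ i, M i ≤ L i) (h2 : ∀ i, L (i + 1) ≤ M i)
    (hg : IsT k M g) : IsT (k + 1) L (extT k L M g) := by
  refine ⟨fun i j hj => ?_, fun i j1 j2 h12 hj => ?_, fun i1 i2 hi j hj => ?_, fun i j hj => ?_⟩
  · simp only [extT, hj, if_true]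
    split_ifs with h
    · have := hg.lt i j h; omega
    · omega
  · have hj1 : j1 < L i := by omega
    simp only [extT, hj, hj1, if_true]
    by_cases hb : j2 < M i
    · have ha : j1 < M i := by omega
      simp only [ha, hb, if_true]
      exact hg.row i j1 j2 h12 hb
    · simp only [hb, if_false]
      split_ifs with ha
      · exact (hg.lt i j1 ha).le
      · exact le_rfl
  · have hj1 : j < M i1 := lt_of_lt_of_le hj (le_trans (hL (show i1 + 1 ≤ i2 by omega)) (h2 i1))
    simp only [extT, hj1, hj, if_true]
    split_ifs with hb
    · exact hg.col i1 i2 hi j hb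
    · exact hg.lt i1 j hj1
  · have : ¬ j < M i := by have := h1 i; omega
    have h' : ¬ j < L i := by omega
    simp [extT, this, h']

lemma isT_ge {k : ℕ} {L : ℕ → ℕ} {f : ℕ → ℕ → ℕ} (hL : Antitone L) (hf : IsT k L f) (i j : ℕ) (hj : j < L i) :
    i ≤ f i j := by
  induction i with
  | zero => omega
  | succ i ih =>
    have := ih (lt_of_lt_of_le hj (hL (Nat.le_succ i)))
    have := hf.col i (i+1) (Nat.lt_succ_self i) j hj
    omega

lemma exists_cut (p : ℕ → Prop) (n : ℕ) (hp : ∀ a b, a ≤ b → b < n → p b → p a) :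
    ∃ m, m ≤ n ∧ ∀ j, j < n → (p j ↔ j < m) := by
  induction n with
  | zero => exact ⟨0, le_rfl, fun j hj => by omega⟩
  | succ n ih =>
    obtain ⟨m, hm, h⟩ := ih (fun a b hab hb => hp a b hab (by omega))
    by_cases hn : p n
    · refine ⟨n + 1, le_rfl, fun j hj => ⟨fun _ => hj, fun _ => hp j n (by omega) (by omega) hn⟩⟩
    · refine ⟨m, by omega, fun j hj => ?_⟩
      rcases Nat.lt_succ_iff_lt_or_eq.mp hj with h' | rfl
      · exact h j h'
      · exact ⟨fun h => absurd h hn, fun h => by omega⟩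

lemma isT_split {k : ℕ} {L : ℕ → ℕ} {f : ℕ → ℕ → ℕ} (hL : Antitone L) (hL0 : ∀ i, k < i → L i = 0)
    (hf : IsT (k + 1) L f) :
    ∃ M : ℕ → ℕ, ∃ g, (∀ i, M i ≤ L i) ∧ (∀ i, L (i + 1) ≤ M i) ∧ (∀ i, k ≤ i → M i = 0) ∧ IsT k M g ∧
      extT k L M g = f := by
  have h := fun i => exists_cut (fun j => f i j < k) (L i)
    (fun a b hab hb hfb => lt_of_le_of_lt (hf.row i a b hab hb) hfb)
  choose M hM1 hM2 using h
  have hI : ∀ i, L (i + 1) ≤ M i := by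
    intro i
    by_contra hcon
    push Not at hcon
    have ha := hf.col i (i+1) (Nat.lt_succ_self i) (M i) hcon
    have hb := hf.lt (i+1) (M i) hcon
    have hc := (hM2 i (M i) (lt_of_lt_of_le hcon (hL (Nat.le_succ i)))).mp (by omega)
    omega
  refine ⟨M, fun i j => if j < M i then f i j else 0, hM1, hI, ?_, ?_, ?_⟩
  · intro i hi
    by_contra h0
    have hpos : 0 < L i := by have := hM1 i; omega
    have h1 := (hM2 i 0 hpos).mpr (by omega)
    have h2 := isT_ge hL hf i 0 hpos
    omega
  · refine ⟨fun i j hj => ?_, fun i j1 j2 h12 hj => ?_, fun i1 i2 hi j hj => ?_, fun i j hj => ?_⟩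
    · simp only [hj, if_true]
      exact (hM2 i j (lt_of_lt_of_le hj (hM1 i))).mpr hj
    · have hj1 : j1 < M i := by omega
      simp only [hj, hj1, if_true]
      exact hf.row i j1 j2 h12 (lt_of_lt_of_le hj (hM1 i))
    · have hjL := lt_of_lt_of_le hj (hM1 i2)
      have hj1 : j < M i1 := lt_of_lt_of_le hjL (le_trans (hL (show i1 + 1 ≤ i2 by omega)) (hI i1))
      simp only [hj, hj1, if_true]
      exact hf.col i1 i2 hi j hjL
    · simp [Nat.not_lt.mpr hj]
  · funext i j
    simp only [extT]
    split_ifs with h1 h2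
    · rfl
    · have ha := hf.lt i j h2
      have hb := (hM2 i j h2).not.mpr h1
      omega
    · exact (hf.out i j (by omega)).symm

open Classical in
def TT : (k : ℕ) → (Fin k → ℕ) → Finset (ℕ → ℕ → ℕ)
  | 0, _ => {fun _ _ => 0}
  | k + 1, lam => ((Fintype.piFinset (fun i : Fin k => Finset.Icc (lam i.succ) (lam i.castSucc))).sigma
      (fun μ => TT k μ)).image (fun p => extT k (exL lam) (exL p.1) p.2)

lemma inter_props {k : ℕ} {lam : Fin (k + 1) → ℕ} (hl : Antitone lam) {μ : Fin k → ℕ}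
    (hμ : μ ∈ Fintype.piFinset (fun i : Fin k => Finset.Icc (lam i.succ) (lam i.castSucc))) :
    Antitone μ ∧ (∀ i, exL μ i ≤ exL lam i) ∧ (∀ i, exL lam (i + 1) ≤ exL μ i) := by
  simp only [Fintype.mem_piFinset, Finset.mem_Icc] at hμ
  have h1 : ∀ i, exL μ i ≤ exL lam i := by
    intro i
    by_cases hi : i < k
    · have := (hμ ⟨i, hi⟩).2
      simpa [exL, hi, Nat.lt_succ_of_lt hi] using this
    · simp [exL, hi]
  have h2 : ∀ i, exL lam (i + 1) ≤ exL μ i := by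
    intro i
    by_cases hi : i < k
    · have := (hμ ⟨i, hi⟩).1
      simpa [exL, hi] using this
    · simp [exL, hi]
  refine ⟨?_, h1, h2⟩
  intro a b hab
  rcases eq_or_lt_of_le hab with rfl | hlt
  · exact le_rfl
  · rw [← exL_coe μ a, ← exL_coe μ b]
    exact (h1 b).trans ((exL_anti hl (show (a : ℕ) + 1 ≤ b from hlt)).trans (h2 a))

lemma mem_TT {k : ℕ} {lam : Fin k → ℕ} (hl : Antitone lam) (f : ℕ → ℕ → ℕ) :
    f ∈ TT k lam ↔ IsT k (exL lam) f := by
  classical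
  induction k generalizing f with
  | zero =>
    have h0 : ∀ i, exL lam i = 0 := fun i => exL_ge lam (Nat.zero_le i)
    rw [TT, Finset.mem_singleton]
    constructor
    · rintro rfl
      exact ⟨fun i j hj => by rw [h0] at hj; omega, fun i j1 j2 _ hj => le_rfl, fun i1 i2 _ j hj => by rw [h0] at hj; omega, fun _ _ _ => rfl⟩
    · intro h
      funext i j
      exact h.out i j (by rw [h0]; omega)
  | succ k ih =>
    rw [TT, Finset.mem_image]
    constructor
    · rintro ⟨⟨μ, g⟩, hp, rfl⟩
      rw [Finset.mem_sigma] at hp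
      obtain ⟨ha, h1, h2⟩ := inter_props hl hp.1
      exact extT_isT (exL_anti hl) h1 h2 ((ih ha g).mp hp.2)
    · intro hf
      obtain ⟨M, g, h1, h2, h3, h4, h5⟩ := isT_split (exL_anti hl) (fun i hi => exL_ge lam hi) hf
      let μ : Fin k → ℕ := fun i => M i
      have hμM : exL μ = M := by
        funext i
        by_cases hi : i < k
        · simp [exL, hi, μ]
        · rw [exL_ge _ (by omega), h3 i (by omega)]
      have hμ : μ ∈ Fintype.piFinset (fun i : Fin k => Finset.Icc (lam i.succ) (lam i.castSucc)) := by
        simp only [Fintype.mem_piFinset, Finset.mem_Icc]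
        intro i
        have e1 := h1 i
        have e2 := h2 i
        rw [← exL_coe lam i.succ, ← exL_coe lam i.castSucc]
        exact ⟨e2, e1⟩
      refine ⟨⟨μ, g⟩, Finset.mem_sigma.mpr ⟨hμ, (ih (inter_props hl hμ).1 g).mpr (by simpa [hμM] using h4)⟩, ?_⟩
      simpa [hμM] using h5

def wt (k : ℕ) (L : ℕ → ℕ) (x : ℕ → ℝ) (f : ℕ → ℕ → ℕ) : ℝ :=
  ∏ i ∈ Finset.range k, ∏ j ∈ Finset.range (L i), x (f i j)

lemma wt_ext (k : ℕ) (L M : ℕ → ℕ) (x : ℕ → ℝ) (g : ℕ → ℕ → ℕ) (h1 : ∀ i, M i ≤ L i) (hk : M k = 0) :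
    wt (k + 1) L x (extT k L M g) = wt k M x g * ∏ i ∈ Finset.range (k + 1), x k ^ (L i - M i) := by
  have e : ∀ i, ∏ j ∈ Finset.range (L i), x (extT k L M g i j) = (∏ j ∈ Finset.range (M i), x (g i j)) * x k ^ (L i - M i) := by
    intro i
    rw [← Finset.prod_range_mul_prod_Ico _ (h1 i)]
    congr 1
    · refine Finset.prod_congr rfl fun j hj => ?_
      simp [extT, Finset.mem_range.mp hj]
    · rw [← Nat.card_Ico, ← Finset.prod_const]
      refine Finset.prod_congr rfl fun j hj => ?_
      have := Finset.mem_Ico.mp hj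
      have h' : ¬ j < M i := by omega
      simp [extT, h', this.2]
  rw [wt, Finset.prod_congr rfl (fun i _ => e i), Finset.prod_mul_distrib, Finset.prod_range_succ, hk]
  simp [wt]

def SSum (k : ℕ) (lam : Fin k → ℕ) (x : ℕ → ℝ) : ℝ := ∑ f ∈ TT k lam, wt k (exL lam) x f

lemma SSum_succ (k : ℕ) (lam : Fin (k + 1) → ℕ) (hl : Antitone lam) (x : ℕ → ℝ) :
    SSum (k + 1) lam x = ∑ μ ∈ Fintype.piFinset (fun i : Fin k => Finset.Icc (lam i.succ) (lam i.castSucc)),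
      SSum k μ x * (x k ^ lam (Fin.last k) * ∏ i : Fin k, x k ^ (lam i.castSucc - μ i)) := by
  classical
  rw [SSum, TT, Finset.sum_image, Finset.sum_sigma]
  · refine Finset.sum_congr rfl fun μ hμ => ?_
    obtain ⟨ha, h1, h2⟩ := inter_props hl hμ
    rw [SSum, Finset.sum_mul]
    refine Finset.sum_congr rfl fun g _ => ?_
    rw [wt_ext k (exL lam) (exL μ) x g h1 (exL_ge μ le_rfl), Finset.prod_range_succ, exL_ge μ le_rfl, Finset.prod_range, mul_comm (∏ i : Fin k, _)]
    have e1 : exL lam k = lam (Fin.last k) := exL_coe lam (Fin.last k)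
    have e2 : ∀ i : Fin k, exL lam i = lam i.castSucc := fun i => exL_coe lam i.castSucc
    simp only [e1, e2, exL_coe, Nat.sub_zero]
  · rintro ⟨μ, g⟩ hp ⟨μ', g'⟩ hp' he
    simp only [Finset.coe_sigma, Set.mem_sigma_iff, Finset.mem_coe] at hp hp'
    obtain ⟨ha, h1, h2⟩ := inter_props hl hp.1
    obtain ⟨ha', h1', h2'⟩ := inter_props hl hp'.1
    have hg := (mem_TT ha g).mp hp.2
    have hg' := (mem_TT ha' g').mp hp'.2
    have he' : ∀ i j, extT k (exL lam) (exL μ) g i j = extT k (exL lam) (exL μ') g' i j := fun i j => congrFun (congrFun he i) j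
    have key : ∀ (M M' : ℕ → ℕ) (g g' : ℕ → ℕ → ℕ), (∀ i, M' i ≤ exL lam i) → IsT k M' g' →
        (∀ i j, extT k (exL lam) M g i j = extT k (exL lam) M' g' i j) → ∀ i, M' i ≤ M i := by
      intro M M' g g' h1' hg' he i
      by_contra hcon
      push Not at hcon
      have := he i (M i)
      have hl := lt_of_lt_of_le hcon (h1' i)
      simp only [extT, lt_irrefl, if_false, hcon, if_true, hl] at this
      have h' := hg'.lt i _ hcon
      omega
    have hM : exL μ = exL μ' := funext fun i => le_antisymm
      (key _ _ _ _ h1 hg (fun i j => (he' i j).symm) i) (key _ _ _ _ h1' hg' he' i)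
    have hμ : μ = μ' := by
      funext i
      rw [← exL_coe μ, ← exL_coe μ', hM]
    subst hμ
    have : g = g' := by
      funext i j
      by_cases hj : j < exL μ i
      · simpa [extT, hj] using he' i j
      · rw [hg.out i j (by omega), hg'.out i j (by omega)]
    rw [this]

def lcol {k : ℕ} (lam : Fin k → ℕ) (j : Fin k) : ℕ := lam j + (k - 1 - (j : ℕ))

def DM (k : ℕ) (lam : Fin k → ℕ) (x : ℕ → ℝ) : Matrix (Fin k) (Fin k) ℝ :=
  Matrix.of fun i j => x i ^ lcol lam j

lemma DM_succ (k : ℕ) (lam : Fin (k + 1) → ℕ) (hl : Antitone lam) (x : ℕ → ℝ) :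
    (DM (k + 1) lam x).det = (∏ i : Fin k, (x i - x k)) *
      ∑ μ ∈ Fintype.piFinset (fun i : Fin k => Finset.Icc (lam i.succ) (lam i.castSucc)),
      (DM k μ x).det * (x k ^ lam (Fin.last k) * ∏ i : Fin k, x k ^ (lam i.castSucc - μ i)) := by
  classical
  set y := x k with hy
  let l : Fin (k + 1) → ℕ := lcol lam
  let c : Fin k → ℝ := fun j => y ^ (l j.castSucc - l j.succ)
  have hll : ∀ j : Fin k, l j.castSucc = l j.succ + (lam j.castSucc - lam j.succ + 1) := by
    intro j
    have h := hl (Fin.castSucc_lt_succ (i := j)).le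
    have := j.2
    simp only [l, lcol, Fin.val_castSucc, Fin.val_succ]
    omega
  let T : Matrix (Fin (k+1)) (Fin (k+1)) ℝ := Matrix.of fun a b =>
    Fin.lastCases (if a = Fin.last k then 1 else 0) (fun j => if a = j.castSucc then 1 else if a = j.succ then - c j else 0) b
  have hT1 : ∀ a (j : Fin k), T a j.castSucc = if a = j.castSucc then 1 else if a = j.succ then - c j else 0 := by
    intro a j; simp [T]
  have hT2 : ∀ a, T a (Fin.last k) = if a = Fin.last k then 1 else 0 := by
    intro a; simp [T]
  have hT : T.det = 1 := by
    rw [Matrix.det_of_lowerTriangular]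
    · refine Finset.prod_eq_one fun i _ => ?_
      induction i using Fin.lastCases with
      | last => rw [hT2]; simp
      | cast j => rw [hT1]; simp
    · intro a b hab
      have hab : a < b := hab
      induction b using Fin.lastCases with
      | last => rw [hT2, if_neg hab.ne]
      | cast j =>
        rw [hT1, if_neg hab.ne, if_neg]
        rintro rfl
        exact absurd hab (not_lt.mpr (Fin.castSucc_lt_succ (i := j)).le)
  have hB1 : ∀ i (j : Fin k), (DM (k+1) lam x * T) i j.castSucc = x i ^ l j.castSucc - c j * x i ^ l j.succ := by
    intro i j
    rw [Matrix.mul_apply]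
    have : ∀ a, DM (k+1) lam x i a * T a j.castSucc = (if a = j.castSucc then x i ^ l a else 0) + (if a = j.succ then - c j * x i ^ l a else 0) := by
      intro a
      rw [hT1]
      by_cases h1 : a = j.castSucc
      · have h2 : a ≠ j.succ := by rw [h1]; exact (Fin.castSucc_lt_succ (i := j)).ne
        simp only [h1, if_true]
        rw [h1] at h2
        simp [h2, DM, l]
      · by_cases h2 : a = j.succ
        · rw [if_neg h1, if_neg h1, if_pos h2, if_pos h2]; simp [DM, l]; ring
        · simp [h1, h2]
    simp only [this, Finset.sum_add_distrib, Finset.sum_ite_eq', Finset.mem_univ, if_true]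
    ring
  have hB2 : ∀ i, (DM (k+1) lam x * T) i (Fin.last k) = x i ^ lam (Fin.last k) := by
    intro i
    rw [Matrix.mul_apply]
    simp only [hT2, mul_ite, mul_one, mul_zero, Finset.sum_ite_eq', Finset.mem_univ, if_true]
    simp [DM, lcol]
  have hrow : ∀ j : Fin k, (DM (k+1) lam x * T) (Fin.last k) j.castSucc = 0 := by
    intro j
    rw [hB1, Fin.val_last, ← hy]
    simp only [c]
    rw [← pow_add, Nat.sub_add_cancel (by rw [hll]; omega), sub_self]
  have hent : ∀ i j : Fin k, (DM (k+1) lam x * T) i.castSucc j.castSucc =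
      (x i - y) * ∑ m ∈ Finset.Icc (lam j.succ) (lam j.castSucc), y ^ (lam j.castSucc - m) * x i ^ (m + (k - 1 - (j : ℕ))) := by
    intro i j
    rw [hB1, Fin.val_castSucc]
    simp only [c]
    rw [hll j, Nat.add_sub_cancel_left, pow_add]
    have h := hl (Fin.castSucc_lt_succ (i := j)).le
    have hg := (Commute.all (x i) y).geom_sum₂_mul (lam j.castSucc - lam j.succ + 1)
    have e : ∑ m ∈ Finset.Icc (lam j.succ) (lam j.castSucc), y ^ (lam j.castSucc - m) * x i ^ (m + (k - 1 - (j : ℕ)))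
       = x i ^ l j.succ * ∑ a ∈ Finset.range (lam j.castSucc - lam j.succ + 1), x i ^ a * y ^ (lam j.castSucc - lam j.succ + 1 - 1 - a) := by
      rw [← Finset.Ico_add_one_right_eq_Icc, Finset.sum_Ico_eq_sum_range, Finset.mul_sum, show lam j.castSucc + 1 - lam j.succ = lam j.castSucc - lam j.succ + 1 by omega]
      refine Finset.sum_congr rfl fun a _ => ?_
      rw [← mul_assoc, ← pow_add, mul_comm]
      have hj := j.2
      congr 2
      · simp only [l, lcol, Fin.val_succ]; omega
      · omega
    rw [e]
    linear_combination (- x i ^ l j.succ) * hg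
  have hdet : (DM (k + 1) lam x).det = (DM (k+1) lam x * T).det := by rw [Matrix.det_mul, hT, mul_one]
  rw [hdet, Matrix.det_succ_row _ (Fin.last k), Fin.sum_univ_castSucc, Finset.sum_eq_zero, zero_add]
  swap
  · intro j _; rw [hrow]; simp
  rw [hB2, Fin.val_last, ← hy, ← two_mul, pow_mul]
  simp only [even_two, Even.neg_pow, one_pow, one_mul, Fin.succAbove_last]
  have hsub : (DM (k+1) lam x * T).submatrix Fin.castSucc Fin.castSucc =
    Matrix.of fun i j : Fin k => (x i - y) * (Matrix.of fun i j : Fin k => ∑ m ∈ Finset.Icc (lam j.succ) (lam j.castSucc), y ^ (lam j.castSucc - m) * x i ^ (m + (k - 1 - (j : ℕ)))) i j := by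
    ext i j
    rw [Matrix.submatrix_apply, hent]; rfl
  rw [hsub, Matrix.det_mul_column, ← Matrix.det_transpose]
  have hml := MultilinearMap.map_sum_finset (Matrix.detRowAlternating (n := Fin k) (R := ℝ)).toMultilinearMap
    (fun (j : Fin k) (m : ℕ) => (fun i : Fin k => y ^ (lam j.castSucc - m) * x i ^ (m + (k - 1 - (j : ℕ)))))
    (fun j => Finset.Icc (lam j.succ) (lam j.castSucc))
  have hml2 : ((Matrix.of fun i j : Fin k => ∑ m ∈ Finset.Icc (lam j.succ) (lam j.castSucc), y ^ (lam j.castSucc - m) * x i ^ (m + (k - 1 - (j : ℕ)))).transpose).det =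
     ∑ μ ∈ Fintype.piFinset (fun i : Fin k => Finset.Icc (lam i.succ) (lam i.castSucc)),
       (Matrix.of fun j i : Fin k => y ^ (lam j.castSucc - μ j) * x i ^ (μ j + (k - 1 - (j : ℕ)))).det := by
    refine Eq.trans ?_ hml
    change Matrix.det _ = Matrix.det _
    congr 1
    ext j i
    simp [Matrix.transpose_apply, Finset.sum_apply]
  rw [hml2, mul_left_comm, Finset.mul_sum]
  congr 1
  refine Finset.sum_congr rfl fun μ _ => ?_
  have := Matrix.det_mul_column (fun j : Fin k => y ^ (lam j.castSucc - μ j)) ((DM k μ x).transpose)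
  have e : (Matrix.of fun j i : Fin k => y ^ (lam j.castSucc - μ j) * x i ^ (μ j + (k - 1 - (j : ℕ)))) =
    (Matrix.of fun j i : Fin k => y ^ (lam j.castSucc - μ j) * (DM k μ x).transpose j i) := by
    ext j i
    simp [DM, lcol]
  rw [e, this, Matrix.det_transpose]
  ring

def VN (k : ℕ) (x : ℕ → ℝ) : ℝ := ∏ i : Fin k, ∏ j ∈ Finset.Ioi i, (x i - x j)

lemma VN_succ (k : ℕ) (x : ℕ → ℝ) : VN (k + 1) x = VN k x * ∏ i : Fin k, (x i - x k) := by
  rw [VN, Fin.prod_univ_castSucc, VN, ← Finset.prod_mul_distrib]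
  have h0 : Finset.Ioi (Fin.last k) = ∅ := by
    ext a; simp [Fin.le_last]
  rw [h0, Finset.prod_empty, mul_one]
  refine Finset.prod_congr rfl fun i _ => ?_
  have e : ∀ (n : ℕ) (i : Fin n) (f : Fin n → ℝ), ∏ j ∈ Finset.Ioi i, f j = ∏ j, if i < j then f j else 1 := by
    intro n i f
    rw [← Finset.prod_filter]
    congr 1
    ext a; simp
  rw [e, e, Fin.prod_univ_castSucc]
  simp [Fin.castSucc_lt_last]

theorem SSum_bialt (k : ℕ) (lam : Fin k → ℕ) (hl : Antitone lam) (x : ℕ → ℝ) :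
    SSum k lam x * VN k x = (DM k lam x).det := by
  induction k with
  | zero => simp [SSum, TT, VN, wt]
  | succ k ih =>
    rw [SSum_succ k lam hl, DM_succ k lam hl, VN_succ, ← mul_assoc, mul_comm, Finset.sum_mul]
    congr 1
    refine Finset.sum_congr rfl fun μ hμ => ?_
    rw [← ih μ (inter_props hl hμ).1]
    ring

def toF {N : ℕ} {lam : Fin N → ℕ} (T : SSYT N lam) : ℕ → ℕ → ℕ := fun i j =>
  if h : i < N then (T.entry ⟨i, h⟩ j : ℕ) else 0

lemma toF_coe {N : ℕ} {lam : Fin N → ℕ} (T : SSYT N lam) (i : Fin N) (j : ℕ) : toF T i j = T.entry i j := by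
  simp [toF]

lemma lt_of_exL {N : ℕ} {lam : Fin N → ℕ} {i j : ℕ} (h : j < exL lam i) : i < N := by
  by_contra hc
  rw [exL_ge lam (by omega)] at h
  omega

lemma toF_isT {N : ℕ} {lam : Fin N → ℕ} (hl : Antitone lam) (T : SSYT N lam) : IsT N (exL lam) (toF T) := by
  refine ⟨fun i j hj => ?_, fun i j1 j2 h12 hj => ?_, fun i1 i2 hi j hj => ?_, fun i j hj => ?_⟩
  · have hi := lt_of_exL hj
    simp [toF, hi]
  · have hi := lt_of_exL hj
    simp only [toF, hi, dif_pos]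
    exact T.rowWeak ⟨i, hi⟩ j1 j2 h12 (by simpa [exL, hi] using hj)
  · have hi2 := lt_of_exL hj
    have hi1 : i1 < N := by omega
    simp only [toF, hi1, hi2, dif_pos]
    exact T.colStrict ⟨i1, hi1⟩ ⟨i2, hi2⟩ hi j (by simpa [exL, hi2] using hj)
  · by_cases hi : i < N
    · simp only [toF, hi, dif_pos]
      exact T.zeroOutside ⟨i, hi⟩ j (by simpa [exL, hi] using hj)
    · simp [toF, hi]

lemma SSYT_ext {N : ℕ} {lam : Fin N → ℕ} {S T : SSYT N lam} (h : S.entry = T.entry) : S = T := by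
  cases S; cases T; cases h; rfl

def eqv {N : ℕ} {lam : Fin N → ℕ} (hl : Antitone lam) : SSYT N lam ≃ ↥(TT N lam) :=
  Equiv.ofBijective (fun T => ⟨toF T, (mem_TT hl _).mpr (toF_isT hl T)⟩) (by
    constructor
    · intro S T h
      have h := congrArg Subtype.val h
      apply SSYT_ext
      funext i j
      apply Fin.ext
      rw [← toF_coe, ← toF_coe]
      exact congrFun (congrFun h i) j
    · rintro ⟨f, hf⟩
      have hf' := (mem_TT hl f).mp hf
      have hlt : ∀ (i : Fin N) j, f i j < N := by
        intro i j
        by_cases hj : j < exL lam i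
        · exact hf'.lt i j hj
        · rw [hf'.out i j (by omega)]
          have := i.2
          omega
      refine ⟨⟨fun i j => ⟨f i j, hlt i j⟩, fun i j1 j2 h12 hj => ?_, fun i1 i2 hi j hj => ?_, fun i j hj => ?_⟩, ?_⟩
      · exact hf'.row i j1 j2 h12 (by rwa [exL_coe])
      · exact hf'.col i1 i2 hi j (by rwa [exL_coe])
      · exact hf'.out i j (by rwa [exL_coe])
      · apply Subtype.ext
        funext i j
        by_cases hi : i < N
        · simp [toF, hi]
        · simp only [toF, hi, dif_neg, not_false_eq_true]
          exact (hf'.out i j (by rw [exL_ge lam (by omega)]; omega)).symm)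

def exX {N : ℕ} (x : Fin N → ℝ) (n : ℕ) : ℝ := if h : n < N then x ⟨n, h⟩ else 0

lemma exX_coe {N : ℕ} (x : Fin N → ℝ) (i : Fin N) : exX x i = x i := by simp [exX]

lemma wt_content {N : ℕ} {lam : Fin N → ℕ} (T : SSYT N lam) (x : Fin N → ℝ) :
    ∏ k : Fin N, x k ^ T.content k = wt N (exL lam) (exX x) (toF T) := by
  rw [wt, Finset.prod_range]
  simp only [exL_coe, toF_coe, exX_coe, SSYT.content]
  simp only [← Finset.prod_pow_eq_pow_sum]
  rw [Finset.prod_comm]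
  refine Finset.prod_congr rfl fun i _ => ?_
  rw [← Finset.prod_fiberwise (Finset.range (lam i)) (fun j => T.entry i j)]
  refine Finset.prod_congr rfl fun k _ => ?_
  rw [← Finset.prod_const]
  refine Finset.prod_congr rfl fun j hj => ?_
  rw [(Finset.mem_filter.mp hj).2]

theorem schur_bialt {N : ℕ} {lam : Fin N → ℕ} (hl : Antitone lam) (x : Fin N → ℝ) :
    schur N lam x * (∏ i : Fin N, ∏ j ∈ Finset.Ioi i, (x i - x j)) =
      (Matrix.of fun i j : Fin N => x i ^ (lam j + (N - 1 - (j : ℕ)))).det := by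
  have h := SSum_bialt N lam hl (exX x)
  have e1 : schur N lam x = SSum N lam (exX x) := by
    rw [schur, SSum, ← Finset.tsum_subtype, ← (eqv hl).tsum_eq]
    refine tsum_congr fun T => ?_
    rw [wt_content]
    rfl
  have e2 : VN N (exX x) = ∏ i : Fin N, ∏ j ∈ Finset.Ioi i, (x i - x j) := by
    simp only [VN, exX_coe]
  have e3 : DM N lam (exX x) = Matrix.of fun i j : Fin N => x i ^ (lam j + (N - 1 - (j : ℕ))) := by
    ext i j
    simp [DM, lcol, exX_coe]
  rw [e1, ← e2, h, e3]

end HC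

end

end

section
open MeasureTheory

set_option linter.unusedSimpArgs false

noncomputable section
namespace HC
variable {N : ℕ}

lemma vdm_pair (a b : Fin N → ℝ) :
    (Matrix.vandermonde a).det * (Matrix.vandermonde b).det =
     (∏ i : Fin N, ∏ j ∈ Finset.Ioi i, (a i - a j)) * (∏ i : Fin N, ∏ j ∈ Finset.Ioi i, (b i - b j)) := by
  rw [Matrix.det_vandermonde, Matrix.det_vandermonde, ← Finset.prod_mul_distrib, ← Finset.prod_mul_distrib]
  refine Finset.prod_congr rfl fun i _ => ?_
  rw [← Finset.prod_mul_distrib, ← Finset.prod_mul_distrib]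
  refine Finset.prod_congr rfl fun j _ => ?_
  ring

lemma prod_div_N (f : Fin N → Fin N → ℝ) (c : ℝ) :
    (∏ i : Fin N, ∏ j ∈ Finset.Ioi i, (f i j / c)) =
      (∏ i : Fin N, ∏ j ∈ Finset.Ioi i, f i j) / (∏ i : Fin N, ∏ j ∈ Finset.Ioi i, c) := by
  rw [← Finset.prod_div_distrib]
  refine Finset.prod_congr rfl fun i _ => ?_
  rw [← Finset.prod_div_distrib]

theorem main (hN : 0 < N)
    (m : Measure (Matrix.unitaryGroup (Fin N) ℂ))
    [m.IsHaarMeasure] [IsProbabilityMeasure m] :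
    ∃ cN : ℝ, 0 < cN ∧ ∀ (lam : Fin N → ℕ), Antitone lam → ∀ x : Fin N → ℝ,
      (∀ i, 0 < x i) → Function.Injective x →
      schur N lam x
        = cN * sphInt N m (Matrix.diagonal (fun i => (Real.log (x i) : ℂ)))
            (Matrix.diagonal
              (fun i => ((((lam i + (N - 1 - (i : ℕ)) : ℕ) : ℝ) / N : ℝ) : ℂ)))
          * (∏ i : Fin N, ∏ j ∈ Finset.Ioi i,
              ((((lam i + (N - 1 - (i : ℕ)) : ℕ) : ℝ)
                - ((lam j + (N - 1 - (j : ℕ)) : ℕ) : ℝ)) / N))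
          * (∏ i : Fin N, ∏ j ∈ Finset.Ioi i, (Real.log (x i) - Real.log (x j)))
          / (∏ i : Fin N, ∏ j ∈ Finset.Ioi i, (x i - x j)) := by
  have hNr : (0 : ℝ) < N := by exact_mod_cast hN
  have hP : (0 : ℝ) < ∏ i : Fin N, ∏ j ∈ Finset.Ioi i, (N : ℝ) :=
    Finset.prod_pos fun i _ => Finset.prod_pos fun j _ => hNr
  have hF : (0 : ℝ) < ∏ i : Fin N, ((i : ℕ).factorial : ℝ) :=
    Finset.prod_pos fun i _ => by exact_mod_cast Nat.factorial_pos _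
  refine ⟨(∏ i : Fin N, ∏ j ∈ Finset.Ioi i, (N : ℝ)) / ∏ i : Fin N, ((i : ℕ).factorial : ℝ), div_pos hP hF, ?_⟩
  intro lam hl x hx hinj
  have hV : (∏ i : Fin N, ∏ j ∈ Finset.Ioi i, (x i - x j)) ≠ 0 := by
    refine Finset.prod_ne_zero_iff.2 fun i _ => Finset.prod_ne_zero_iff.2 fun j hj => ?_
    rw [sub_ne_zero]
    intro h
    exact (Finset.mem_Ioi.1 hj).ne (hinj h)
  rw [eq_div_iff hV, schur_bialt hl]
  have h := HCIZ hN m (fun i : Fin N => ((lam i + (N - 1 - (i : ℕ)) : ℕ) : ℝ)) (fun i => Real.log (x i))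
  rw [mul_assoc, vdm_pair] at h
  have hd : (Matrix.of fun i j : Fin N => Real.exp (((lam i + (N - 1 - (i : ℕ)) : ℕ) : ℝ) * Real.log (x j))).det =
      (Matrix.of fun i j : Fin N => x i ^ (lam j + (N - 1 - (j : ℕ)))).det := by
    rw [← Matrix.det_transpose]
    congr 1
    ext i j
    simp only [Matrix.transpose_apply, Matrix.of_apply]
    rw [Real.exp_nat_mul, Real.exp_log (hx i)]
  rw [hd] at h
  rw [prod_div_N]
  field_simp
  rw [mul_comm, ← h]
  ring

end HC

end

end

/-- **Schur polynomials as spherical integrals.** For every `N` there is a constant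
`c_N > 0` such that for every Young diagram `λ` with at most `N` rows (with
`l_i = λ_i + N - i`) and all pairwise distinct positive reals `m_1, …, m_N`,
`s_λ(m) = c_N · I_N(diag (log m), diag (l/N)) · ∏_{i<j} ((l_i - l_j)/N)
          · ∏_{i<j} (log m_i - log m_j) / ∏_{i<j} (m_i - m_j)`. -/
theorem schur_as_spherical_integral (N : ℕ) (hN : 0 < N)
    (m : Measure (Matrix.unitaryGroup (Fin N) ℂ))
    [m.IsHaarMeasure] [IsProbabilityMeasure m] :
    ∃ cN : ℝ, 0 < cN ∧ ∀ (lam : Fin N → ℕ), Antitone lam → ∀ x : Fin N → ℝ,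
      (∀ i, 0 < x i) → Function.Injective x →
      schur N lam x
        = cN * sphInt N m (Matrix.diagonal (fun i => (Real.log (x i) : ℂ)))
            (Matrix.diagonal
              (fun i => ((((lam i + (N - 1 - (i : ℕ)) : ℕ) : ℝ) / N : ℝ) : ℂ)))
          * (∏ i : Fin N, ∏ j ∈ Finset.Ioi i,
              ((((lam i + (N - 1 - (i : ℕ)) : ℕ) : ℝ)
                - ((lam j + (N - 1 - (j : ℕ)) : ℕ) : ℝ)) / N))
          * (∏ i : Fin N, ∏ j ∈ Finset.Ioi i, (Real.log (x i) - Real.log (x j)))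
          / (∏ i : Fin N, ∏ j ∈ Finset.Ioi i, (x i - x j)) := by
  exact HC.main hN m
end

section
/- Character expansion of the partition function: let N be a positive integer, A_N and B_N positive semidefinite N×N Hermitian matrices with operator norm at most 1, and Φ : ℝ → ℝ a continuous function with 0 ≤ Φ(x) for all x and sup_x Φ(x) < 1. Let dM denote an additive Haar (Lebesgue) measure on the real vector space of N×N Hermitian matrices, and let X be any Borel set of probability measures on ℝ. Then ∫_{{M : μ̂^N_M ∈ X}} exp(−(N/2)·tr(M²)) · det(I_{N²} − B_N ⊗ (Φ(M)A_N))^{−1} dM = Σ_λ s_λ(B_N) · ∫_{{M : μ̂^N_M ∈ X}} exp(−(N/2)·tr(M²)) · s_λ(Φ(M)A_N) dM, where the sum runs over all Young diagrams λ with at most N rows and both sides are finite. -/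
open MeasureTheory ComplexOrder

/-- A self-adjoint complex matrix is Hermitian. -/
theorem selfAdjoint_matrix_isHermitian {N : ℕ}
    (M : selfAdjoint (Matrix (Fin N) (Fin N) ℂ)) :
    (M : Matrix (Fin N) (Fin N) ℂ).IsHermitian := M.2

/-- The spectral (empirical eigenvalue) measure `μ̂^N_M = (1/N) ∑ δ_{x_i}` of a Hermitian
matrix `M` with eigenvalues `x_1, …, x_N`. -/
noncomputable def specMeasure {N : ℕ} (M : selfAdjoint (Matrix (Fin N) (Fin N) ℂ)) :
    Measure ℝ :=
  (N : ENNReal)⁻¹ • ∑ i : Fin N,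
    Measure.dirac ((selfAdjoint_matrix_isHermitian M).eigenvalues i)

/-- Continuous functional calculus for a Hermitian matrix:
`Φ(M) = U diag (Φ(x_1), …, Φ(x_N)) U⋆` for `M = U diag (x_1, …, x_N) U⋆`. -/
noncomputable def applyFun {N : ℕ} (Φ : ℝ → ℝ)
    (M : selfAdjoint (Matrix (Fin N) (Fin N) ℂ)) : Matrix (Fin N) (Fin N) ℂ :=
  ((selfAdjoint_matrix_isHermitian M).eigenvectorUnitary : Matrix (Fin N) (Fin N) ℂ) *
    Matrix.diagonal
      (fun i => ((Φ ((selfAdjoint_matrix_isHermitian M).eigenvalues i) : ℝ) : ℂ)) *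
    star ((selfAdjoint_matrix_isHermitian M).eigenvectorUnitary : Matrix (Fin N) (Fin N) ℂ)

/-- The Schur polynomial of an `N × N` complex matrix: `s_λ(C)` is `s_λ` evaluated at the
`N` eigenvalues of `C` (the roots, with multiplicity, of its characteristic polynomial). -/
noncomputable def schurMat (N : ℕ) (lam : Fin N → ℕ) (C : Matrix (Fin N) (Fin N) ℂ) : ℂ :=
  schur N lam (fun i => C.charpoly.roots.toList.getD (i : ℕ) 0)

open scoped ENNReal

/-- Integer partitions. -/
@[ext] structure CEP where
  f : ℕ → ℕ
  anti : Antitone f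
  fin : ∃ M, ∀ i, M ≤ i → f i = 0

namespace CEP

noncomputable def size (a : CEP) : ℕ := ∑ᶠ i, a.f i

theorem size_eq (a : CEP) (M : ℕ) (h : ∀ i, M ≤ i → a.f i = 0) :
    a.size = ∑ i ∈ Finset.range M, a.f i := by
  apply finsum_eq_sum_of_support_subset
  intro i hi
  simp only [Function.mem_support] at hi
  simp only [Finset.coe_range, Set.mem_Iio]
  by_contra hc
  exact hi (h i (by omega))

def zero : CEP := ⟨fun _ => 0, fun _ _ _ => le_rfl, 0, fun _ _ => rfl⟩

def HS (l m : CEP) : Prop := ∀ i, l.f (i+1) ≤ m.f i ∧ m.f i ≤ l.f i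

theorem HS.size_le {l m : CEP} (h : HS l m) : m.size ≤ l.size := by
  obtain ⟨M, hM⟩ := l.fin
  rw [l.size_eq M hM, m.size_eq M (fun i hi => by have := (h i).2; have := hM i hi; omega)]
  exact Finset.sum_le_sum fun i _ => (h i).2

open Classical in
noncomputable def w (x : ℝ≥0∞) (l m : CEP) : ℝ≥0∞ := if HS l m then x ^ (l.size - m.size) else 0

theorem w_of {x : ℝ≥0∞} {l m : CEP} (h : HS l m) : w x l m = x ^ (l.size - m.size) := if_pos h
theorem w_not {x : ℝ≥0∞} {l m : CEP} (h : ¬ HS l m) : w x l m = 0 := if_neg h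

/-- the growth rule, forward -/
def up (l m k : CEP) (hl : HS l k) (hm : HS m k) (c : ℕ) : CEP where
  f := fun i => match i with
    | 0 => max (l.f 0) (m.f 0) + c
    | i+1 => max (l.f (i+1)) (m.f (i+1)) + min (l.f i) (m.f i) - k.f i
  anti := by
    apply antitone_nat_of_succ_le
    intro i
    have h1 := hl i
    have h2 := hm i
    cases i with
    | zero => simp only; omega
    | succ i =>
      have h3 := hl (i)
      have h4 := hm (i)
      simp only; omega
  fin := by
    obtain ⟨M, hM⟩ := l.fin
    obtain ⟨M', hM'⟩ := m.fin
    refine ⟨M + M' + 1, fun i hi => ?_⟩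
    obtain ⟨i, rfl⟩ : ∃ j, i = j + 1 := ⟨i-1, by omega⟩
    have := hM i (by omega)
    have := hM (i+1) (by omega)
    have := hM' i (by omega)
    have := hM' (i+1) (by omega)
    simp only; omega

def down (l m n : CEP) (hl : HS n l) (hm : HS n m) : CEP where
  f := fun i => max (l.f (i+1)) (m.f (i+1)) + min (l.f i) (m.f i) - n.f (i+1)
  anti := by
    apply antitone_nat_of_succ_le
    intro i
    have h1 := hl i
    have h2 := hm i
    have h1 := hl (i+1)
    have h2 := hm (i+1)
    have h1 := hl (i+1+1)
    have h2 := hm (i+1+1)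
    omega
  fin := by
    obtain ⟨M, hM⟩ := l.fin
    obtain ⟨M', hM'⟩ := m.fin
    refine ⟨M + M' + 1, fun i hi => ?_⟩
    have := hM i (by omega)
    have := hM (i+1) (by omega)
    have := hM' i (by omega)
    have := hM' (i+1) (by omega)
    omega

def growth (l m : CEP) : {n : CEP // HS n l ∧ HS n m} ≃ ℕ × {k : CEP // HS l k ∧ HS m k} where
  toFun n := ⟨n.1.f 0 - max (l.f 0) (m.f 0), down l m n.1 n.2.1 n.2.2, by
    constructor <;>
    · intro i
      have h1 := n.2.1 i
      have h2 := n.2.2 i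
      have h1 := n.2.1 (i+1)
      have h2 := n.2.2 (i+1)
      simp only [down]; omega⟩
  invFun p := ⟨up l m p.2.1 p.2.2.1 p.2.2.2 p.1, by
    constructor <;>
    · intro i
      have h1 := p.2.2.1 i
      have h2 := p.2.2.2 i
      cases i with
      | zero => simp only [up]; omega
      | succ i =>
        have h3 := p.2.2.1 i
        have h4 := p.2.2.2 i
        simp only [up]; omega⟩
  left_inv n := by
    apply Subtype.ext
    ext i
    cases i with
    | zero =>
        have h3 := n.2.1 0
        have h4 := n.2.2 0
        simp only [up]; omega
    | succ i =>
        have h3 := n.2.1 i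
        have h4 := n.2.2 i
        have h3 := n.2.1 (i+1)
        have h4 := n.2.2 (i+1)
        simp only [up, down]; omega
  right_inv p := by
    refine Prod.ext ?_ (Subtype.ext ?_)
    · simp only [up]; omega
    · ext i
      have h3 := p.2.2.1 i
      have h4 := p.2.2.2 i
      simp only [up, down]; omega

theorem growth_size (l m : CEP) (n : {n : CEP // HS n l ∧ HS n m}) :
    n.1.size + (growth l m n).2.1.size = l.size + m.size + (growth l m n).1 := by
  obtain ⟨M, hM⟩ := n.1.fin
  have hn := n.2
  have hlM : ∀ i, M ≤ i → l.f i = 0 := fun i hi => by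
    have := hM i hi; have := hn.1 i; omega
  have hmM : ∀ i, M ≤ i → m.f i = 0 := fun i hi => by
    have := hM i hi; have := hn.2 i; omega
  rw [n.1.size_eq (M+1) (fun i hi => hM i (by omega)), l.size_eq (M+1) (fun i hi => hlM i (by omega)), m.size_eq (M+1) (fun i hi => hmM i (by omega)),
    (growth l m n).2.1.size_eq M (fun i hi => by
      have := hlM i hi; have := (growth l m n).2.2.1 i; omega),
    Finset.sum_range_succ', Finset.sum_range_succ' l.f, Finset.sum_range_succ' m.f]
  have key : ∑ k ∈ Finset.range M, n.1.f (k + 1) + ∑ i ∈ Finset.range M, (growth l m n).2.1.f i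
     = ∑ k ∈ Finset.range M, (max (l.f (k+1)) (m.f (k+1)) + min (l.f k) (m.f k)) := by
    rw [← Finset.sum_add_distrib]
    apply Finset.sum_congr rfl
    intro i _
    have h3 := hn.1 i
    have h4 := hn.2 i
    have h3 := hn.1 (i+1)
    have h4 := hn.2 (i+1)
    simp only [growth, Equiv.coe_fn_mk, down]; omega
  have k2 : ∑ k ∈ Finset.range M, max (l.f (k+1)) (m.f (k+1)) + max (l.f 0) (m.f 0) =
      ∑ k ∈ Finset.range M, max (l.f k) (m.f k) := by
    rw [← Finset.sum_range_succ' (fun k => max (l.f k) (m.f k)), Finset.sum_range_succ, hlM M le_rfl, hmM M le_rfl]; simp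
  have k3 : ∑ k ∈ Finset.range M, max (l.f k) (m.f k) + ∑ k ∈ Finset.range M, min (l.f k) (m.f k)
     = ∑ k ∈ Finset.range M, l.f k + ∑ k ∈ Finset.range M, m.f k := by
    rw [← Finset.sum_add_distrib, ← Finset.sum_add_distrib]
    exact Finset.sum_congr rfl fun i _ => by omega
  have k4 := Finset.sum_range_succ' l.f M
  have k5 := Finset.sum_range_succ' m.f M
  rw [Finset.sum_range_succ, hlM M le_rfl] at k4
  rw [Finset.sum_range_succ, hmM M le_rfl] at k5
  rw [Finset.sum_add_distrib] at key
  have h0 : (growth l m n).1 = n.1.f 0 - max (l.f 0) (m.f 0) := rfl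
  have h3 := hn.1 0
  have h4 := hn.2 0
  omega

theorem w_comm (x y : ℝ≥0∞) (l m : CEP) :
    ∑' n, w x n l * w y n m = (1 - x * y)⁻¹ * ∑' k, w y l k * w x m k := by
  have h1 : ∑' n, w x n l * w y n m = ∑' n : {n : CEP // HS n l ∧ HS n m}, w x n.1 l * w y n.1 m := by
    refine (tsum_subtype_eq_of_support_subset (s := {n : CEP | HS n l ∧ HS n m}) ?_).symm
    intro n hn
    simp only [Function.mem_support] at hn
    constructor <;>
    · by_contra hc
      exact hn (by simp [w_not hc])
  have h2 : ∑' k, w y l k * w x m k = ∑' k : {k : CEP // HS l k ∧ HS m k}, w y l k.1 * w x m k.1 := by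
    refine (tsum_subtype_eq_of_support_subset (s := {k : CEP | HS l k ∧ HS m k}) ?_).symm
    intro n hn
    simp only [Function.mem_support] at hn
    constructor <;>
    · by_contra hc
      exact hn (by simp [w_not hc])
  rw [h1, h2, ← ENNReal.tsum_geometric, ← ENNReal.tsum_mul_right]
  simp_rw [← ENNReal.tsum_mul_left]
  rw [← ENNReal.tsum_prod (f := fun (c : ℕ) (k : {k : CEP // HS l k ∧ HS m k}) => (x * y)^c * (w y l k.1 * w x m k.1)), ← (growth l m).tsum_eq]
  apply tsum_congr
  intro n
  have hs := growth_size l m n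
  set p := growth l m n
  rw [w_of n.2.1, w_of n.2.2, w_of p.2.2.1, w_of p.2.2.2]
  have a1 := n.2.1.size_le
  have a2 := n.2.2.size_le
  have a3 := p.2.2.1.size_le
  have a4 := p.2.2.2.size_le
  have e1 : n.1.size - l.size = p.1 + (m.size - p.2.1.size) := by omega
  have e2 : n.1.size - m.size = p.1 + (l.size - p.2.1.size) := by omega
  rw [e1, e2, pow_add, pow_add, mul_pow]
  ring

/-- Bender-Knuth toggle -/
def tog (l k m : CEP) (h1 : HS l m) (h2 : HS m k) : CEP where
  f := fun i => match i with
    | 0 => max (l.f (0+1)) (k.f 0) + l.f 0 - m.f 0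
    | i+1 => max (l.f (i+1+1)) (k.f (i+1)) + min (l.f (i+1)) (k.f i) - m.f (i+1)
  anti := by
    apply antitone_nat_of_succ_le
    intro i
    have a1 := h1 i
    have a2 := h2 i
    have a3 := h1 (i+1)
    have a4 := h2 (i+1)
    cases i with
    | zero => simp only; omega
    | succ i =>
      have a1 := h1 i
      have a2 := h2 i
      simp only; omega
  fin := by
    obtain ⟨M, hM⟩ := l.fin
    refine ⟨M + 1, fun i hi => ?_⟩
    obtain ⟨i, rfl⟩ : ∃ j, i = j + 1 := ⟨i-1, by omega⟩
    have := hM i (by omega)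
    have := hM (i+1) (by omega)
    have := hM (i+1+1) (by omega)
    have a1 := h1 i
    have a2 := h2 i
    have a1 := h1 (i+1)
    have a2 := h2 (i+1)
    simp only; omega

def togE (l k : CEP) : {m : CEP // HS l m ∧ HS m k} ≃ {m : CEP // HS l m ∧ HS m k} :=
  have H : ∀ m : {m : CEP // HS l m ∧ HS m k}, HS l (tog l k m.1 m.2.1 m.2.2) ∧ HS (tog l k m.1 m.2.1 m.2.2) k := by
    intro m
    constructor <;>
    · intro i
      have a1 := m.2.1 i
      have a2 := m.2.2 i
      have a3 := m.2.1 (i+1)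
      have a4 := m.2.2 (i+1)
      cases i with
      | zero => simp only [tog]; omega
      | succ i =>
        have a1 := m.2.1 i
        have a2 := m.2.2 i
        simp only [tog]; omega
  have I : ∀ m : {m : CEP // HS l m ∧ HS m k}, (tog l k _ (H m).1 (H m).2) = m.1 := by
    intro m
    ext i
    have a1 := m.2.1 i
    have a2 := m.2.2 i
    have a3 := m.2.1 (i+1)
    have a4 := m.2.2 (i+1)
    cases i with
    | zero => simp only [tog]; omega
    | succ i =>
      have a1 := m.2.1 i
      have a2 := m.2.2 i
      simp only [tog]; omega
  { toFun := fun m => ⟨tog l k m.1 m.2.1 m.2.2, H m⟩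
    invFun := fun m => ⟨tog l k m.1 m.2.1 m.2.2, H m⟩
    left_inv := fun m => Subtype.ext (I m)
    right_inv := fun m => Subtype.ext (I m) }

theorem togE_size (l k : CEP) (m : {m : CEP // HS l m ∧ HS m k}) :
    (togE l k m).1.size + m.1.size = l.size + k.size := by
  obtain ⟨M, hM⟩ := l.fin
  have h1 := m.2.1
  have h2 := m.2.2
  have hmM : ∀ i, M ≤ i → m.1.f i = 0 := fun i hi => by
    have := hM i hi; have := h1 i; omega
  have hkM : ∀ i, M ≤ i → k.f i = 0 := fun i hi => by
    have := hmM i hi; have := h2 i; omega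
  have htM : ∀ i, M ≤ i → (togE l k m).1.f i = 0 := fun i hi => by
    have := hM i hi; have := (togE l k m).2.1 i; omega
  rw [(togE l k m).1.size_eq (M+1) (fun i hi => htM i (by omega)),
    m.1.size_eq (M+1) (fun i hi => hmM i (by omega)),
    l.size_eq (M+1) (fun i hi => hM i (by omega)), k.size_eq M hkM,
    Finset.sum_range_succ', Finset.sum_range_succ' m.1.f, Finset.sum_range_succ' l.f]
  have key : ∑ i ∈ Finset.range M, (togE l k m).1.f (i+1) + ∑ i ∈ Finset.range M, m.1.f (i + 1)
     = ∑ i ∈ Finset.range M, (max (l.f (i+1+1)) (k.f (i+1)) + min (l.f (i+1)) (k.f i)) := by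
    rw [← Finset.sum_add_distrib]
    apply Finset.sum_congr rfl
    intro i _
    have h3 := h1 i
    have h4 := h2 i
    have h3 := h1 (i+1)
    have h4 := h2 (i+1)
    simp only [togE, Equiv.coe_fn_mk, tog]; omega
  have k2 : ∑ i ∈ Finset.range M, max (l.f (i+1+1)) (k.f (i+1)) + max (l.f (0+1)) (k.f 0) =
      ∑ i ∈ Finset.range M, max (l.f (i+1)) (k.f i) := by
    rw [← Finset.sum_range_succ' (fun i => max (l.f (i+1)) (k.f i)), Finset.sum_range_succ, hM (M+1) (by omega), hkM M le_rfl]; simp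
  have k3 : ∑ i ∈ Finset.range M, max (l.f (i+1)) (k.f i) + ∑ i ∈ Finset.range M, min (l.f (i+1)) (k.f i)
     = ∑ i ∈ Finset.range M, l.f (i+1) + ∑ i ∈ Finset.range M, k.f i := by
    rw [← Finset.sum_add_distrib, ← Finset.sum_add_distrib]
    exact Finset.sum_congr rfl fun i _ => by omega
  rw [Finset.sum_add_distrib] at key
  have h0 : (togE l k m).1.f 0 = max (l.f (0+1)) (k.f 0) + l.f 0 - m.1.f 0 := rfl
  have h3 := h1 0
  have h4 := h2 0
  omega

theorem w_swap (x y : ℝ≥0∞) (l k : CEP) :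
    ∑' m, w x l m * w y m k = ∑' m, w y l m * w x m k := by
  have h1 : ∀ x y, ∑' m, w x l m * w y m k = ∑' m : {m : CEP // HS l m ∧ HS m k}, w x l m.1 * w y m.1 k := by
    intro x y
    refine (tsum_subtype_eq_of_support_subset (s := {m : CEP | HS l m ∧ HS m k}) ?_).symm
    intro n hn
    simp only [Function.mem_support] at hn
    constructor <;>
    · by_contra hc
      exact hn (by simp [w_not hc])
  rw [h1, h1, ← (togE l k).tsum_eq]
  apply tsum_congr
  intro m
  have hs := togE_size l k m
  set p := togE l k m
  rw [w_of m.2.1, w_of m.2.2, w_of p.2.1, w_of p.2.2]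
  have a1 := m.2.1.size_le
  have a2 := m.2.2.size_le
  have a3 := p.2.1.size_le
  have a4 := p.2.2.size_le
  have e1 : l.size - p.1.size = m.1.size - k.size := by omega
  have e2 : p.1.size - k.size = l.size - m.1.size := by omega
  rw [e1, e2]
  ring

open Classical in
/-- Schur functions by branching -/
noncomputable def S (x : ℕ → ℝ≥0∞) : ℕ → CEP → ℝ≥0∞
  | 0, l => if l = zero then 1 else 0
  | n+1, l => ∑' m, w (x n) l m * S x n m

theorem S_swap_aux (x y : ℕ → ℝ≥0∞) (n : ℕ) (h : ∀ i < n, x i = y i) (l : CEP) : S x n l = S y n l := by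
  induction n generalizing l with
  | zero => rfl
  | succ n ih =>
    simp only [S]
    rw [h n (by omega)]
    exact tsum_congr fun m => by rw [ih (fun i hi => h i (by omega))]

theorem S_swap (x : ℕ → ℝ≥0∞) (n d : ℕ) (l : CEP) :
    S (x ∘ Equiv.swap n (n+1)) (n + 2 + d) l = S x (n+2+d) l := by
  induction d generalizing l with
  | zero =>
    have hA : ∀ x : ℕ → ℝ≥0∞, S x (n+2) l = ∑' k, (∑' m, w (x (n+1)) l m * w (x n) m k) * S x n k := by
      intro x
      simp only [S]
      simp_rw [← ENNReal.tsum_mul_left, ← ENNReal.tsum_mul_right]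
      rw [ENNReal.tsum_comm]
      simp_rw [mul_assoc]
    rw [add_zero, hA, hA]
    apply tsum_congr
    intro k
    rw [w_swap]
    congr 1
    · simp
    · apply S_swap_aux
      intro i hi
      simp only [Function.comp_apply]
      rw [Equiv.swap_apply_of_ne_of_ne (by omega) (by omega)]
  | succ d ih =>
    rw [← add_assoc]
    simp only [S]
    apply tsum_congr
    intro m
    rw [ih]
    simp only [Function.comp_apply]
    rw [Equiv.swap_apply_of_ne_of_ne (by omega) (by omega)]

theorem HS_zero_left {l : CEP} : HS zero l ↔ l = zero := by
  constructor
  · intro h; ext i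
    have := (h i).2
    simpa [zero] using this
  · rintro rfl i; simp [zero]

theorem S_up (y : ℕ → ℝ≥0∞) (z : ℝ≥0∞) (m : ℕ) (l : CEP) :
    ∑' n, w z n l * S y m n = (∏ j ∈ Finset.range m, (1 - z * y j)⁻¹) * S y m l := by
  induction m generalizing l with
  | zero =>
    simp only [S, Finset.range_zero, Finset.prod_empty, one_mul]
    rw [tsum_eq_single zero]
    · by_cases h : l = zero
      · subst h; simp [w_of (HS_zero_left.2 rfl)]
      · rw [w_not (fun hh => h (HS_zero_left.1 hh))]; simp [h]
    · intro b hb; simp [hb]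
  | succ m ih =>
    simp only [S]
    simp_rw [← ENNReal.tsum_mul_left]
    rw [ENNReal.tsum_comm]
    simp_rw [← mul_assoc, ENNReal.tsum_mul_right, w_comm]
    rw [Finset.prod_range_succ]
    have : ∀ k, (∏ j ∈ Finset.range m, (1 - z * y j)⁻¹) * (1 - z * y m)⁻¹ * w (y m) l k * S y m k
       = (1 - z * y m)⁻¹ * (w (y m) l k * ((∏ j ∈ Finset.range m, (1 - z * y j)⁻¹) * S y m k)) := by
      intro k; ring
    simp_rw [this, ← ih]
    simp_rw [← ENNReal.tsum_mul_left, ← ENNReal.tsum_mul_right]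
    rw [ENNReal.tsum_comm]
    simp_rw [mul_assoc]

theorem S_zero (y : ℕ → ℝ≥0∞) (m : ℕ) : S y m zero = 1 := by
  induction m with
  | zero => simp [S]
  | succ m ih =>
    simp only [S]
    rw [tsum_eq_single zero]
    · rw [ih, w_of (HS_zero_left.2 rfl)]; simp
    · intro b hb
      rw [w_not (fun h => hb (HS_zero_left.1 h)), zero_mul]

theorem cauchy (x y : ℕ → ℝ≥0∞) (n m : ℕ) :
    ∑' l, S x n l * S y m l = ∏ i ∈ Finset.range n, ∏ j ∈ Finset.range m, (1 - x i * y j)⁻¹ := by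
  induction n with
  | zero =>
    simp only [S, Finset.range_zero, Finset.prod_empty]
    rw [tsum_eq_single zero]
    · simp [S_zero]
    · intro b hb; simp [hb]
  | succ n ih =>
    rw [Finset.prod_range_succ, ← ih]
    simp only [S]
    simp_rw [← ENNReal.tsum_mul_right]
    rw [ENNReal.tsum_comm]
    apply tsum_congr
    intro m'
    have : ∀ a, w (x n) a m' * S x n m' * S y m a = S x n m' * (w (x n) a m' * S y m a) := by
      intro a; ring
    simp_rw [this]
    rw [ENNReal.tsum_mul_left, S_up]
    ring

end CEP

namespace CEP

theorem ext_lt {l m : CEP} (h : ∀ i j, j < l.f i ↔ j < m.f i) : l = m := by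
  ext i
  have h1 := h i (l.f i)
  have h2 := h i (m.f i)
  omega

/-- tableaux with entries in {0..n-1} -/
@[ext] structure Tab (n : ℕ) (l : CEP) where
  e : ℕ → ℕ → ℕ
  row : ∀ i j1 j2, j1 ≤ j2 → j2 < l.f i → e i j1 ≤ e i j2
  col : ∀ i1 i2, i1 < i2 → ∀ j, j < l.f i2 → e i1 j < e i2 j
  out : ∀ i j, l.f i ≤ j → e i j = 0
  bd : ∀ i j, j < l.f i → e i j < n

noncomputable def Tab.wt {R : Type*} [CommMonoid R] {n : ℕ} {l : CEP} (x : ℕ → R) (T : Tab n l) : R :=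
  ∏ᶠ i, ∏ j ∈ Finset.range (l.f i), x (T.e i j)

theorem Tab.wt_eq {R : Type*} [CommMonoid R] {n : ℕ} {l : CEP} (x : ℕ → R) (T : Tab n l) (M : ℕ) (h : ∀ i, M ≤ i → l.f i = 0) :
    T.wt x = ∏ i ∈ Finset.range M, ∏ j ∈ Finset.range (l.f i), x (T.e i j) := by
  apply finprod_eq_prod_of_mulSupport_subset
  intro i hi
  simp only [Function.mem_mulSupport] at hi
  simp only [Finset.coe_range, Set.mem_Iio]
  by_contra hc
  exact hi (by rw [h i (by omega)]; simp)

theorem Tab.ex {n : ℕ} {l : CEP} (T : Tab (n+1) l) (i : ℕ) : ∃ j, l.f i ≤ j ∨ n ≤ T.e i j :=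
  ⟨l.f i, Or.inl le_rfl⟩

theorem Tab.lt_find {n : ℕ} {l : CEP} (T : Tab (n+1) l) (i j : ℕ) :
    j < Nat.find (T.ex i) ↔ j < l.f i ∧ T.e i j < n := by
  rw [Nat.lt_find_iff]
  constructor
  · intro h
    have := h j le_rfl
    omega
  · rintro ⟨h1, h2⟩ k hk
    have := T.row i k j hk h1
    omega

def Tab.inner {n : ℕ} {l : CEP} (T : Tab (n+1) l) : CEP where
  f := fun i => Nat.find (T.ex i)
  anti := by
    apply antitone_nat_of_succ_le
    intro i
    by_contra hc
    have hc : Nat.find (T.ex i) < Nat.find (T.ex (i+1)) := by omega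
    rw [T.lt_find] at hc
    have h2 := T.col i (i+1) (by omega) _ hc.1
    have := l.anti (Nat.le_succ i)
    have h3 : Nat.find (T.ex i) < Nat.find (T.ex i) := by
      rw [T.lt_find]
      simp only [Nat.succ_eq_add_one] at this
      omega
    omega
  fin := by
    obtain ⟨M, hM⟩ := l.fin
    refine ⟨M, fun i hi => ?_⟩
    rw [Nat.find_eq_zero]
    left; rw [hM i hi]

theorem Tab.lt_inner {n : ℕ} {l : CEP} (T : Tab (n+1) l) (i j : ℕ) :
    j < T.inner.f i ↔ j < l.f i ∧ T.e i j < n := T.lt_find i j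

theorem Tab.inner_HS {n : ℕ} {l : CEP} (T : Tab (n+1) l) : HS l T.inner := by
  intro i
  constructor
  · by_contra hc
    push Not at hc
    have h1 := T.col i (i+1) (by omega) _ hc
    have h2 := T.bd (i+1) _ hc
    have h4 := l.anti (Nat.le_succ i)
    simp only [Nat.succ_eq_add_one] at h4
    have h3 := (T.lt_inner i (T.inner.f i)).2 (by omega)
    omega
  · by_contra hc
    push Not at hc
    have := (T.lt_inner i _).1 hc
    omega

def Tab.trunc {n : ℕ} {l : CEP} (T : Tab (n+1) l) : Tab n T.inner where
  e := fun i j => if j < T.inner.f i then T.e i j else 0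
  row := by
    intro i j1 j2 h hj
    have := (T.lt_inner i j2).1 hj
    rw [if_pos hj, if_pos (by omega)]
    exact T.row i j1 j2 h this.1
  col := by
    intro i1 i2 h j hj
    have h1 := (T.lt_inner i2 j).1 hj
    have := T.inner.anti h.le
    rw [if_pos hj, if_pos (by omega)]
    exact T.col i1 i2 h j h1.1
  out := by
    intro i j h
    rw [if_neg (by omega)]
  bd := by
    intro i j h
    rw [if_pos h]
    exact ((T.lt_inner i j).1 h).2

def Tab.extend {n : ℕ} {l m : CEP} (h : HS l m) (T : Tab n m) : Tab (n+1) l where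
  e := fun i j => if j < m.f i then T.e i j else if j < l.f i then n else 0
  row := by
    intro i j1 j2 hj h2
    by_cases h3 : j2 < m.f i
    · rw [if_pos h3, if_pos (by omega)]
      exact T.row i j1 j2 hj h3
    · rw [if_neg h3, if_pos h2]
      split_ifs with h4
      · exact (T.bd i j1 h4).le
      · exact le_rfl
      · exact Nat.zero_le _
  col := by
    intro i1 i2 hi j hj
    have h1 : l.f i2 ≤ l.f (i1+1) := l.anti hi
    have h2 := (h i1).1
    have h3 : j < m.f i1 := by omega
    rw [if_pos h3]
    split_ifs with h4
    · exact T.col i1 i2 hi j h4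
    · exact T.bd i1 j h3
  out := by
    intro i j hj
    have := (h i).2
    rw [if_neg (by omega), if_neg (by omega)]
  bd := by
    intro i j hj
    split_ifs with h4
    · have := T.bd i j h4; omega
    · omega

theorem Tab.inner_extend {n : ℕ} {l m : CEP} (h : HS l m) (T : Tab n m) : (T.extend h).inner = m := by
  apply ext_lt
  intro i j
  rw [Tab.lt_inner]
  simp only [extend]
  have := (h i).2
  constructor
  · rintro ⟨h1, h2⟩
    by_contra hc
    rw [if_neg hc, if_pos h1] at h2
    omega
  · intro h1
    rw [if_pos h1]
    exact ⟨by omega, T.bd i j h1⟩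

theorem Tab.sigma_ext {n : ℕ} {l : CEP} {a b : (m : {m : CEP // HS l m}) × Tab n m.1}
    (h1 : a.1.1 = b.1.1) (h2 : ∀ i j, a.2.e i j = b.2.e i j) : a = b := by
  obtain ⟨⟨m, hm⟩, T⟩ := a
  obtain ⟨⟨m', hm'⟩, T'⟩ := b
  simp only at h1
  subst h1
  have : T = T' := by ext i j; exact h2 i j
  subst this
  rfl

def Tab.equiv (n : ℕ) (l : CEP) : Tab (n+1) l ≃ (m : {m : CEP // HS l m}) × Tab n m.1 where
  toFun T := ⟨⟨T.inner, T.inner_HS⟩, T.trunc⟩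
  invFun p := p.2.extend p.1.2
  left_inv T := by
    ext i j
    simp only [extend, trunc]
    split_ifs with h1 h2
    · rfl
    · by_contra hc
      have h3 := T.bd i j h2
      exact h1 ((T.lt_inner i j).2 ⟨h2, by omega⟩)
    · exact (T.out i j (by omega)).symm
  right_inv p := by
    apply Tab.sigma_ext
    · exact Tab.inner_extend p.1.2 p.2
    · intro i j
      simp only [trunc]
      rw [Tab.inner_extend p.1.2 p.2]
      split_ifs with h
      · simp only [extend]; rw [if_pos h]
      · exact (p.2.out i j (by omega)).symm

theorem Tab.wt_extend {n : ℕ} {l m : CEP} (x : ℕ → ℝ≥0∞) (h : HS l m) (T : Tab n m) :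
    (T.extend h).wt x = w (x n) l m * T.wt x := by
  obtain ⟨M, hM⟩ := l.fin
  have hmM : ∀ i, M ≤ i → m.f i = 0 := fun i hi => by
    have := hM i hi; have := h i; omega
  rw [Tab.wt_eq x _ M hM, Tab.wt_eq x _ M hmM, w_of h, l.size_eq M hM, m.size_eq M hmM,
    ← Finset.sum_tsub_distrib _ (fun i _ => (h i).2), ← Finset.prod_pow_eq_pow_sum, ← Finset.prod_mul_distrib]
  apply Finset.prod_congr rfl
  intro i _
  rw [← Finset.prod_range_mul_prod_Ico _ (h i).2, mul_comm]
  congr 1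
  · rw [Finset.prod_congr rfl (g := fun _ => x n)]
    · simp
    · intro j hj
      simp only [Finset.mem_Ico] at hj
      simp only [extend]
      rw [if_neg (by omega), if_pos (by omega)]
  · apply Finset.prod_congr rfl
    intro j hj
    simp only [Finset.mem_range] at hj
    simp only [extend]
    rw [if_pos hj]

theorem S_eq (x : ℕ → ℝ≥0∞) (n : ℕ) (l : CEP) : ∑' T : Tab n l, T.wt x = S x n l := by
  induction n generalizing l with
  | zero =>
    by_cases h : l = zero
    · subst h
      simp only [S, if_true]
      rw [tsum_eq_single (⟨fun _ _ => 0, by simp, by simp [zero], by simp, by simp [zero]⟩ : Tab 0 zero)]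
      · rw [Tab.wt_eq x _ 0 (by simp [zero])]; simp
      · intro T hT
        exfalso; apply hT
        ext i j
        exact T.out i j (by simp [zero])
    · have : IsEmpty (Tab 0 l) := by
        constructor
        intro T
        apply h
        apply ext_lt
        intro i j
        constructor
        · intro hj; have := T.bd i j hj; omega
        · intro hj; simp [zero] at hj
      simp [S, h]
  | succ n ih =>
    rw [← (Tab.equiv n l).symm.tsum_eq, ENNReal.tsum_sigma']
    simp only [S]
    have h1 : ∑' m, w (x n) l m * S x n m = ∑' m : {m : CEP // HS l m}, w (x n) l m.1 * S x n m.1 := by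
      refine (tsum_subtype_eq_of_support_subset (s := {m : CEP | HS l m}) ?_).symm
      intro n hn
      simp only [Function.mem_support] at hn
      by_contra hc
      exact hn (by rw [w_not hc, zero_mul])
    rw [h1]
    apply tsum_congr
    intro m
    rw [← ih, ← ENNReal.tsum_mul_left]
    apply tsum_congr
    intro T
    exact Tab.wt_extend x m.2 T

/-- extension of a bounded partition by zero -/
def ofFin {N : ℕ} (lam : {l : Fin N → ℕ // Antitone l}) : CEP where
  f := fun i => if h : i < N then lam.1 ⟨i, h⟩ else 0
  anti := by
    intro i j hij
    simp only
    split_ifs with h1 h2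
    · exact lam.2 (by simpa using hij)
    · omega
    · omega
    · omega
  fin := ⟨N, fun i hi => by rw [dif_neg (by omega)]⟩

theorem ofFin_f {N : ℕ} (lam : {l : Fin N → ℕ // Antitone l}) (i : Fin N) : (ofFin lam).f i = lam.1 i := by
  simp [ofFin]

theorem ofFin_lt {N : ℕ} (lam : {l : Fin N → ℕ // Antitone l}) {i j : ℕ} (h : j < (ofFin lam).f i) :
    ∃ h' : i < N, j < lam.1 ⟨i, h'⟩ := by
  simp only [ofFin] at h
  split_ifs at h with h1
  · exact ⟨h1, h⟩
  · omega

theorem S_ne_zero (x : ℕ → ℝ≥0∞) (n : ℕ) (l : CEP) (h : S x n l ≠ 0) : ∀ i, n ≤ i → l.f i = 0 := by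
  induction n generalizing l with
  | zero =>
    simp only [S] at h
    split_ifs at h with h1
    · subst h1; simp [zero]
    · simp at h
  | succ n ih =>
    simp only [S] at h
    rw [Ne, ENNReal.tsum_eq_zero] at h
    push Not at h
    obtain ⟨m, hm⟩ := h
    intro i hi
    have h1 := ih m (right_ne_zero_of_mul hm)
    have h2 : HS l m := by
      by_contra hc
      exact left_ne_zero_of_mul hm (w_not hc)
    obtain ⟨i, rfl⟩ : ∃ j, i = j + 1 := ⟨i-1, by omega⟩
    have := (h2 i).1
    have := h1 i (by omega)
    omega

def finEquiv (N : ℕ) : {l : Fin N → ℕ // Antitone l} ≃ {l : CEP // ∀ i, N ≤ i → l.f i = 0} where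
  toFun lam := ⟨ofFin lam, fun i hi => by simp only [ofFin]; rw [dif_neg (by omega)]⟩
  invFun l := ⟨fun i => l.1.f i, fun i j h => l.1.anti h⟩
  left_inv lam := by
    apply Subtype.ext
    funext i
    exact ofFin_f lam i
  right_inv l := by
    apply Subtype.ext
    ext i
    simp only [ofFin]
    split_ifs with h
    · rfl
    · exact (l.2 i (by omega)).symm

theorem tsum_fin (N : ℕ) (F : CEP → ℝ≥0∞) (hF : ∀ l, F l ≠ 0 → ∀ i, N ≤ i → l.f i = 0) :
    ∑' lam : {l : Fin N → ℕ // Antitone l}, F (ofFin lam) = ∑' l, F l := by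
  rw [← tsum_subtype_eq_of_support_subset (s := {l : CEP | ∀ i, N ≤ i → l.f i = 0}) (fun l hl => hF l hl)]
  exact (finEquiv N).tsum_eq (fun l => F l.1)

def ssytEquiv {N : ℕ} (hN : 0 < N) (lam : {l : Fin N → ℕ // Antitone l}) :
    SSYT N lam.1 ≃ Tab N (ofFin lam) where
  toFun T :=
    { e := fun i j => if h : i < N then (T.entry ⟨i, h⟩ j : ℕ) else 0
      row := by
        intro i j1 j2 hj h
        obtain ⟨h1, h2⟩ := ofFin_lt lam h
        simp only [dif_pos h1]
        exact T.rowWeak _ _ _ hj h2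
      col := by
        intro i1 i2 hi j h
        obtain ⟨h1, h2⟩ := ofFin_lt lam h
        simp only [dif_pos h1, dif_pos (hi.trans h1)]
        exact T.colStrict _ _ (by simpa using hi) j h2
      out := by
        intro i j h
        split_ifs with h1
        · apply T.zeroOutside
          have := ofFin_f lam ⟨i, h1⟩
          simp only at this
          omega
        · rfl
      bd := by
        intro i j h
        obtain ⟨h1, h2⟩ := ofFin_lt lam h
        simp only [dif_pos h1]
        exact (T.entry _ _).2 }
  invFun T :=
    { entry := fun i j => ⟨T.e i j, by
        by_cases h : j < (ofFin lam).f i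
        · exact T.bd i j h
        · rw [T.out i j (by omega)]; exact hN⟩
      rowWeak := by
        intro i j1 j2 hj h
        rw [← ofFin_f] at h
        exact T.row i j1 j2 hj h
      colStrict := by
        intro i1 i2 hi j h
        rw [← ofFin_f] at h
        exact T.col i1 i2 hi j h
      zeroOutside := by
        intro i j h
        rw [← ofFin_f] at h
        exact T.out i j h }
  left_inv T := by
    cases T
    simp
  right_inv T := by
    ext i j
    simp only
    split_ifs with h
    · rfl
    · rw [T.out i j]
      simp [ofFin, h]

theorem content_prod {R : Type*} [CommMonoid R] {N : ℕ} (hN : 0 < N) (lam : {l : Fin N → ℕ // Antitone l})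
    (T : SSYT N lam.1) (x : ℕ → R) :
    ∏ k : Fin N, x k ^ T.content k = (ssytEquiv hN lam T).wt x := by
  rw [Tab.wt_eq x _ N (fun i hi => by simp only [ofFin]; rw [dif_neg (by omega)]), Finset.prod_range]
  simp only [SSYT.content, ← Finset.prod_pow_eq_pow_sum]
  rw [Finset.prod_comm]
  apply Finset.prod_congr rfl
  intro i _
  rw [ofFin_f, ← Finset.prod_fiberwise (Finset.range (lam.1 i)) (fun j => T.entry i j)]
  apply Finset.prod_congr rfl
  intro k _
  rw [Finset.prod_congr rfl (g := fun _ => x k)]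
  · simp
  · intro j hj
    simp only [Finset.mem_filter] at hj
    simp [ssytEquiv, hj.2]

theorem ssyt_finite {N : ℕ} (lam : {l : Fin N → ℕ // Antitone l}) : Finite (SSYT N lam.1) := by
  apply Finite.of_injective (β := (i : Fin N) → Fin (lam.1 i) → Fin N) (fun T i j => T.entry i j)
  intro T T' h
  obtain ⟨e, h1, h2, h3⟩ := T
  obtain ⟨e', h1', h2', h3'⟩ := T'
  congr
  funext i j
  by_cases hj : j < lam.1 i
  · exact congrFun (congrFun h i) ⟨j, hj⟩
  · apply Fin.ext
    rw [h3 i j (by omega), h3' i j (by omega)]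

/-- extend a finite family -/
def ext0 {R : Type*} [Zero R] {N : ℕ} (x : Fin N → R) (i : ℕ) : R := if h : i < N then x ⟨i, h⟩ else 0

theorem ext0_val {R : Type*} [Zero R] {N : ℕ} (x : Fin N → R) (i : Fin N) : ext0 x i = x i := by
  simp [ext0]

theorem ofReal_schur {N : ℕ} (hN : 0 < N) (lam : {l : Fin N → ℕ // Antitone l}) (x : Fin N → ℝ) (hx : ∀ i, 0 ≤ x i) :
    ENNReal.ofReal (schur N lam.1 x) = S (ext0 fun i => ENNReal.ofReal (x i)) N (ofFin lam) := by
  have := ssyt_finite lam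
  have := Fintype.ofFinite (SSYT N lam.1)
  rw [← S_eq, ← (ssytEquiv hN lam).tsum_eq, schur, tsum_fintype, tsum_fintype, ENNReal.ofReal_sum_of_nonneg]
  · apply Finset.sum_congr rfl
    intro T _
    rw [← content_prod, ENNReal.ofReal_prod_of_nonneg]
    · apply Finset.prod_congr rfl
      intro k _
      rw [ext0_val, ENNReal.ofReal_pow (hx k)]
    · intro i _; exact pow_nonneg (hx i) _
  · intro T _
    exact Finset.prod_nonneg fun i _ => pow_nonneg (hx i) _

theorem schur_nonneg {N : ℕ} (lam : {l : Fin N → ℕ // Antitone l}) (x : Fin N → ℝ) (hx : ∀ i, 0 ≤ x i) :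
    0 ≤ schur N lam.1 x :=
  tsum_nonneg fun _ => Finset.prod_nonneg fun i _ => pow_nonneg (hx i) _

theorem schur_cauchy {N : ℕ} (hN : 0 < N) (x y : Fin N → ℝ) (hx : ∀ i, 0 ≤ x i) (hy : ∀ i, 0 ≤ y i)
    (hxy : ∀ i j, x i * y j < 1) :
    HasSum (fun lam : {l : Fin N → ℕ // Antitone l} => schur N lam.1 x * schur N lam.1 y)
      (∏ i, ∏ j, (1 - x i * y j)⁻¹) := by
  have h := cauchy (ext0 fun i => ENNReal.ofReal (x i)) (ext0 fun i => ENNReal.ofReal (y i)) N N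
  rw [← tsum_fin N _ (fun l hl => S_ne_zero _ N l (left_ne_zero_of_mul hl))] at h
  simp_rw [← ofReal_schur hN _ x hx, ← ofReal_schur hN _ y hy,
    ← ENNReal.ofReal_mul (schur_nonneg _ x hx)] at h
  have h2 : ∏ i ∈ Finset.range N, ∏ j ∈ Finset.range N, (1 - (ext0 fun i => ENNReal.ofReal (x i)) i * (ext0 fun i => ENNReal.ofReal (y i)) j)⁻¹
     = ENNReal.ofReal (∏ i, ∏ j, (1 - x i * y j)⁻¹) := by
    have hp : ∀ i j, 0 < 1 - x i * y j := fun i j => by linarith [hxy i j]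
    rw [Finset.prod_range, ENNReal.ofReal_prod_of_nonneg (fun i _ => Finset.prod_nonneg fun j _ => (inv_pos.2 (hp i j)).le)]
    apply Finset.prod_congr rfl
    intro i _
    rw [Finset.prod_range, ENNReal.ofReal_prod_of_nonneg (fun j _ => (inv_pos.2 (hp i j)).le)]
    apply Finset.prod_congr rfl
    intro j _
    rw [ENNReal.ofReal_inv_of_pos (hp i j), ENNReal.ofReal_sub _ (mul_nonneg (hx i) (hy j)),
      ENNReal.ofReal_mul (hx i), ext0_val, ext0_val, ENNReal.ofReal_one]
  rw [h2] at h
  have hnn : ∀ lam : {l : Fin N → ℕ // Antitone l}, 0 ≤ schur N lam.1 x * schur N lam.1 y := fun lam =>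
    mul_nonneg (schur_nonneg _ x hx) (schur_nonneg _ y hy)
  have hs : Summable (fun lam : {l : Fin N → ℕ // Antitone l} => schur N lam.1 x * schur N lam.1 y) := by
    have := ENNReal.summable_toReal (h.trans_ne ENNReal.ofReal_ne_top)
    simpa only [ENNReal.toReal_ofReal (hnn _)] using this
  rw [← ENNReal.ofReal_tsum_of_nonneg hnn hs] at h
  have hP : 0 ≤ ∏ i, ∏ j, (1 - x i * y j)⁻¹ :=
    Finset.prod_nonneg fun i _ => Finset.prod_nonneg fun j _ => inv_nonneg.2 (by linarith [hxy i j])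
  have := (ENNReal.ofReal_eq_ofReal_iff (tsum_nonneg hnn) hP).1 h
  rw [← this]
  exact hs.hasSum

theorem schur_swap {N : ℕ} (hN : 0 < N) (lam : {l : Fin N → ℕ // Antitone l}) (x : Fin N → ℝ) (hx : ∀ i, 0 ≤ x i)
    (i : ℕ) (hi : i + 1 < N) :
    schur N lam.1 (x ∘ Equiv.swap (⟨i, by omega⟩ : Fin N) ⟨i+1, hi⟩) = schur N lam.1 x := by
  apply (ENNReal.ofReal_eq_ofReal_iff (schur_nonneg _ _ fun i => hx _) (schur_nonneg _ _ hx)).1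
  rw [ofReal_schur hN _ _ hx, ofReal_schur hN _ _ (fun i => hx _)]
  obtain ⟨d, hd⟩ : ∃ d, N = i + 2 + d := ⟨N - (i+2), by omega⟩
  have := S_swap (ext0 fun i => ENNReal.ofReal (x i)) i d (ofFin lam)
  rw [← hd] at this
  rw [← this]
  apply S_swap_aux
  intro k hk
  have hk' := ext0_val (fun i_1 ↦ ENNReal.ofReal ((x ∘ ⇑(Equiv.swap (⟨i, by omega⟩ : Fin N) ⟨i + 1, hi⟩)) i_1)) ⟨k, hk⟩
  simp only [Function.comp_apply] at hk' ⊢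
  rw [hk']
  simp only [Equiv.swap_apply_def, Fin.mk.injEq]
  split_ifs <;> (simp only [ext0]; rw [dif_pos (by omega)])

theorem schur_perm {N : ℕ} (hN : 0 < N) (lam : {l : Fin N → ℕ // Antitone l}) (x : Fin N → ℝ) (hx : ∀ i, 0 ≤ x i)
    (σ : Equiv.Perm (Fin N)) : schur N lam.1 (x ∘ σ) = schur N lam.1 x := by
  obtain ⟨n, rfl⟩ : ∃ n, N = n + 1 := ⟨N-1, by omega⟩
  have hσ : σ ∈ Submonoid.closure (Set.range fun i : Fin n => Equiv.swap i.castSucc i.succ) := by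
    rw [Equiv.Perm.mclosure_swap_castSucc_succ]; trivial
  induction hσ using Submonoid.closure_induction generalizing x with
  | mem σ h =>
    obtain ⟨i, rfl⟩ := h
    exact schur_swap hN lam x hx i (by omega)
  | one => rfl
  | mul a b _ _ ha hb =>
    rw [Equiv.Perm.coe_mul, ← Function.comp_assoc, hb (x ∘ a) (fun i => hx _), ha x hx]

end CEP

section contcfc
open scoped Matrix.Norms.L2Operator
theorem CE_applyFun_continuous {N : ℕ} (Φ : ℝ → ℝ) (hΦ : Continuous Φ) :
    Continuous (fun M : selfAdjoint (Matrix (Fin N) (Fin N) ℂ) => applyFun Φ M) := by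
  have h : ∀ M : selfAdjoint (Matrix (Fin N) (Fin N) ℂ), applyFun Φ M = cfc Φ (M : Matrix (Fin N) (Fin N) ℂ) := by
    intro M
    rw [(selfAdjoint_matrix_isHermitian M).cfc_eq]
    rfl
  simp_rw [h]
  exact Continuous.cfc_of_mem_nhdsSet (s := Set.univ) Φ Filter.univ_mem continuous_subtype_val
    (fun M => M.2) hΦ.continuousOn
end contcfc

section schurcont
variable {N : ℕ}

theorem CE_schur_ofReal (lam : {l : Fin N → ℕ // Antitone l}) (x : Fin N → ℝ) :
    schur N lam.1 (fun i => (x i : ℂ)) = (schur N lam.1 x : ℝ) := by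
  simp only [schur]
  rw [Complex.ofReal_tsum]
  push_cast
  rfl

open MvPolynomial in
theorem CE_schur_poly (hN : 0 < N) (lam : {l : Fin N → ℕ // Antitone l}) :
    ∃ Q : MvPolynomial (Fin N) ℝ, ∀ z : Fin N → ℂ,
      schur N lam.1 z = aeval (fun i : Fin N => (Finset.univ.val.map z).esymm (i + 1)) Q := by
  have := CEP.ssyt_finite lam
  have := Fintype.ofFinite (SSYT N lam.1)
  set P : MvPolynomial (Fin N) ℝ := ∑ T : SSYT N lam.1, ∏ k, X k ^ T.content k with hP
  have h1 : ∀ z : Fin N → ℂ, aeval z P = schur N lam.1 z := by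
    intro z
    simp [hP, schur, tsum_fintype]
  have h2 : ∀ z : Fin N → ℝ, eval z P = schur N lam.1 z := by
    intro z
    simp [hP, schur, tsum_fintype]
  have hsym : P.IsSymmetric := by
    intro σ
    apply funext_set (fun _ => Set.Ici (0:ℝ)) (fun _ => Set.Ici_infinite 0)
    intro x hx
    have hx : ∀ i, 0 ≤ x i := fun i => hx i trivial
    rw [eval_rename, h2, h2, CEP.schur_perm hN lam x hx]
  obtain ⟨Q, hQ⟩ := esymmAlgHom_fin_surjective ℝ (le_refl N) ⟨P, (mem_symmetricSubalgebra _).2 hsym⟩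
  refine ⟨Q, fun z => ?_⟩
  have h3 : aeval (fun i : Fin N => esymm (Fin N) ℝ (i + 1)) Q = P := by
    rw [← esymmAlgHom_apply, hQ]
  rw [← h1, ← h3]
  simp_rw [← aeval_esymm_eq_multiset_esymm (Fin N) ℝ]
  rw [← AlgHom.comp_apply, comp_aeval]

theorem CE_roots_card (C : Matrix (Fin N) (Fin N) ℂ) : C.charpoly.roots.card = N := by
  rw [Polynomial.splits_iff_card_roots.1 (IsAlgClosed.splits C.charpoly), Matrix.charpoly_natDegree_eq_dim, Fintype.card_fin]

noncomputable def CE_z (C : Matrix (Fin N) (Fin N) ℂ) (i : Fin N) : ℂ := C.charpoly.roots.toList.getD (i : ℕ) 0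

theorem CE_z_map (C : Matrix (Fin N) (Fin N) ℂ) : Finset.univ.val.map (CE_z C) = C.charpoly.roots := by
  conv_rhs => rw [← Multiset.coe_toList C.charpoly.roots]
  rw [Fin.univ_val_map, Multiset.coe_eq_coe]
  apply List.Perm.of_eq
  have hl : C.charpoly.roots.toList.length = N := by rw [Multiset.length_toList, CE_roots_card]
  apply List.ext_getElem
  · simp [hl]
  · intro i h1 h2
    simp only [List.getElem_ofFn, CE_z]
    rw [List.getD_eq_getElem _ _ h2]

theorem CE_charpoly_coeff_continuous (k : ℕ) :
    Continuous (fun C : Matrix (Fin N) (Fin N) ℂ => C.charpoly.coeff k) := by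
  have : ∀ C : Matrix (Fin N) (Fin N) ℂ, C.charpoly.coeff k =
      MvPolynomial.eval (fun p : Fin N × Fin N => C p.1 p.2) ((Matrix.charpoly.univ ℂ (Fin N)).coeff k) := by
    intro C
    have := Matrix.charpoly.univ_coeff_eval₂Hom (n := Fin N) (RingHom.id ℂ) (fun p : Fin N × Fin N => C p.1 p.2) k
    exact this.symm
  simp_rw [this]
  refine (MvPolynomial.continuous_eval _).comp ?_
  exact continuous_pi fun p => continuous_id.matrix_elem _ _

theorem CE_schurMat_continuous (hN : 0 < N) (lam : {l : Fin N → ℕ // Antitone l}) :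
    Continuous (fun C : Matrix (Fin N) (Fin N) ℂ => schurMat N lam.1 C) := by
  obtain ⟨Q, hQ⟩ := CE_schur_poly hN lam
  have h : ∀ C : Matrix (Fin N) (Fin N) ℂ, schurMat N lam.1 C =
      MvPolynomial.eval (fun i : Fin N => (-1) ^ ((i : ℕ)+1) * C.charpoly.coeff (N - (i+1)))
        (MvPolynomial.map (algebraMap ℝ ℂ) Q) := by
    intro C
    have : schurMat N lam.1 C = schur N lam.1 (CE_z C) := rfl
    rw [this, hQ, CE_z_map, MvPolynomial.eval_map, MvPolynomial.aeval_def]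
    congr 1
    funext i
    have hd : C.charpoly.natDegree = N := by rw [Matrix.charpoly_natDegree_eq_dim, Fintype.card_fin]
    rw [Polynomial.coeff_eq_esymm_roots_of_card (by rw [CE_roots_card, hd]) (by omega), hd,
      C.charpoly_monic.leadingCoeff, one_mul, ← mul_assoc]
    have : N - (N - (i + 1)) = (i : ℕ) + 1 := by omega
    rw [this, ← pow_add, Even.neg_one_pow ⟨_, rfl⟩, one_mul]
  simp_rw [h]
  refine (MvPolynomial.continuous_eval _).comp ?_
  exact continuous_pi fun i => continuous_const.mul (CE_charpoly_coeff_continuous _)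

theorem CE_det_one_sub (b : ℂ) (C : Matrix (Fin N) (Fin N) ℂ) :
    (1 - b • C).det = ∏ j, (1 - b * CE_z C j) := by
  by_cases hb : b = 0
  · simp [hb]
  · have h1 : (1 - b • C) = b • (Matrix.scalar (Fin N) b⁻¹ - C) := by
      rw [smul_sub]
      congr 1
      ext i j
      by_cases hij : i = j
      · subst hij; simp [hb]
      · simp [hij]
    rw [h1, Matrix.det_smul, ← Matrix.eval_charpoly, Fintype.card_fin,
      (IsAlgClosed.splits C.charpoly).eq_prod_roots_of_monic C.charpoly_monic, ← CE_z_map]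
    simp only [Multiset.map_map, Function.comp_def, Polynomial.eval_multiset_prod]
    have : ∀ j, (1 - b * CE_z C j) = b * (b⁻¹ - CE_z C j) := by
      intro j; field_simp
    simp_rw [this, Finset.prod_mul_distrib]
    simp [Finset.prod]

theorem CE_det_kron (B C : Matrix (Fin N) (Fin N) ℂ) (hB : B.IsHermitian) :
    Matrix.det ((1 : Matrix (Fin N × Fin N) (Fin N × Fin N) ℂ) - Matrix.kroneckerMap (· * ·) B C)
      = ∏ i, ∏ j, (1 - (hB.eigenvalues i : ℂ) * CE_z C j) := by
  classical
  set U : Matrix (Fin N) (Fin N) ℂ := (hB.eigenvectorUnitary : Matrix (Fin N) (Fin N) ℂ) with hU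
  have hUU : U * star U = 1 := Unitary.mul_star_self_of_mem hB.eigenvectorUnitary.2
  have hspec : B = U * Matrix.diagonal (fun i => (hB.eigenvalues i : ℂ)) * star U := by
    conv_lhs => rw [hB.spectral_theorem]
    rfl
  set D := Matrix.diagonal (fun i => (hB.eigenvalues i : ℂ)) with hD
  have h1 : (1 : Matrix (Fin N × Fin N) (Fin N × Fin N) ℂ) - Matrix.kroneckerMap (· * ·) B C
      = Matrix.kroneckerMap (· * ·) U (1 : Matrix (Fin N) (Fin N) ℂ) *
        (1 - Matrix.kroneckerMap (· * ·) D C) * Matrix.kroneckerMap (· * ·) (star U) (1 : Matrix (Fin N) (Fin N) ℂ) := by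
    rw [Matrix.mul_sub, Matrix.sub_mul, Matrix.mul_one, ← Matrix.mul_kronecker_mul, ← Matrix.mul_kronecker_mul,
      ← Matrix.mul_kronecker_mul, hUU, ← hspec]
    simp
  have h2 : (Matrix.kroneckerMap (· * ·) U (1 : Matrix (Fin N) (Fin N) ℂ)).det *
      (Matrix.kroneckerMap (· * ·) (star U) (1 : Matrix (Fin N) (Fin N) ℂ)).det = 1 := by
    rw [← Matrix.det_mul, ← Matrix.mul_kronecker_mul, hUU]
    simp
  rw [h1, Matrix.det_mul, Matrix.det_mul, mul_right_comm, h2, one_mul]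
  have h3 : (1 : Matrix (Fin N × Fin N) (Fin N × Fin N) ℂ) - Matrix.kroneckerMap (· * ·) D C
     = (Matrix.blockDiagonal (fun i => (1 : Matrix (Fin N) (Fin N) ℂ) - (hB.eigenvalues i : ℂ) • C)).submatrix Prod.swap Prod.swap := by
    ext ⟨i, a⟩ ⟨j, b⟩
    simp only [Matrix.sub_apply, Matrix.kroneckerMap_apply, hD, Matrix.submatrix_apply, Prod.swap_prod_mk,
      Matrix.blockDiagonal_apply, Matrix.diagonal_apply, Matrix.one_apply, Prod.mk.injEq, Matrix.smul_apply, smul_eq_mul]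
    by_cases hij : i = j <;> simp [hij]
  rw [h3]
  have h4 := Matrix.det_submatrix_equiv_self (Equiv.prodComm (Fin N) (Fin N)) (Matrix.blockDiagonal (fun i => (1 : Matrix (Fin N) (Fin N) ℂ) - (hB.eigenvalues i : ℂ) • C))
  rw [show ((Equiv.prodComm (Fin N) (Fin N) : Fin N × Fin N → Fin N × Fin N)) = Prod.swap from rfl] at h4
  rw [h4, Matrix.det_blockDiagonal]
  exact Finset.prod_congr rfl fun i _ => CE_det_one_sub _ _

end schurcont

section spectral
variable {N : ℕ}
open Matrix

theorem CE_conj_psd (U : Matrix (Fin N) (Fin N) ℂ) (d : Fin N → ℝ) (hd : ∀ i, 0 ≤ d i) :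
    (U * Matrix.diagonal (fun i => (d i : ℂ)) * star U).PosSemidef := by
  have : (Matrix.diagonal (fun i => (d i : ℂ))).PosSemidef :=
    Matrix.PosSemidef.diagonal (fun i => by simpa using hd i)
  exact this.mul_mul_conjTranspose_same U

theorem CE_sub_psd (U : Matrix (Fin N) (Fin N) ℂ) (hU : U * star U = 1) (d : Fin N → ℝ) (r : ℝ) (hd : ∀ i, d i ≤ r) :
    ((r : ℂ) • (1 : Matrix (Fin N) (Fin N) ℂ) - U * Matrix.diagonal (fun i => (d i : ℂ)) * star U).PosSemidef := by
  have h := CE_conj_psd U (fun i => r - d i) (fun i => by linarith [hd i])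
  have e : Matrix.diagonal (fun i => ((r - d i : ℝ) : ℂ)) = (r : ℂ) • (1 : Matrix (Fin N) (Fin N) ℂ) - Matrix.diagonal (fun i => (d i : ℂ)) := by
    ext i j
    by_cases hij : i = j
    · subst hij; simp
    · simp [hij]
  rw [e, Matrix.mul_sub, Matrix.sub_mul, Matrix.mul_smul, Matrix.smul_mul, Matrix.mul_one, hU] at h
  exact h

theorem CE_eig_le (H : Matrix (Fin N) (Fin N) ℂ) (hH : H.IsHermitian) (r : ℝ)
    (h : ((r : ℂ) • (1 : Matrix (Fin N) (Fin N) ℂ) - H).PosSemidef) (i : Fin N) : hH.eigenvalues i ≤ r := by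
  have h1 := h.dotProduct_mulVec_nonneg (hH.eigenvectorBasis i : Fin N → ℂ)
  have hv := hH.mulVec_eigenvectorBasis i
  have hne : (hH.eigenvectorBasis i : Fin N → ℂ) ≠ 0 := by
    intro h0
    apply hH.eigenvectorBasis.orthonormal.ne_zero i
    ext j
    exact congrFun h0 j
  rw [Matrix.sub_mulVec, hv, Matrix.smul_mulVec, Matrix.one_mulVec, dotProduct_sub, dotProduct_smul, dotProduct_smul] at h1
  have hpos := dotProduct_star_self_pos_iff.2 hne
  rw [Complex.pos_iff] at hpos
  rw [Complex.nonneg_iff] at h1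
  have h2 := h1.1
  simp only [Complex.sub_re, smul_eq_mul, Complex.real_smul, Complex.re_ofReal_mul] at h2
  have := hpos.1
  by_contra hc
  push Not at hc
  nlinarith

theorem CE_z_bounds (A : Matrix (Fin N) (Fin N) ℂ) (hA : A.PosSemidef) (hAnorm : ∀ i, hA.1.eigenvalues i ≤ 1)
    (Φ : ℝ → ℝ) (hΦnonneg : ∀ x, 0 ≤ Φ x) (r : ℝ) (hr : ∀ x, Φ x ≤ r)
    (M : selfAdjoint (Matrix (Fin N) (Fin N) ℂ)) :
    ∃ y : Fin N → ℝ, (∀ i, 0 ≤ y i) ∧ (∀ i, y i ≤ r) ∧ ∀ i, CE_z (applyFun Φ M * A) i = (y i : ℂ) := by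
  have hr0 : 0 ≤ r := (hΦnonneg 0).trans (hr 0)
  set F := applyFun Φ M with hF
  have hF1 : F.PosSemidef := CE_conj_psd _ _ (fun i => hΦnonneg _)
  have hF2 : ((r : ℂ) • (1 : Matrix (Fin N) (Fin N) ℂ) - F).PosSemidef :=
    CE_sub_psd _ (Unitary.mul_star_self_of_mem (selfAdjoint_matrix_isHermitian M).eigenvectorUnitary.2) _ r (fun i => hr _)
  set U : Matrix (Fin N) (Fin N) ℂ := (hA.1.eigenvectorUnitary : Matrix (Fin N) (Fin N) ℂ) with hU
  have hUU : U * star U = 1 := Unitary.mul_star_self_of_mem hA.1.eigenvectorUnitary.2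
  have hUU' : star U * U = 1 := Unitary.star_mul_self_of_mem hA.1.eigenvectorUnitary.2
  have hspec : A = U * Matrix.diagonal (fun i => (hA.1.eigenvalues i : ℂ)) * star U := by
    conv_lhs => rw [hA.1.spectral_theorem]
    rfl
  have hA2 : (((1:ℝ) : ℂ) • (1 : Matrix (Fin N) (Fin N) ℂ) - A).PosSemidef := by
    have := CE_sub_psd U hUU hA.1.eigenvalues 1 hAnorm
    rwa [← hspec] at this
  set S := U * Matrix.diagonal (fun i => ((Real.sqrt (hA.1.eigenvalues i) : ℝ) : ℂ)) * star U with hS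
  have hSpsd : S.PosSemidef := CE_conj_psd U _ (fun i => Real.sqrt_nonneg _)
  have hSS : S * S = A := by
    have : S * S = U * (Matrix.diagonal (fun i => ((Real.sqrt (hA.1.eigenvalues i) : ℝ) : ℂ)) * (star U * U) *
        Matrix.diagonal (fun i => ((Real.sqrt (hA.1.eigenvalues i) : ℝ) : ℂ))) * star U := by
      simp only [hS, Matrix.mul_assoc]
    rw [this, hUU', Matrix.mul_one, Matrix.diagonal_mul_diagonal]
    conv_rhs => rw [hspec]
    congr 3
    funext i
    rw [← Complex.ofReal_mul, Real.mul_self_sqrt (hA.eigenvalues_nonneg i)]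
  have hSH : Sᴴ = S := hSpsd.1
  have hH : (S * F * S).PosSemidef := by
    have := hF1.mul_mul_conjTranspose_same S
    rwa [hSH] at this
  have hH2 : ((r : ℂ) • (1 : Matrix (Fin N) (Fin N) ℂ) - S * F * S).PosSemidef := by
    have h1 := hF2.mul_mul_conjTranspose_same S
    rw [hSH] at h1
    have h2 := hA2.smul (a := (r : ℂ)) (by simpa using hr0)
    have h3 := h1.add h2
    convert h3 using 1
    rw [← hSS, Matrix.mul_sub, Matrix.sub_mul, Matrix.mul_smul, Matrix.mul_one, Matrix.smul_mul, smul_sub]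
    simp
  have hchar : (F * A).charpoly = (S * F * S).charpoly := by
    rw [← hSS, ← Matrix.mul_assoc, Matrix.charpoly_mul_comm, ← Matrix.mul_assoc]
  have hroots := hH.1.roots_charpoly_eq_eigenvalues
  have key : ∀ i, ∃ j, CE_z (F * A) i = (hH.1.eigenvalues j : ℂ) := by
    intro i
    have : CE_z (F * A) i ∈ (F * A).charpoly.roots := by
      rw [← CE_z_map]
      exact Multiset.mem_map_of_mem _ (Finset.mem_univ i)
    rw [hchar, hroots] at this
    obtain ⟨j, _, hj⟩ := Multiset.mem_map.1 this
    exact ⟨j, hj.symm⟩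
  choose j hj using key
  exact ⟨fun i => hH.1.eigenvalues (j i), fun i => hH.eigenvalues_nonneg _,
    fun i => CE_eig_le _ hH.1 r hH2 _, hj⟩

end spectral

section gauss

instance CE_borel {N : ℕ} : BorelSpace (Matrix (Fin N) (Fin N) ℂ) := ⟨rfl⟩

instance CE_borel_sa {N : ℕ} : BorelSpace (selfAdjoint (Matrix (Fin N) (Fin N) ℂ)) :=
  Subtype.borelSpace _

theorem CE_trace {N : ℕ} (M : selfAdjoint (Matrix (Fin N) (Fin N) ℂ)) :
    (Matrix.trace ((M : Matrix (Fin N) (Fin N) ℂ) * (M : Matrix (Fin N) (Fin N) ℂ))).re =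
      ∑ i, ∑ j, ‖(M : Matrix (Fin N) (Fin N) ℂ) i j‖ ^ 2 := by
  simp only [Matrix.trace, Matrix.diag, Matrix.mul_apply, Complex.re_sum]
  refine Finset.sum_congr rfl fun i _ => Finset.sum_congr rfl fun j _ => ?_
  have : (M : Matrix (Fin N) (Fin N) ℂ) j i = star ((M : Matrix (Fin N) (Fin N) ℂ) i j) :=
    ((selfAdjoint_matrix_isHermitian M).apply j i).symm
  rw [this]
  simp only [RCLike.star_def, Complex.mul_conj, Complex.ofReal_re, Complex.normSq_eq_norm_sq]

attribute [local instance] Matrix.normedAddCommGroup Matrix.normedSpace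

theorem CE_gauss {N : ℕ} (hN : 0 < N)
    (vol : Measure (selfAdjoint (Matrix (Fin N) (Fin N) ℂ))) [hvol : vol.IsAddHaarMeasure] :
    Integrable (fun M : selfAdjoint (Matrix (Fin N) (Fin N) ℂ) =>
      Real.exp (-(N : ℝ) / 2 * (Matrix.trace
            ((M : Matrix (Fin N) (Fin N) ℂ) * (M : Matrix (Fin N) (Fin N) ℂ))).re)) vol := by
  let ι : selfAdjoint (Matrix (Fin N) (Fin N) ℂ) →ₗ[ℝ] Matrix (Fin N) (Fin N) ℂ :=
    { toFun := Subtype.val, map_add' := fun _ _ => rfl, map_smul' := fun _ _ => rfl }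
  have hfd : FiniteDimensional ℝ (selfAdjoint (Matrix (Fin N) (Fin N) ℂ)) :=
    FiniteDimensional.of_injective ι Subtype.val_injective
  set k := Module.finrank ℝ (selfAdjoint (Matrix (Fin N) (Fin N) ℂ)) + 1 with hk
  have hint : Integrable (fun M : selfAdjoint (Matrix (Fin N) (Fin N) ℂ) => (1 + ‖M‖) ^ (-(k : ℝ))) vol :=
    @integrable_one_add_norm (selfAdjoint (Matrix (Fin N) (Fin N) ℂ)) _ _ hfd _ CE_borel_sa vol hvol (k : ℝ)
      (by rw [hk]; push_cast; linarith)
  refine (hint.const_mul (Real.exp (3/2) * (k.factorial : ℝ))).mono' ?_ ?_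
  · apply Continuous.aestronglyMeasurable
    have : Continuous (fun M : selfAdjoint (Matrix (Fin N) (Fin N) ℂ) => Matrix.trace
            ((M : Matrix (Fin N) (Fin N) ℂ) * (M : Matrix (Fin N) (Fin N) ℂ))) :=
      (continuous_subtype_val.matrix_mul continuous_subtype_val).matrix_trace
    fun_prop
  · refine Filter.Eventually.of_forall fun M => ?_
    rw [Real.norm_of_nonneg (Real.exp_pos _).le, CE_trace]
    set t := ∑ i, ∑ j, ‖(M : Matrix (Fin N) (Fin N) ℂ) i j‖ ^ 2 with ht
    have ht0 : 0 ≤ t := Finset.sum_nonneg fun i _ => Finset.sum_nonneg fun j _ => sq_nonneg _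
    have h1 : ‖M‖ ≤ Real.sqrt t := by
      change ‖(M : Matrix (Fin N) (Fin N) ℂ)‖ ≤ _
      rw [Matrix.norm_le_iff (Real.sqrt_nonneg t)]
      intro i j
      apply Real.le_sqrt_of_sq_le
      refine le_trans ?_ (Finset.single_le_sum (f := fun i => ∑ j, ‖(M : Matrix (Fin N) (Fin N) ℂ) i j‖ ^ 2) (fun i _ => Finset.sum_nonneg fun j _ => sq_nonneg _) (Finset.mem_univ i))
      exact Finset.single_le_sum (f := fun j => ‖(M : Matrix (Fin N) (Fin N) ℂ) i j‖ ^ 2) (fun j _ => sq_nonneg _) (Finset.mem_univ j)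
    have h2 : ‖M‖ ^ 2 ≤ t := by
      have := pow_le_pow_left₀ (norm_nonneg M) h1 2
      rwa [Real.sq_sqrt ht0] at this
    have hN1 : (1 : ℝ) ≤ N := by exact_mod_cast hN
    have hu := norm_nonneg M
    set u := ‖M‖
    have h3 : -(N : ℝ) / 2 * t ≤ 3/2 - (1 + u) := by nlinarith [sq_nonneg (u - 1)]
    have h4 := Real.pow_div_factorial_le_exp (1 + u) (by linarith) k
    have hf : (0 : ℝ) < k.factorial := by exact_mod_cast k.factorial_pos
    have hup : 0 < (1 + u) ^ k := by positivity
    calc Real.exp (-(N : ℝ) / 2 * t) ≤ Real.exp (3/2 - (1 + u)) := Real.exp_le_exp.2 h3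
      _ = Real.exp (3/2) * (Real.exp (1+u))⁻¹ := by rw [Real.exp_sub, div_eq_mul_inv]
      _ ≤ Real.exp (3/2) * ((1+u)^k / k.factorial)⁻¹ := by
          gcongr
      _ = Real.exp (3/2) * k.factorial * (1 + u) ^ (-(k:ℝ)) := by
          rw [Real.rpow_neg (by linarith), Real.rpow_natCast, inv_div]
          ring

end gauss

theorem CE_schur_le {N : ℕ} (lam : {l : Fin N → ℕ // Antitone l}) :
    ∃ K : ℝ, ∀ x : Fin N → ℝ, (∀ i, 0 ≤ x i) → (∀ i, x i ≤ 1) → schur N lam.1 x ≤ K := by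
  have := CEP.ssyt_finite lam
  have := Fintype.ofFinite (SSYT N lam.1)
  refine ⟨∑ _T : SSYT N lam.1, 1, fun x h0 h1 => ?_⟩
  rw [schur, tsum_fintype]
  exact Finset.sum_le_sum fun T _ => Finset.prod_le_one (fun i _ => pow_nonneg (h0 i) _)
    (fun i _ => pow_le_one₀ (h0 i) (h1 i))

/-- **Character expansion of the partition function.**
`∫_{μ̂^N_M ∈ X} e^{-(N/2) tr M²} det (I - B ⊗ Φ(M)A)⁻¹ dM
  = ∑_λ s_λ(B) ∫_{μ̂^N_M ∈ X} e^{-(N/2) tr M²} s_λ(Φ(M)A) dM`,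
both sides being finite. -/
theorem character_expansion (N : ℕ) (hN : 0 < N)
    (vol : Measure (selfAdjoint (Matrix (Fin N) (Fin N) ℂ))) [vol.IsAddHaarMeasure]
    (A B : Matrix (Fin N) (Fin N) ℂ) (hA : A.PosSemidef) (hB : B.PosSemidef)
    (hAnorm : ∀ i, hA.1.eigenvalues i ≤ 1) (hBnorm : ∀ i, hB.1.eigenvalues i ≤ 1)
    (Φ : ℝ → ℝ) (hΦcont : Continuous Φ) (hΦnonneg : ∀ x, 0 ≤ Φ x)
    (hΦlt : ∃ r : ℝ, r < 1 ∧ ∀ x, Φ x ≤ r)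
    (X : Set (Measure ℝ)) (hX : MeasurableSet X) :
    IntegrableOn
      (fun M : selfAdjoint (Matrix (Fin N) (Fin N) ℂ) =>
        Real.exp (-(N : ℝ) / 2 * (Matrix.trace
            ((M : Matrix (Fin N) (Fin N) ℂ) * (M : Matrix (Fin N) (Fin N) ℂ))).re) *
          ((Matrix.det ((1 : Matrix (Fin N × Fin N) (Fin N × Fin N) ℂ) -
              Matrix.kroneckerMap (· * ·) B (applyFun Φ M * A))).re)⁻¹)
      {M | specMeasure M ∈ X} vol ∧
    (∀ lam : {l : Fin N → ℕ // Antitone l},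
      IntegrableOn
        (fun M : selfAdjoint (Matrix (Fin N) (Fin N) ℂ) =>
          Real.exp (-(N : ℝ) / 2 * (Matrix.trace
              ((M : Matrix (Fin N) (Fin N) ℂ) * (M : Matrix (Fin N) (Fin N) ℂ))).re) *
            (schurMat N lam.1 (applyFun Φ M * A)).re)
        {M | specMeasure M ∈ X} vol) ∧
    Summable (fun lam : {l : Fin N → ℕ // Antitone l} =>
      schur N lam.1 (fun i => hB.1.eigenvalues i) *
        ∫ M in {M | specMeasure M ∈ X},
          Real.exp (-(N : ℝ) / 2 * (Matrix.trace
              ((M : Matrix (Fin N) (Fin N) ℂ) * (M : Matrix (Fin N) (Fin N) ℂ))).re) *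
            (schurMat N lam.1 (applyFun Φ M * A)).re ∂vol) ∧
    (∫ M in {M | specMeasure M ∈ X},
        Real.exp (-(N : ℝ) / 2 * (Matrix.trace
            ((M : Matrix (Fin N) (Fin N) ℂ) * (M : Matrix (Fin N) (Fin N) ℂ))).re) *
          ((Matrix.det ((1 : Matrix (Fin N × Fin N) (Fin N × Fin N) ℂ) -
              Matrix.kroneckerMap (· * ·) B (applyFun Φ M * A))).re)⁻¹ ∂vol)
      = ∑' lam : {l : Fin N → ℕ // Antitone l},
          schur N lam.1 (fun i => hB.1.eigenvalues i) *
            ∫ M in {M | specMeasure M ∈ X},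
              Real.exp (-(N : ℝ) / 2 * (Matrix.trace
                  ((M : Matrix (Fin N) (Fin N) ℂ) * (M : Matrix (Fin N) (Fin N) ℂ))).re) *
                (schurMat N lam.1 (applyFun Φ M * A)).re ∂vol := by
  obtain ⟨r, hr1, hr⟩ := hΦlt
  have hC : Continuous (fun M : selfAdjoint (Matrix (Fin N) (Fin N) ℂ) => applyFun Φ M * A) :=
    (CE_applyFun_continuous Φ hΦcont).matrix_mul continuous_const
  have hg := CE_gauss hN vol
  choose y hy0 hyr hyz using CE_z_bounds A hA hAnorm Φ hΦnonneg r hr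
  have hb0 : ∀ i, 0 ≤ hB.1.eigenvalues i := hB.eigenvalues_nonneg
  have hby : ∀ M i j, hB.1.eigenvalues i * y M j ≤ r := fun M i j =>
    (mul_le_of_le_one_left (hy0 M j) (hBnorm i)).trans (hyr M j)
  have hdet : ∀ M, ((Matrix.det ((1 : Matrix (Fin N × Fin N) (Fin N × Fin N) ℂ) -
              Matrix.kroneckerMap (· * ·) B (applyFun Φ M * A))).re)⁻¹ =
      ∏ i, ∏ j, (1 - hB.1.eigenvalues i * y M j)⁻¹ := by
    intro M
    rw [CE_det_kron B _ hB.1]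
    simp_rw [hyz M]
    have : (∏ i, ∏ j, (1 - (hB.1.eigenvalues i : ℂ) * (y M j : ℂ))) =
        ((∏ i, ∏ j, (1 - hB.1.eigenvalues i * y M j) : ℝ) : ℂ) := by push_cast; rfl
    rw [this, Complex.ofReal_re]
    simp only [Finset.prod_inv_distrib]
  have hschur : ∀ (lam : {l : Fin N → ℕ // Antitone l}) M,
      (schurMat N lam.1 (applyFun Φ M * A)).re = schur N lam.1 (y M) := by
    intro lam M
    have h1 : schurMat N lam.1 (applyFun Φ M * A) = schur N lam.1 (CE_z (applyFun Φ M * A)) := rfl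
    have h2 : CE_z (applyFun Φ M * A) = fun i => (y M i : ℂ) := funext (hyz M)
    rw [h1, h2, CE_schur_ofReal, Complex.ofReal_re]
  have I1 : Integrable (fun M : selfAdjoint (Matrix (Fin N) (Fin N) ℂ) =>
        Real.exp (-(N : ℝ) / 2 * (Matrix.trace
            ((M : Matrix (Fin N) (Fin N) ℂ) * (M : Matrix (Fin N) (Fin N) ℂ))).re) *
          ((Matrix.det ((1 : Matrix (Fin N × Fin N) (Fin N × Fin N) ℂ) -
              Matrix.kroneckerMap (· * ·) B (applyFun Φ M * A))).re)⁻¹) vol := by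
    refine hg.mul_bdd (c := ∏ _i : Fin N, ∏ _j : Fin N, (1 - r)⁻¹) ?_ ?_
    · apply Measurable.aestronglyMeasurable
      apply Measurable.inv
      apply Continuous.measurable
      apply Complex.continuous_re.comp
      apply Continuous.matrix_det
      apply continuous_const.sub
      refine continuous_matrix fun a b => ?_
      simp only [Matrix.kroneckerMap_apply]
      exact continuous_const.mul (hC.matrix_elem _ _)
    · refine Filter.Eventually.of_forall fun M => ?_
      rw [hdet]
      have hp : ∀ i j, 0 ≤ (1 - hB.1.eigenvalues i * y M j)⁻¹ := fun i j =>
        inv_nonneg.2 (by linarith [hby M i j])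
      rw [Real.norm_of_nonneg (Finset.prod_nonneg fun i _ => Finset.prod_nonneg fun j _ => hp i j)]
      refine Finset.prod_le_prod (fun i _ => Finset.prod_nonneg fun j _ => hp i j) fun i _ => ?_
      refine Finset.prod_le_prod (fun j _ => hp i j) fun j _ => ?_
      exact inv_anti₀ (by linarith) (by linarith [hby M i j])
  have I2 : ∀ lam : {l : Fin N → ℕ // Antitone l},
      Integrable (fun M : selfAdjoint (Matrix (Fin N) (Fin N) ℂ) =>
          Real.exp (-(N : ℝ) / 2 * (Matrix.trace
              ((M : Matrix (Fin N) (Fin N) ℂ) * (M : Matrix (Fin N) (Fin N) ℂ))).re) *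
            (schurMat N lam.1 (applyFun Φ M * A)).re) vol := by
    intro lam
    obtain ⟨K, hK⟩ := CE_schur_le lam
    refine hg.mul_bdd (c := K) ?_ ?_
    · exact (Complex.continuous_re.comp ((CE_schurMat_continuous hN lam).comp hC)).aestronglyMeasurable
    · refine Filter.Eventually.of_forall fun M => ?_
      rw [hschur, Real.norm_of_nonneg (CEP.schur_nonneg lam _ (hy0 M))]
      exact hK _ (hy0 M) (fun i => (hyr M i).trans hr1.le)
  have hpt : ∀ M : selfAdjoint (Matrix (Fin N) (Fin N) ℂ),
      HasSum (fun lam : {l : Fin N → ℕ // Antitone l} =>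
        schur N lam.1 (fun i => hB.1.eigenvalues i) *
          (Real.exp (-(N : ℝ) / 2 * (Matrix.trace
              ((M : Matrix (Fin N) (Fin N) ℂ) * (M : Matrix (Fin N) (Fin N) ℂ))).re) *
            (schurMat N lam.1 (applyFun Φ M * A)).re))
        (Real.exp (-(N : ℝ) / 2 * (Matrix.trace
            ((M : Matrix (Fin N) (Fin N) ℂ) * (M : Matrix (Fin N) (Fin N) ℂ))).re) *
          ((Matrix.det ((1 : Matrix (Fin N × Fin N) (Fin N × Fin N) ℂ) -
              Matrix.kroneckerMap (· * ·) B (applyFun Φ M * A))).re)⁻¹) := by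
    intro M
    rw [hdet]
    simp_rw [hschur]
    have h := (CEP.schur_cauchy hN (fun i => hB.1.eigenvalues i) (y M) hb0 (hy0 M)
      (fun i j => (hby M i j).trans_lt hr1)).mul_left (Real.exp (-(N : ℝ) / 2 * (Matrix.trace
            ((M : Matrix (Fin N) (Fin N) ℂ) * (M : Matrix (Fin N) (Fin N) ℂ))).re))
    simpa only [mul_left_comm] using h
  have main := hasSum_integral_of_dominated_convergence (μ := vol.restrict {M | specMeasure M ∈ X})
    (fun (lam : {l : Fin N → ℕ // Antitone l}) (M : selfAdjoint (Matrix (Fin N) (Fin N) ℂ)) =>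
      schur N lam.1 (fun i => hB.1.eigenvalues i) *
          (Real.exp (-(N : ℝ) / 2 * (Matrix.trace
              ((M : Matrix (Fin N) (Fin N) ℂ) * (M : Matrix (Fin N) (Fin N) ℂ))).re) *
            (schurMat N lam.1 (applyFun Φ M * A)).re))
    (fun lam => ((I2 lam).restrict.const_mul _).aestronglyMeasurable)
    (fun lam => Filter.Eventually.of_forall fun M => by
      rw [hschur, Real.norm_of_nonneg (mul_nonneg (CEP.schur_nonneg lam _ hb0)
        (mul_nonneg (Real.exp_pos _).le (CEP.schur_nonneg lam _ (hy0 M))))])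
    (Filter.Eventually.of_forall fun M => (hpt M).summable)
    (by
      simp_rw [fun M => (hpt M).tsum_eq]
      exact I1.restrict)
    (Filter.Eventually.of_forall hpt)
  simp_rw [integral_const_mul] at main
  exact ⟨I1.integrableOn, fun lam => (I2 lam).integrableOn, main.summable, main.tsum_eq.symm⟩
end
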